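/- arXiv:math/0503246 — 2 statements merged into one kernel-verified Lean document; each statement's English description precedes it below -/
import Mathlib

section
/- Define σ_0 = ρ (the Dickman function) and, for j ≥ 0, let σ_{j+1} be the unique solution of u·σ_{j+1}(u) = ∫₀^u σ_{j+1}(u−t)·σ_j(t) dt for u > 1 with σ_{j+1}(u) = 1 for 0 ≤ u ≤ 1. Then for every fixed integer k ≥ 1, σ_k(u)^{1/u} · log_k(u) · log_{k+1}(u) → 1 as u → ∞, where log_j denotes the j-fold iterated natural logarithm. -/
/-!
Write a solution of `u f(u) = ∫₀ᵘ f (u - t) κ(t) dt` as `exp (-u (H(u) - a + o(1)))`, where `H` has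
logarithmic slope `u H'(u) → a`. Since `(u - t) H(u - t) ≈ u H(u) - t (H(u) + a)` for `t` small
against `u`, the convolution at `u` is about `f(u) ∫₀ᵘ exp (t H(u)) κ(t) dt`, so `H(u)` must be the
exponent at which the moment integral of `κ` equals `u`. This heuristic becomes a proof by
comparison: `exp (-u (H(u) - a - ε))` is a supersolution and `exp (-u (H(u) - a + ε))` a
subsolution for large `u`, and convolution with `κ ≥ 0` is monotone.

The Dickman function solves the equation for the indicator kernel of `[0, 1]`, whose moment integral
`(exp y - 1) / y` equals `u` at `y = log u + log log u + o(1)`. If instead `κ(t) = exp (-t G(t) +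
o(t))` with `G` of slope `b`, then the logarithm of `∫ exp (t y) κ(t) dt` is the Legendre transform
`sup_t t (y - G(t))` up to lower order, and it equals `log u` at `y = G(log u) + b - b log b +
o(1)`. Each convolution step thus composes the rate with `log`; the correction `b - b log b` is `1`
in the first step, where it cancels the `-1` in the rate of the Dickman function, and `0` in all
later ones.
-/

open Real Filter Topology MeasureTheory Set

/-! ### Comparison principle -/

/-- A kernel for which the convolution operator `g ↦ ∫₀ᵘ g (u - t) κ(t) dt` is monotone and maps
positive functions to positive functions. -/
structure IsConvolutionKernel (κ : ℝ → ℝ) : Prop where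
  nonneg : ∀ t, 0 ≤ κ t
  pos : ∀ t ∈ Ioo (0 : ℝ) 1, 0 < κ t
  locallyIntegrable : LocallyIntegrable κ volume

/-- `f` satisfies `u f(u) = ∫₀ᵘ f (u - t) κ(t) dt` for `u > 1`, with initial value `1`. The initial
value is prescribed on all of `(-∞, 1]`, so that continuity of `f` is a global statement. -/
structure IsConvolutionSolution (κ f : ℝ → ℝ) : Prop where
  eq_one : ∀ u ≤ 1, f u = 1
  mul_eq_integral : ∀ u, 1 < u → u * f u = ∫ t in (0 : ℝ)..u, f (u - t) * κ t

section Comparison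

variable {κ f g w : ℝ → ℝ} {u U : ℝ}

theorem IsConvolutionKernel.intervalIntegrable (hκ : IsConvolutionKernel κ) (a b : ℝ) :
    IntervalIntegrable κ volume a b :=
  (hκ.locallyIntegrable.integrableOn_isCompact isCompact_uIcc).intervalIntegrable

theorem IsConvolutionKernel.intervalIntegrable_mul (hκ : IsConvolutionKernel κ)
    (hg : Continuous g) (a b : ℝ) : IntervalIntegrable (fun t => g t * κ t) volume a b :=
  (hκ.intervalIntegrable a b).continuousOn_mul hg.continuousOn

theorem IsConvolutionKernel.integral_pos (hκ : IsConvolutionKernel κ) (hg : Continuous g)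
    (hu : 0 < u) (hpos : ∀ t ∈ Ioc 0 u, 0 < g t) : 0 < ∫ t in (0 : ℝ)..u, g t * κ t := by
  have hm : 0 < min 1 u := lt_min one_pos hu
  calc 0 < ∫ t in (0 : ℝ)..(min 1 u), g t * κ t :=
        intervalIntegral.intervalIntegral_pos_of_pos_on (hκ.intervalIntegrable_mul hg _ _)
          (fun t ht => mul_pos (hpos t ⟨ht.1, ht.2.le.trans (min_le_right _ _)⟩)
            (hκ.pos t ⟨ht.1, ht.2.trans_le (min_le_left _ _)⟩)) hm
    _ ≤ ∫ t in (0 : ℝ)..u, g t * κ t := by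
        refine intervalIntegral.integral_mono_interval le_rfl hm.le (min_le_right _ _) ?_
          (hκ.intervalIntegrable_mul hg _ _)
        exact (ae_restrict_iff' measurableSet_Ioc).2
          (ae_of_all _ fun t ht => mul_nonneg (hpos t ht).le (hκ.nonneg t))

theorem forall_pos_of_forall_lt_pos (hw : Continuous w) (h0 : ∀ u ∈ Icc 0 U, 0 < w u)
    (hstep : ∀ u, 0 ≤ u → U < u → (∀ v ∈ Ico 0 u, 0 < w v) → 0 < w u) (hu : 0 ≤ u) :
    0 < w u := by
  by_contra! hwu
  set S : Set ℝ := {x | 0 ≤ x ∧ w x ≤ 0}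
  have hS : IsClosed S :=
    (isClosed_le continuous_const continuous_id).inter (isClosed_le hw continuous_const)
  have hbdd : BddBelow S := ⟨0, fun x hx => hx.1⟩
  obtain ⟨hs0, hws⟩ := hS.csInf_mem ⟨u, hu, hwu⟩ hbdd
  refine hws.not_gt (hstep _ hs0 ?_ fun v hv => ?_)
  · by_contra! hsU
    exact hws.not_gt (h0 _ ⟨hs0, hsU⟩)
  · by_contra! hwv
    exact hv.2.not_ge (csInf_le hbdd ⟨hv.1, hwv⟩)

theorem IsConvolutionKernel.forall_pos_of_integral_le (hκ : IsConvolutionKernel κ)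
    (hw : Continuous w) (hU : 0 ≤ U) (h0 : ∀ u ∈ Icc 0 U, 0 < w u)
    (hle : ∀ u, U < u → ∫ t in (0 : ℝ)..u, w (u - t) * κ t ≤ u * w u) (hu : 0 ≤ u) : 0 < w u := by
  refine forall_pos_of_forall_lt_pos hw h0 (fun v hv hUv hpos => ?_) hu
  have hint : 0 < ∫ t in (0 : ℝ)..v, w (v - t) * κ t :=
    hκ.integral_pos (hw.comp (continuous_const.sub continuous_id)) (hU.trans_lt hUv)
      fun t ht => hpos (v - t) ⟨sub_nonneg.2 ht.2, sub_lt_self v ht.1⟩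
  exact pos_of_mul_pos_right (hint.trans_le (hle v hUv)) hv

theorem IsConvolutionSolution.pos (h : IsConvolutionSolution κ f) (hκ : IsConvolutionKernel κ)
    (hf : Continuous f) (u : ℝ) : 0 < f u := by
  have hone : ∀ v ≤ 1, 0 < f v := fun v hv => by rw [h.eq_one v hv]; exact one_pos
  rcases le_total u 0 with hu | hu
  · exact hone u (hu.trans zero_le_one)
  · exact hκ.forall_pos_of_integral_le hf zero_le_one (fun v hv => hone v hv.2)
      (fun v hv => (h.mul_eq_integral v hv).ge) hu

theorem exists_lt_const_mul_on_Icc (hf : Continuous f) (hg : Continuous g)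
    (hgpos : ∀ u, 0 < g u) (a b : ℝ) : ∃ C > 0, ∀ u ∈ Icc a b, f u < C * g u := by
  obtain ⟨C, hC⟩ := isCompact_Icc.exists_bound_of_continuousOn (s := Icc a b)
    (hf.div hg fun u => (hgpos u).ne').continuousOn
  refine ⟨|C| + 1, by positivity, fun u hu => ?_⟩
  rw [← div_lt_iff₀ (hgpos u)]
  calc f u / g u ≤ C := (le_abs_self _).trans (hC u hu)
    _ < |C| + 1 := (le_abs_self C).trans_lt (lt_add_one _)

theorem IsConvolutionKernel.exists_lt_const_mul (hκ : IsConvolutionKernel κ) (hf : Continuous f)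
    (hg : Continuous g) (hgpos : ∀ u, 0 < g u)
    (hsub : ∀ᶠ u in atTop, u * f u ≤ ∫ t in (0 : ℝ)..u, f (u - t) * κ t)
    (hsuper : ∀ᶠ u in atTop, ∫ t in (0 : ℝ)..u, g (u - t) * κ t ≤ u * g u) :
    ∃ C > 0, ∀ u ≥ 0, f u < C * g u := by
  obtain ⟨U, hU, hU0⟩ := ((eventually_forall_ge_atTop.2 (hsub.and hsuper)).and
    (eventually_ge_atTop 0)).exists
  obtain ⟨C, hC0, hC⟩ := exists_lt_const_mul_on_Icc hf hg hgpos 0 U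
  refine ⟨C, hC0, fun u hu => sub_pos.1 ?_⟩
  refine hκ.forall_pos_of_integral_le (w := fun u => C * g u - f u)
    ((continuous_const.mul hg).sub hf) hU0 (fun v hv => sub_pos.2 (hC v hv)) (fun v hv => ?_) hu
  obtain ⟨hfv, hgv⟩ := hU v hv.le
  have hsplit : ∫ t in (0 : ℝ)..v, (C * g (v - t) - f (v - t)) * κ t =
      C * (∫ t in (0 : ℝ)..v, g (v - t) * κ t) - ∫ t in (0 : ℝ)..v, f (v - t) * κ t := by
    have hint {φ : ℝ → ℝ} (hφ : Continuous φ) :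
        IntervalIntegrable (fun t => φ (v - t) * κ t) volume 0 v :=
      hκ.intervalIntegrable_mul (hφ.comp (continuous_const.sub continuous_id)) 0 v
    rw [← intervalIntegral.integral_const_mul,
      ← intervalIntegral.integral_sub ((hint hg).const_mul C) (hint hf)]
    simp only [sub_mul, mul_assoc]
  rw [hsplit]
  linarith [mul_le_mul_of_nonneg_left hgv hC0.le]

end Comparison

/-! ### Continuity of solutions -/

section Continuity

variable {κ f : ℝ → ℝ} {A M p s u : ℝ}

theorem integral_abs_le_of_abs_le_integral (hM : 0 ≤ M) (hp : 0 ≤ p) (hpu : p ≤ u)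
    (hpuM : M * (u - p) ≤ 1 / 2) (hf : IntervalIntegrable f volume 0 u)
    (hbound : ∀ v ∈ Icc 0 u, |f v| ≤ A + M * ∫ t in (0 : ℝ)..v, |f t|) :
    ∫ t in (0 : ℝ)..u, |f t| ≤ 2 * ((∫ t in (0 : ℝ)..p, |f t|) + (u - p) * A) := by
  have hu : 0 ≤ u := hp.trans hpu
  have hfp : IntervalIntegrable (fun t => |f t|) volume 0 p := hf.abs.mono_set <| by
    rw [uIcc_of_le hp, uIcc_of_le hu]
    exact Icc_subset_Icc_right hpu
  have hfpu : IntervalIntegrable (fun t => |f t|) volume p u := hfp.symm.trans hf.abs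
  have htail : ∫ t in p..u, |f t| ≤ (u - p) * (A + M * ∫ t in (0 : ℝ)..u, |f t|) := by
    rw [← smul_eq_mul, ← intervalIntegral.integral_const]
    refine intervalIntegral.integral_mono_on hpu hfpu intervalIntegrable_const fun v hv => ?_
    have hmono : ∫ t in (0 : ℝ)..v, |f t| ≤ ∫ t in (0 : ℝ)..u, |f t| :=
      intervalIntegral.integral_mono_interval le_rfl (hp.trans hv.1) hv.2
        (ae_of_all _ fun _ => abs_nonneg _) hf.abs
    exact (hbound v ⟨hp.trans hv.1, hv.2⟩).trans (by gcongr)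
  have hint : 0 ≤ ∫ t in (0 : ℝ)..u, |f t| :=
    intervalIntegral.integral_nonneg hu fun _ _ => abs_nonneg _
  have habsorb := mul_le_mul_of_nonneg_right hpuM hint
  linarith [intervalIntegral.integral_add_adjacent_intervals hfp hfpu]

theorem intervalIntegrable_of_abs_le_integral (hM : 0 < M) (hs : 0 < s) (hA : 0 ≤ A)
    (hf : ∀ u ∈ Ico 0 s, IntervalIntegrable f volume 0 u)
    (hbound : ∀ u ∈ Ico 0 s, |f u| ≤ A + M * ∫ t in (0 : ℝ)..u, |f t|) :
    IntervalIntegrable f volume 0 s := by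
  set p := max (s - 1 / (2 * M)) 0
  have hps : p < s := max_lt (sub_lt_self s (by positivity)) hs
  have hsp : M * (s - p) ≤ 1 / 2 := by
    calc M * (s - p) ≤ M * (1 / (2 * M)) := by
          gcongr
          linarith [le_max_left (s - 1 / (2 * M)) 0]
      _ = 1 / 2 := by field_simp
  obtain ⟨x, -, hxmem, hx⟩ := exists_seq_strictMono_tendsto' hs
  rw [intervalIntegrable_iff_integrableOn_Ioc_of_le hs.le]
  refine integrableOn_Ioc_of_intervalIntegral_norm_bounded_right
    (I := 2 * ((∫ t in (0 : ℝ)..p, |f t|) + (s - p) * A)) (fun n => ?_) hx ?_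
  · exact (intervalIntegrable_iff_integrableOn_Ioc_of_le (hxmem n).1.le).1
      (hf _ ⟨(hxmem n).1.le, (hxmem n).2⟩)
  · filter_upwards [hx.eventually_const_lt hps] with n hpn
    obtain ⟨hn0, hns⟩ := hxmem n
    calc ∫ t in Ioc 0 (x n), ‖f t‖ = ∫ t in (0 : ℝ)..x n, |f t| :=
          (intervalIntegral.integral_of_le hn0.le).symm
      _ ≤ 2 * ((∫ t in (0 : ℝ)..p, |f t|) + (x n - p) * A) := by
          refine integral_abs_le_of_abs_le_integral hM.le (le_max_right _ _) hpn.le ?_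
            (hf _ ⟨hn0.le, hns⟩) fun v hv => hbound v ⟨hv.1, hv.2.trans_lt hns⟩
          exact le_trans (by gcongr) hsp
      _ ≤ _ := by gcongr

theorem intervalIntegrable_comp_sub_left_mul_iff (hκ : Continuous κ) (hκ0 : ∀ t, κ t ≠ 0) :
    IntervalIntegrable (fun t => f (u - t) * κ t) volume 0 u ↔
      IntervalIntegrable f volume 0 u := by
  have hrefl : IntervalIntegrable (fun t => f (u - t)) volume 0 u ↔
      IntervalIntegrable f volume 0 u := by
    have h := IntervalIntegrable.comp_sub_left_iff (f := f) (a := 0) (b := u) u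
    rw [← h, sub_zero, sub_self, IntervalIntegrable.symm_iff]
  rw [← hrefl]
  refine ⟨fun h => ?_, fun h => h.mul_continuousOn hκ.continuousOn⟩
  simpa only [mul_assoc, Pi.inv_apply, mul_inv_cancel₀ (hκ0 _), mul_one] using
    h.mul_continuousOn (hκ.inv₀ hκ0).continuousOn

namespace IsConvolutionSolution

theorem abs_le_integral (h : IsConvolutionSolution κ f) (hu : 0 ≤ u) (hM0 : 0 ≤ M)
    (hM : ∀ t ∈ Icc 0 u, |κ t| ≤ M) (hf : IntervalIntegrable f volume 0 u) :
    |f u| ≤ 1 + M * ∫ t in (0 : ℝ)..u, |f t| := by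
  have hint : 0 ≤ M * ∫ t in (0 : ℝ)..u, |f t| :=
    mul_nonneg hM0 (intervalIntegral.integral_nonneg hu fun t _ => abs_nonneg _)
  rcases le_or_gt u 1 with h1 | h1
  · rw [h.eq_one u h1, abs_one]
    linarith
  have hrefl : IntervalIntegrable (fun t => M * |f (u - t)|) volume 0 u := by
    simpa only [sub_zero, sub_self] using ((hf.abs.const_mul M).comp_sub_left u).symm
  have hu_mul : u * |f u| ≤ M * ∫ t in (0 : ℝ)..u, |f t| := by
    calc u * |f u| = |∫ t in (0 : ℝ)..u, f (u - t) * κ t| := by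
          rw [← h.mul_eq_integral u h1, abs_mul, abs_of_nonneg hu]
      _ ≤ ∫ t in (0 : ℝ)..u, M * |f (u - t)| := by
          rw [← norm_eq_abs]
          refine intervalIntegral.norm_integral_le_of_norm_le hu (ae_of_all _ fun t ht => ?_) hrefl
          rw [norm_mul, mul_comm]
          exact mul_le_mul_of_nonneg_right (hM t (Ioc_subset_Icc_self ht)) (abs_nonneg _)
      _ = M * ∫ t in (0 : ℝ)..u, |f t| := by
          rw [intervalIntegral.integral_comp_sub_left (fun t => M * |f t|) u, sub_self, sub_zero,
            intervalIntegral.integral_const_mul]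
  nlinarith [abs_nonneg (f u)]

/-- Past the first point where integrability fails, the convolution integral takes the junk value
`0`, so `f` vanishes there and is integrable after all. -/
theorem intervalIntegrable_zero_left (h : IsConvolutionSolution κ f) (hκ : Continuous κ)
    (hκ0 : ∀ t, κ t ≠ 0) (hu : 0 ≤ u) : IntervalIntegrable f volume 0 u := by
  by_contra hnot
  set B : Set ℝ := {v | 0 ≤ v ∧ ¬ IntervalIntegrable f volume 0 v}
  have hB : B.Nonempty := ⟨u, hu, hnot⟩
  have hone : ∀ v ∈ B, 1 ≤ v := by
    rintro v ⟨hv0, hv⟩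
    by_contra! hv1
    refine hv ((intervalIntegrable_const (c := (1 : ℝ))).congr fun t ht => ?_)
    rw [uIoc_of_le hv0] at ht
    exact (h.eq_one t (ht.2.trans hv1.le)).symm
  have hbdd : BddBelow B := ⟨1, hone⟩
  set s := sInf B
  have hs1 : 1 ≤ s := le_csInf hB hone
  have hbelow : ∀ v ∈ Ico 0 s, IntervalIntegrable f volume 0 v := fun v hv => by
    by_contra hv'
    exact hv.2.not_ge (csInf_le hbdd ⟨hv.1, hv'⟩)
  have hs : IntervalIntegrable f volume 0 s := by
    obtain ⟨M, hM⟩ := isCompact_Icc.exists_bound_of_continuousOn (s := Icc 0 s) hκ.continuousOn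
    refine intervalIntegrable_of_abs_le_integral (M := max M 1) (lt_max_of_lt_right one_pos)
      (one_pos.trans_le hs1) zero_le_one hbelow fun v hv => h.abs_le_integral hv.1 (by positivity)
        (fun t ht => ?_) (hbelow v hv)
    exact (hM t ⟨ht.1, ht.2.trans hv.2.le⟩).trans (le_max_left _ _)
  have hzero : ∀ v, s < v → f v = 0 := fun v hsv => by
    obtain ⟨b, ⟨hb0, hb⟩, hbv⟩ := exists_lt_of_csInf_lt hB hsv
    have hv : ¬ IntervalIntegrable f volume 0 v := fun hv => hb <| hv.mono_set <| by
      rw [uIcc_of_le hb0, uIcc_of_le (hb0.trans hbv.le)]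
      exact Icc_subset_Icc_right hbv.le
    have hmul := h.mul_eq_integral v (hs1.trans_lt hsv)
    rw [intervalIntegral.integral_undef
      (mt (intervalIntegrable_comp_sub_left_mul_iff hκ hκ0).1 hv)] at hmul
    exact (mul_eq_zero.1 hmul).resolve_left (by linarith)
  refine hnot (hs.trans ((intervalIntegrable_const (c := (0 : ℝ))).congr fun t ht => ?_))
  rw [uIoc_of_le (csInf_le hbdd ⟨hu, hnot⟩)] at ht
  exact (hzero t ht.1).symm

theorem intervalIntegrable (h : IsConvolutionSolution κ f) (hκ : Continuous κ)
    (hκ0 : ∀ t, κ t ≠ 0) (a b : ℝ) : IntervalIntegrable f volume a b := by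
  have hzero : ∀ c, IntervalIntegrable f volume 0 c := fun c => by
    rcases le_total 0 c with hc | hc
    · exact h.intervalIntegrable_zero_left hκ hκ0 hc
    · refine (intervalIntegrable_const (c := (1 : ℝ))).congr fun t ht => ?_
      rw [uIoc_of_ge hc] at ht
      exact (h.eq_one t (ht.2.trans zero_le_one)).symm
  exact (hzero a).symm.trans (hzero b)

end IsConvolutionSolution

theorem continuous_integral_mul_comp_sub (hf : ∀ a b, IntervalIntegrable f volume a b)
    (hκ : Continuous κ) : Continuous fun u => ∫ t in (0 : ℝ)..u, f t * κ (u - t) := by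
  refine continuous_iff_continuousAt.2 fun x => ?_
  set R := |x| + 1
  have hxR : |x| < R := lt_add_one _
  have hR : 0 < R := (abs_nonneg x).trans_lt hxR
  obtain ⟨M, hM⟩ := isCompact_Icc.exists_bound_of_continuousOn (s := Icc (-(2 * R)) (2 * R))
    hκ.continuousOn
  have hprim : ContinuousAt (fun p : ℝ × ℝ => ∫ t in (0 : ℝ)..p.2, f t * κ (p.1 - t)) (x, x) := by
    refine intervalIntegral.continuousAt_parametric_primitive_of_dominated
      (F := fun y t => f t * κ (y - t)) (fun t => |f t| * M) (-R) R (fun y => ?_) ?_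
      ((hf _ _).abs.mul_const M) (ae_of_all _ fun t => ?_) ⟨neg_lt_zero.2 hR, hR⟩
      (abs_lt.1 hxR) (by simp)
    · exact (intervalIntegrable_iff.1 ((hf _ _).mul_continuousOn
        (hκ.comp (continuous_const.sub continuous_id)).continuousOn)).aestronglyMeasurable
    · filter_upwards [continuous_abs.continuousAt.eventually_lt continuousAt_const hxR] with y hy
      refine (ae_restrict_iff' measurableSet_uIoc).2 (ae_of_all _ fun t ht => ?_)
      rw [uIoc_of_le (by linarith)] at ht
      rw [norm_mul]
      obtain ⟨hy1, hy2⟩ := abs_lt.1 hy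
      exact mul_le_mul_of_nonneg_left (hM _ ⟨by linarith [ht.2], by linarith [ht.1]⟩)
        (abs_nonneg _)
    · exact (continuous_const.mul (hκ.comp (continuous_id.sub continuous_const))).continuousAt
  exact ContinuousAt.comp (f := fun u : ℝ => (u, u)) hprim
    (continuous_id.prodMk continuous_id).continuousAt

theorem IsConvolutionSolution.continuous (h : IsConvolutionSolution κ f) (hκ : Continuous κ)
    (hκ0 : ∀ t, κ t ≠ 0) (hκ1 : ∀ t ≤ 1, κ t = 1) : Continuous f := by
  have hconv : ∀ u, 1 / 2 < u → (∫ t in (0 : ℝ)..u, f t * κ (u - t)) / u = f u := by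
    intro u hu
    have hu0 : u ≠ 0 := by linarith
    rw [div_eq_iff hu0, mul_comm]
    rcases le_or_gt u 1 with h1 | h1
    · rw [h.eq_one u h1, intervalIntegral.integral_congr (g := fun _ => (1 : ℝ)), integral_one,
        sub_zero, mul_one]
      intro t ht
      rw [uIcc_of_le (by linarith)] at ht
      simp only [h.eq_one t (ht.2.trans h1), hκ1 (u - t) (by linarith [ht.1]), mul_one]
    · simpa [h.mul_eq_integral u h1] using (intervalIntegral.integral_comp_sub_left
        (a := 0) (b := u) (fun t => f t * κ (u - t)) u).symm
  refine continuous_iff_continuousAt.2 fun x => ?_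
  rcases lt_or_ge x 1 with hx | hx
  · refine (continuousAt_const (y := (1 : ℝ))).congr ?_
    filter_upwards [Iio_mem_nhds hx] with y hy using (h.eq_one y (le_of_lt hy)).symm
  · have hint := continuous_integral_mul_comp_sub (h.intervalIntegrable hκ hκ0) hκ
    refine (hint.continuousAt.div continuousAt_id (by simp only [id]; linarith)).congr ?_
    filter_upwards [Ioi_mem_nhds (show 1 / 2 < x by linarith)] with y hy using hconv y hy

end Continuity

/-! ### Slowly growing rates -/

/-- `H` is eventually differentiable and increasing, with `u H'(u) → a`: locally, `H` varies like
`a log u`. -/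
structure HasLogSlope (a : ℝ) (H : ℝ → ℝ) : Prop where
  differentiableAt : ∀ᶠ u in atTop, DifferentiableAt ℝ H u
  deriv_nonneg : ∀ᶠ u in atTop, 0 ≤ deriv H u
  tendsto_mul_deriv : Tendsto (fun u => u * deriv H u) atTop (𝓝 a)

theorem hasLogSlope_log : HasLogSlope 1 log where
  differentiableAt := (eventually_ne_atTop 0).mono fun _ => differentiableAt_log
  deriv_nonneg := (eventually_ge_atTop 0).mono fun u hu => by simpa using hu
  tendsto_mul_deriv := tendsto_const_nhds.congr' <| (eventually_ne_atTop 0).mono fun u hu => by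
    simp only [deriv_log, mul_inv_cancel₀ hu]

namespace HasLogSlope

variable {a b ε η : ℝ} {H K : ℝ → ℝ}

theorem add (hH : HasLogSlope a H) (hK : HasLogSlope b K) :
    HasLogSlope (a + b) fun u => H u + K u := by
  have hderiv : ∀ᶠ u in atTop, deriv (fun u => H u + K u) u = deriv H u + deriv K u := by
    filter_upwards [hH.differentiableAt, hK.differentiableAt] with u hHu hKu
      using deriv_fun_add hHu hKu
  refine ⟨?_, ?_, (hH.tendsto_mul_deriv.add hK.tendsto_mul_deriv).congr' ?_⟩
  · filter_upwards [hH.differentiableAt, hK.differentiableAt] with u hHu hKu using hHu.fun_add hKu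
  · filter_upwards [hH.deriv_nonneg, hK.deriv_nonneg, hderiv] with u hHu hKu hu
    exact hu ▸ add_nonneg hHu hKu
  · filter_upwards [hderiv] with u hu
    rw [hu, mul_add]

theorem add_const (hH : HasLogSlope a H) (c : ℝ) : HasLogSlope a fun u => H u + c where
  differentiableAt := hH.differentiableAt.mono fun _ hu => hu.add_const c
  deriv_nonneg := by simpa only [deriv_add_const] using hH.deriv_nonneg
  tendsto_mul_deriv := by simpa only [deriv_add_const] using hH.tendsto_mul_deriv

theorem comp_log (hH : HasLogSlope a H) : HasLogSlope 0 fun u => H (log u) := by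
  have hderiv : ∀ᶠ u in atTop, deriv (fun u => H (log u)) u = deriv H (log u) * u⁻¹ := by
    filter_upwards [tendsto_log_atTop.eventually hH.differentiableAt, eventually_ne_atTop 0]
      with u hHu hu using (hHu.hasDerivAt.comp u (hasDerivAt_log hu)).deriv
  have hzero : Tendsto (deriv H) atTop (𝓝 0) :=
    (hH.tendsto_mul_deriv.div_atTop tendsto_id).congr' <| (eventually_ne_atTop 0).mono
      fun u hu => mul_div_cancel_left₀ _ hu
  refine ⟨?_, ?_, (hzero.comp tendsto_log_atTop).congr' ?_⟩
  · filter_upwards [tendsto_log_atTop.eventually hH.differentiableAt, eventually_ne_atTop 0]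
      with u hHu hu using hHu.fun_comp' u (differentiableAt_log hu)
  · filter_upwards [tendsto_log_atTop.eventually hH.deriv_nonneg, eventually_ge_atTop 0, hderiv]
      with u hHu hu0 hu
    exact hu ▸ mul_nonneg hHu (inv_nonneg.2 hu0)
  · filter_upwards [hderiv, eventually_ne_atTop 0] with u hu hu0
    rw [hu, mul_left_comm, mul_inv_cancel₀ hu0, mul_one, Function.comp_apply]

theorem nonneg (hH : HasLogSlope a H) : 0 ≤ a := by
  refine ge_of_tendsto hH.tendsto_mul_deriv ?_
  filter_upwards [hH.deriv_nonneg, eventually_ge_atTop 0] with u hHu hu using mul_nonneg hu hHu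

theorem exists_sub_eq_mul_log_div (hH : HasLogSlope a H) (hη : 0 < η) : ∀ᶠ u₀ in atTop,
    ∀ u ≥ u₀, ∀ v ≥ u₀, ∃ b, 0 ≤ b ∧ |b - a| < η ∧ H u - H v = b * log (u / v) := by
  filter_upwards [eventually_forall_ge_atTop.2 hH.differentiableAt,
    eventually_forall_ge_atTop.2 hH.deriv_nonneg, eventually_forall_ge_atTop.2
      (hH.tendsto_mul_deriv.eventually (Metric.ball_mem_nhds a hη)), eventually_gt_atTop 0]
    with u₀ hdiff hnonneg hslope hu₀
  have hlt : ∀ u v, u₀ ≤ v → v < u →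
      ∃ b, 0 ≤ b ∧ |b - a| < η ∧ H u - H v = b * log (u / v) := fun u v hv hvu => by
    have hv0 : 0 < v := hu₀.trans_le hv
    obtain ⟨c, ⟨hvc, -⟩, hc⟩ := exists_ratio_hasDerivAt_eq_ratio_slope H (deriv H) hvu
      (fun x hx => (hdiff x (hv.trans hx.1)).continuousAt.continuousWithinAt)
      (fun x hx => (hdiff x (hv.trans hx.1.le)).hasDerivAt) log (·⁻¹)
      (fun x hx => (continuousAt_log (hv0.trans_le hx.1).ne').continuousWithinAt)
      (fun x hx => hasDerivAt_log (hv0.trans hx.1).ne')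
    have hc0 : 0 < c := hv0.trans hvc
    have huc : u₀ ≤ c := hv.trans hvc.le
    refine ⟨c * deriv H c, mul_nonneg hc0.le (hnonneg c huc), hslope c huc, ?_⟩
    rw [log_div (hv0.trans hvu).ne' hv0.ne']
    field_simp at hc
    linarith
  intro u hu v hv
  rcases lt_trichotomy v u with hvu | rfl | huv
  · exact hlt u v hv hvu
  · exact ⟨a, hH.nonneg, by simpa using hη, by simp [div_self (hu₀.trans_le hv).ne']⟩
  · obtain ⟨b, hb0, hb, hslope⟩ := hlt v u hu huv
    refine ⟨b, hb0, hb, ?_⟩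
    rw [← inv_div, log_inv, mul_neg, ← hslope, neg_sub]

theorem isLittleO_id (hH : HasLogSlope a H) : H =o[atTop] (id : ℝ → ℝ) := by
  obtain ⟨u₀, hu₀, hu₀pos⟩ :=
    ((hH.exists_sub_eq_mul_log_div one_pos).and (eventually_gt_atTop 0)).exists
  have hconst (c : ℝ) : (fun _ : ℝ => c) =o[atTop] (id : ℝ → ℝ) :=
    Asymptotics.isLittleO_const_id_atTop c
  have hbigO : (fun u => H u - H u₀) =O[atTop] fun u => log u - log u₀ := by
    refine Asymptotics.IsBigO.of_bound (|a| + 1) ?_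
    filter_upwards [eventually_ge_atTop u₀] with u hu
    obtain ⟨b, -, hb, hslope⟩ := hu₀ u hu u₀ le_rfl
    rw [hslope, log_div (hu₀pos.trans_le hu).ne' hu₀pos.ne', norm_mul]
    gcongr
    linarith [abs_sub_abs_le_abs_sub b a, norm_eq_abs b]
  simpa using (hbigO.trans_isLittleO (isLittleO_log_id_atTop.sub (hconst (log u₀)))).add
    (hconst (H u₀))

theorem eventually_le_mul (hH : HasLogSlope a H) (hε : 0 < ε) : ∀ᶠ u in atTop, H u ≤ ε * u := by
  filter_upwards [hH.isLittleO_id.bound hε, eventually_ge_atTop 0] with u hu hu0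
  rw [id, norm_of_nonneg hu0] at hu
  exact (le_norm_self _).trans hu

theorem eventually_mul_sub_le (hH : HasLogSlope a H) (hε : 0 < ε) : ∀ᶠ u₀ in atTop,
    ∀ u ≥ u₀, ∀ v ≤ u, v * (H u - H (max v u₀)) ≤ (a + ε) * (u - v) := by
  filter_upwards [hH.exists_sub_eq_mul_log_div hε, eventually_gt_atTop 0]
    with u₀ hslope hu₀ u hu v hvu
  set m := max v u₀
  have hm : 0 < m := lt_max_of_lt_right hu₀
  have hmu : m ≤ u := max_le hvu hu
  obtain ⟨b, hb0, hb, hb_eq⟩ := hslope u hu m (le_max_right _ _)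
  calc v * (H u - H m) = v * (b * log (u / m)) := by rw [hb_eq]
    _ ≤ m * (b * (u / m - 1)) := by
        have hlog : 0 ≤ log (u / m) := log_nonneg ((one_le_div hm).2 hmu)
        gcongr
        · exact le_max_left _ _
        · exact log_le_sub_one_of_pos (div_pos (hm.trans_le hmu) hm)
    _ = b * (u - m) := by field_simp
    _ ≤ (a + ε) * (u - v) := by
        gcongr
        · exact add_nonneg hH.nonneg hε.le
        · linarith [(abs_lt.1 hb).2]
        · exact le_max_left _ _

theorem exists_eventually_le_mul_sub (hH : HasLogSlope a H) (hε : 0 < ε) :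
    ∃ δ ∈ Ioo (0 : ℝ) 1, ∀ᶠ u₀ in atTop, ∀ u v, u₀ ≤ v → v ≤ u → (1 - δ) * u ≤ v →
      (a - ε) * (u - v) ≤ v * (H u - H v) := by
  have ha := hH.nonneg
  set δ := ε / 2 / (a + ε)
  have hδ : δ * (a + ε) = ε / 2 := div_mul_cancel₀ _ (by positivity)
  have hδ1 : δ < 1 := (div_lt_one (by positivity)).2 (by linarith)
  refine ⟨δ, ⟨by positivity, hδ1⟩, ?_⟩
  filter_upwards [hH.exists_sub_eq_mul_log_div (half_pos hε), eventually_gt_atTop 0]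
    with u₀ hslope hu₀ u v hv hvu hδv
  have hv0 : 0 < v := hu₀.trans_le hv
  have hu0 : 0 < u := hv0.trans_le hvu
  obtain ⟨b, hb0, hb, hb_eq⟩ := hslope u (hv.trans hvu) v hv
  have hcoeff : a - ε ≤ b * (1 - δ) := by
    nlinarith [(abs_lt.1 hb).1, show 0 < δ by positivity]
  calc (a - ε) * (u - v) ≤ b * (1 - δ) * (u - v) := by
        gcongr
    _ ≤ b * (v / u) * (u - v) := by
        gcongr
        rwa [le_div_iff₀ hu0]
    _ = v * (b * (1 - (u / v)⁻¹)) := by field_simp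
    _ ≤ v * (b * log (u / v)) := by
        gcongr
        exact one_sub_inv_le_log_of_pos (by positivity)
    _ = v * (H u - H v) := by rw [hb_eq]

theorem eventually_continuousAt (hH : HasLogSlope a H) :
    ∀ᶠ u₀ in atTop, ∀ u ≥ u₀, ContinuousAt H u :=
  eventually_forall_ge_atTop.2 (hH.differentiableAt.mono fun _ => DifferentiableAt.continuousAt)

end HasLogSlope

/-! ### Legendre duality -/

/-- For `a > 0`, the constant `c` for which `sup_{x > 0} x (c - a log x) = 1`; extended continuously
by the value `0` at `a = 0`. -/
noncomputable def legendreConst (a : ℝ) : ℝ := a + negMulLog a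

theorem legendreConst_zero : legendreConst 0 = 0 := by simp [legendreConst]

theorem legendreConst_one : legendreConst 1 = 1 := by simp [legendreConst]

theorem continuous_legendreConst : Continuous legendreConst :=
  continuous_id.add continuous_negMulLog

theorem mul_legendreConst_sub_le_one {b x : ℝ} (hb : 0 ≤ b) (hx : 0 ≤ x) :
    x * (legendreConst b - b * log x) ≤ 1 := by
  calc x * (legendreConst b - b * log x) = b * x + negMulLog (b * x) := by
        rw [negMulLog_mul, legendreConst, negMulLog, negMulLog]
        ring
    _ ≤ 1 := by linarith [negMulLog_le_one_sub_self (mul_nonneg hb hx)]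

theorem exists_one_lt_mul_legendreConst_sub {a ε : ℝ} (ha : 0 ≤ a) (hε : 0 < ε) :
    ∃ x > 0, 1 < x * (legendreConst a - a * log x + ε) := by
  rcases ha.eq_or_lt with rfl | ha
  · exact ⟨2 / ε, by positivity, by simp [legendreConst_zero, hε.ne']⟩
  · refine ⟨a⁻¹, by positivity, ?_⟩
    calc 1 < 1 + a⁻¹ * ε := lt_add_of_pos_right _ (by positivity)
      _ = a⁻¹ * (legendreConst a - a * log a⁻¹ + ε) := by
          rw [legendreConst, negMulLog, log_inv]
          field_simp
          ring

/-! ### Decay of solutions -/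

/-- `f` decays like `exp (-u G(u))`, in the sense that `log f(u) / u = -G(u) + o(1)`. -/
def HasDecayRate (G f : ℝ → ℝ) : Prop :=
  Tendsto (fun u => log (f u) / u + G u) atTop (𝓝 0)

theorem hasDecayRate_iff {G f : ℝ → ℝ} (hf : ∀ u, 0 < f u) :
    HasDecayRate G f ↔ ∀ ε > 0, ∀ᶠ u in atTop,
      exp (-(u * (G u + ε))) ≤ f u ∧ f u ≤ exp (-(u * (G u - ε))) := by
  rw [HasDecayRate, Metric.nhds_basis_closedBall.tendsto_right_iff]
  refine forall₂_congr fun ε _ => eventually_congr ?_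
  filter_upwards [eventually_gt_atTop 0] with u hu
  rw [← le_log_iff_exp_le (hf u), ← log_le_iff_le_exp (hf u), mem_closedBall_zero_iff,
    norm_eq_abs, abs_le, ← sub_le_iff_le_add, ← le_sub_iff_add_le, le_div_iff₀ hu, div_le_iff₀ hu]
  ring_nf

/-- `H` inverts the exponential moments of `κ`: the moment `∫₀ᵘ exp (t y) κ(t) dt` crosses the value
`u` at `y = H(u) + o(1)`, and arbitrarily short initial segments of `[0, u]` suffice for this. -/
structure IsMomentInverse (κ H : ℝ → ℝ) : Prop where
  integral_le : ∀ ε > 0, ∀ᶠ u in atTop, ∫ t in (0 : ℝ)..u, exp (t * (H u - ε)) * κ t ≤ u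
  le_integral : ∀ ε > 0, ∀ δ > 0, ∀ᶠ u in atTop,
    u ≤ ∫ t in (0 : ℝ)..(δ * u), exp (t * (H u + ε)) * κ t

/-- The comparison function `exp (-u (H(u) + d))`, with `H` frozen below `u₀` to make it
continuous. -/
noncomputable def barrier (H : ℝ → ℝ) (u₀ d u : ℝ) : ℝ := exp (-(u * (H (max u u₀) + d)))

section Barrier

variable {κ f H : ℝ → ℝ} {C a d ε t u u₀ : ℝ}

theorem barrier_pos : 0 < barrier H u₀ d u := exp_pos _

theorem continuous_barrier (hH : ∀ u ≥ u₀, ContinuousAt H u) : Continuous (barrier H u₀ d) := by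
  have hmax : Continuous fun u => H (max u u₀) := continuous_iff_continuousAt.2 fun x =>
    ContinuousAt.comp (f := fun u => max u u₀) (hH _ (le_max_right x u₀))
      (continuous_id.max continuous_const).continuousAt
  exact continuous_exp.comp (continuous_id.mul (hmax.add continuous_const)).neg

theorem barrier_of_le (hu : u₀ ≤ u) : barrier H u₀ d u = exp (-(u * (H u + d))) := by
  rw [barrier, max_eq_left hu]

theorem barrier_sub (hu : u₀ ≤ u) : barrier H u₀ d (u - t) =
    barrier H u₀ d u * exp (t * (H u + d) + (u - t) * (H u - H (max (u - t) u₀))) := by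
  rw [barrier_of_le hu, barrier, ← exp_add]
  ring_nf

theorem eventually_exp_le_mul_barrier (hC : 0 < C) (hε : 0 < ε) :
    ∀ᶠ u in atTop, exp (-(u * (H u + d + ε))) ≤ C * barrier H u₀ d u := by
  filter_upwards [eventually_ge_atTop u₀, eventually_ge_atTop (-log C / ε)] with u hu hCu
  rw [div_le_iff₀ hε] at hCu
  rw [barrier_of_le hu, ← exp_log hC, ← exp_add]
  gcongr
  linarith

theorem eventually_mul_barrier_le_exp (hC : 0 < C) (hε : 0 < ε) :
    ∀ᶠ u in atTop, C * barrier H u₀ d u ≤ exp (-(u * (H u + d - ε))) := by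
  filter_upwards [eventually_ge_atTop u₀, eventually_ge_atTop (log C / ε)] with u hu hCu
  rw [div_le_iff₀ hε] at hCu
  rw [barrier_of_le hu, ← exp_log hC, ← exp_add]
  gcongr
  linarith

theorem IsMomentInverse.eventually_integral_barrier_le (hinv : IsMomentInverse κ H)
    (hκ : IsConvolutionKernel κ) (hH : HasLogSlope a H) (hε : 0 < ε) :
    ∀ᶠ u₀ in atTop, ∀ᶠ u in atTop,
      ∫ t in (0 : ℝ)..u, barrier H u₀ (-a - ε) (u - t) * κ t ≤ u * barrier H u₀ (-a - ε) u := by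
  filter_upwards [hH.eventually_mul_sub_le (half_pos hε), hH.eventually_continuousAt]
    with u₀ hgrowth hcont
  filter_upwards [hinv.integral_le (ε / 2) (half_pos hε), eventually_ge_atTop u₀,
    eventually_ge_atTop 0] with u hmoment hu hu0
  set g := barrier H u₀ (-a - ε)
  have hg : Continuous fun t => g (u - t) :=
    (continuous_barrier hcont).comp (continuous_const.sub continuous_id)
  calc ∫ t in (0 : ℝ)..u, g (u - t) * κ t
      ≤ ∫ t in (0 : ℝ)..u, g u * (exp (t * (H u - ε / 2)) * κ t) := by
        refine intervalIntegral.integral_mono_on hu0 (hκ.intervalIntegrable_mul hg _ _)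
          ((hκ.intervalIntegrable_mul (by fun_prop) _ _).const_mul _) fun t ht => ?_
        rw [← mul_assoc]
        refine mul_le_mul_of_nonneg_right ?_ (hκ.nonneg t)
        simp only [g, barrier_sub hu]
        refine mul_le_mul_of_nonneg_left (exp_le_exp.2 ?_) barrier_pos.le
        linarith [hgrowth u hu (u - t) (sub_le_self u ht.1)]
    _ = g u * ∫ t in (0 : ℝ)..u, exp (t * (H u - ε / 2)) * κ t :=
        intervalIntegral.integral_const_mul _ _
    _ ≤ u * g u := by
        rw [mul_comm u]
        exact mul_le_mul_of_nonneg_left hmoment barrier_pos.le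

theorem IsMomentInverse.eventually_le_integral_barrier (hinv : IsMomentInverse κ H)
    (hκ : IsConvolutionKernel κ) (hH : HasLogSlope a H) (hε : 0 < ε) :
    ∀ᶠ u₀ in atTop, ∀ᶠ u in atTop,
      u * barrier H u₀ (-a + ε) u ≤ ∫ t in (0 : ℝ)..u, barrier H u₀ (-a + ε) (u - t) * κ t := by
  obtain ⟨δ, ⟨hδ0, hδ1⟩, hslope⟩ := hH.exists_eventually_le_mul_sub (half_pos hε)
  filter_upwards [hslope, hH.eventually_continuousAt] with u₀ hgrowth hcont
  have hfar : ∀ᶠ u in atTop, u₀ ≤ (1 - δ) * u :=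
    (tendsto_id.const_mul_atTop (sub_pos.2 hδ1)).eventually_ge_atTop u₀
  filter_upwards [hinv.le_integral (ε / 2) (half_pos hε) δ hδ0, hfar, eventually_ge_atTop u₀,
    eventually_ge_atTop 0] with u hmoment hfaru hu hu0
  have hδu : 0 ≤ δ * u := by positivity
  set g := barrier H u₀ (-a + ε)
  have hg : Continuous fun t => g (u - t) :=
    (continuous_barrier hcont).comp (continuous_const.sub continuous_id)
  calc u * g u ≤ g u * ∫ t in (0 : ℝ)..(δ * u), exp (t * (H u + ε / 2)) * κ t := by
        rw [mul_comm u]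
        exact mul_le_mul_of_nonneg_left hmoment barrier_pos.le
    _ = ∫ t in (0 : ℝ)..(δ * u), g u * (exp (t * (H u + ε / 2)) * κ t) :=
        (intervalIntegral.integral_const_mul _ _).symm
    _ ≤ ∫ t in (0 : ℝ)..(δ * u), g (u - t) * κ t := by
        refine intervalIntegral.integral_mono_on hδu
          ((hκ.intervalIntegrable_mul (by fun_prop) _ _).const_mul _)
          (hκ.intervalIntegrable_mul hg _ _) fun t ht => ?_
        rw [← mul_assoc]
        refine mul_le_mul_of_nonneg_right ?_ (hκ.nonneg t)
        have hfart : (1 - δ) * u ≤ u - t := by linarith [ht.2]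
        have hu₀t : u₀ ≤ u - t := hfaru.trans hfart
        simp only [g, barrier_sub hu, max_eq_left hu₀t]
        refine mul_le_mul_of_nonneg_left (exp_le_exp.2 ?_) barrier_pos.le
        linarith [hgrowth u (u - t) hu₀t (sub_le_self u ht.1) hfart]
    _ ≤ ∫ t in (0 : ℝ)..u, g (u - t) * κ t :=
        intervalIntegral.integral_mono_interval le_rfl hδu
          (mul_le_of_le_one_left hu0 hδ1.le)
          (ae_of_all _ fun t => mul_nonneg barrier_pos.le (hκ.nonneg t))
          (hκ.intervalIntegrable_mul hg _ _)

namespace IsConvolutionSolution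

theorem eventually_le_exp (h : IsConvolutionSolution κ f) (hf : Continuous f)
    (hκ : IsConvolutionKernel κ) (hH : HasLogSlope a H) (hinv : IsMomentInverse κ H)
    (hε : 0 < ε) : ∀ᶠ u in atTop, f u ≤ exp (-(u * (H u - a - ε))) := by
  obtain ⟨u₀, hsuper, hcont⟩ := ((hinv.eventually_integral_barrier_le hκ hH (half_pos hε)).and
    hH.eventually_continuousAt).exists
  obtain ⟨C, hC0, hC⟩ := hκ.exists_lt_const_mul hf (continuous_barrier hcont)
    (fun _ => barrier_pos) ((eventually_gt_atTop 1).mono fun u hu => (h.mul_eq_integral u hu).le)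
    hsuper
  filter_upwards [eventually_ge_atTop 0, eventually_mul_barrier_le_exp hC0 (half_pos hε)]
    with u hu hbarrier
  exact ((hC u hu).le.trans hbarrier).trans_eq (by ring_nf)

theorem eventually_exp_le (h : IsConvolutionSolution κ f) (hf : Continuous f)
    (hκ : IsConvolutionKernel κ) (hH : HasLogSlope a H) (hinv : IsMomentInverse κ H)
    (hε : 0 < ε) : ∀ᶠ u in atTop, exp (-(u * (H u - a + ε))) ≤ f u := by
  obtain ⟨u₀, hsub, hcont⟩ := ((hinv.eventually_le_integral_barrier hκ hH (half_pos hε)).and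
    hH.eventually_continuousAt).exists
  obtain ⟨C, hC0, hC⟩ := hκ.exists_lt_const_mul (continuous_barrier hcont) hf (h.pos hκ hf) hsub
    ((eventually_gt_atTop 1).mono fun u hu => (h.mul_eq_integral u hu).ge)
  filter_upwards [eventually_ge_atTop 0,
    eventually_exp_le_mul_barrier (inv_pos.2 hC0) (half_pos hε)] with u hu hbarrier
  calc exp (-(u * (H u - a + ε))) = exp (-(u * (H u + (-a + ε / 2) + ε / 2))) := by ring_nf
    _ ≤ C⁻¹ * barrier H u₀ (-a + ε / 2) u := hbarrier
    _ ≤ f u := (inv_mul_le_iff₀ hC0).2 (hC u hu).le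

theorem hasDecayRate (h : IsConvolutionSolution κ f) (hf : Continuous f)
    (hκ : IsConvolutionKernel κ) (hH : HasLogSlope a H) (hinv : IsMomentInverse κ H) :
    HasDecayRate (fun u => H u - a) f :=
  (hasDecayRate_iff (h.pos hκ hf)).2 fun _ hε =>
    (h.eventually_exp_le hf hκ hH hinv hε).and (h.eventually_le_exp hf hκ hH hinv hε)

end IsConvolutionSolution

end Barrier

theorem HasLogSlope.eventually_mul_add_legendreConst_le {a ε : ℝ} {G : ℝ → ℝ}
    (hG : HasLogSlope a G) (hε : 0 < ε) : ∀ᶠ t₀ in atTop, ∀ y ≥ t₀, ∀ t ≥ t₀,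
      t * (G y - G t + legendreConst a) ≤ y + t * ε := by
  obtain ⟨η, hη, hcont⟩ := Metric.continuousAt_iff.1 continuous_legendreConst.continuousAt ε hε
  filter_upwards [hG.exists_sub_eq_mul_log_div hη, eventually_gt_atTop 0]
    with t₀ hslope ht₀ y hy t ht
  have hy0 : 0 < y := ht₀.trans_le hy
  have ht0 : 0 < t := ht₀.trans_le ht
  obtain ⟨b, hb0, hb, hb_eq⟩ := hslope t ht y hy
  have hconst : legendreConst a ≤ legendreConst b + ε := by
    linarith [(abs_lt.1 (hcont hb)).1]
  calc t * (G y - G t + legendreConst a)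
      ≤ t * (legendreConst b - b * log (t / y) + ε) := by
        refine mul_le_mul_of_nonneg_left ?_ ht0.le
        linarith
    _ = y * (t / y * (legendreConst b - b * log (t / y))) + t * ε := by
        field_simp
    _ ≤ y * 1 + t * ε := by
        gcongr
        exact mul_legendreConst_sub_le_one hb0 (by positivity)
    _ = y + t * ε := by rw [mul_one]

theorem HasLogSlope.exists_eventually_lt_mul_add_legendreConst {a ε : ℝ} {G : ℝ → ℝ}
    (hG : HasLogSlope a G) (hε : 0 < ε) : ∃ x > 0, ∀ᶠ y in atTop,
      ∀ t ∈ Icc (x * y) (x * y + 1), y < t * (G y - G t + legendreConst a + ε) := by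
  obtain ⟨x, hx, hx1⟩ := exists_one_lt_mul_legendreConst_sub hG.nonneg (half_pos hε)
  have hcont : ContinuousAt (fun p : ℝ × ℝ => p.1 * log p.2) (a, x) :=
    continuousAt_fst.mul (continuousAt_snd.log hx.ne')
  obtain ⟨η, hη, hball⟩ := Metric.continuousAt_iff.1 hcont (ε / 2) (half_pos hε)
  obtain ⟨u₀, hslope⟩ := (hG.exists_sub_eq_mul_log_div hη).exists
  refine ⟨x, hx, ?_⟩
  filter_upwards [eventually_gt_atTop 0, eventually_gt_atTop (1 / η), eventually_ge_atTop u₀,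
    (tendsto_id.const_mul_atTop hx).eventually_ge_atTop u₀] with y hy0 hηy hy hxy t ⟨hxt, htx⟩
  obtain ⟨b, -, hb, hb_eq⟩ := hslope t (hxy.trans hxt) y hy
  have hratio : |t / y - x| < η := by
    rw [div_sub' hy0.ne', abs_div, abs_of_pos hy0, div_lt_iff₀ hy0, abs_of_nonneg (by linarith)]
    rw [div_lt_iff₀ hη] at hηy
    linarith
  have hlog : b * log (t / y) < a * log x + ε / 2 := by
    linarith [(abs_lt.1 (hball (x := (b, t / y)) (max_lt hb hratio))).2]
  have ht0 : 0 ≤ t := (mul_pos hx hy0).le.trans hxt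
  have hpos : 0 < legendreConst a - a * log x + ε / 2 :=
    pos_of_mul_pos_right (one_pos.trans hx1) hx.le
  calc y < y * (x * (legendreConst a - a * log x + ε / 2)) := lt_mul_of_one_lt_right hy0 hx1
    _ = x * y * (legendreConst a - a * log x + ε / 2) := by ring
    _ ≤ t * (legendreConst a - a * log x + ε / 2) := mul_le_mul_of_nonneg_right hxt hpos.le
    _ ≤ t * (G y - G t + legendreConst a + ε) := by
        refine mul_le_mul_of_nonneg_left ?_ ht0
        linarith

/-! ### Moment inverses of decaying kernels -/

theorem integral_exp_mul_const {c : ℝ} (hc : c ≠ 0) (u : ℝ) :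
    ∫ t in (0 : ℝ)..u, exp (t * c) = (exp (u * c) - 1) / c := by
  rw [intervalIntegral.integral_comp_mul_right exp hc, integral_exp, zero_mul, exp_zero,
    smul_eq_mul, div_eq_inv_mul]

section DecayingKernel

variable {κ G : ℝ → ℝ} {a C ε : ℝ}

theorem HasLogSlope.eventually_exp_mul_le_on_Icc (hG : HasLogSlope a G) (hκ : Continuous κ)
    (hC : 0 < C) (t₀ : ℝ) :
    ∀ᶠ y in atTop, ∀ t ∈ Icc 0 t₀, exp (t * G y) * κ t ≤ C * exp y := by
  obtain ⟨M, hM⟩ := isCompact_Icc.exists_bound_of_continuousOn (s := Icc 0 t₀) hκ.continuousOn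
  set s := |t₀| + 1
  have hs : 0 < s := by positivity
  filter_upwards [hG.eventually_le_mul (ε := 1 / (2 * s)) (by positivity), eventually_ge_atTop 0,
    (tendsto_exp_atTop.comp (tendsto_id.atTop_div_const two_pos)).eventually_ge_atTop (M / C)]
    with y hGy hy hMy t ht
  have hexponent : t * G y ≤ y / 2 := by
    calc t * G y ≤ t * (1 / (2 * s) * y) := mul_le_mul_of_nonneg_left hGy ht.1
      _ ≤ s * (1 / (2 * s) * y) := by
          gcongr
          exact (ht.2.trans (le_abs_self t₀)).trans (lt_add_one _).le
      _ = y / 2 := by field_simp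
  have hMC : M ≤ C * exp (y / 2) := (div_le_iff₀' hC).1 hMy
  calc exp (t * G y) * κ t ≤ exp (t * G y) * (C * exp (y / 2)) := by
        gcongr
        exact (le_norm_self _).trans ((hM t ht).trans hMC)
    _ ≤ exp (y / 2) * (C * exp (y / 2)) := by
        gcongr
    _ = C * exp y := by
        rw [mul_left_comm, ← exp_add, add_halves]

theorem HasDecayRate.eventually_exp_mul_le (hdecay : HasDecayRate G κ) (hκ : Continuous κ)
    (hκ0 : ∀ t, 0 < κ t) (hG : HasLogSlope a G) (hε : 0 < ε) (hC : 0 < C) :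
    ∀ᶠ y in atTop, ∀ t ≥ 0, exp (t * (G y + legendreConst a - ε)) * κ t ≤ C * exp y := by
  have hε3 : 0 < ε / 3 := by positivity
  have hsmall : ∀ᶠ t in atTop, exp (-(t * (ε / 3))) ≤ C :=
    (tendsto_exp_neg_atTop_nhds_zero.comp (tendsto_id.atTop_mul_const hε3)).eventually_le_const hC
  obtain ⟨t₀, hYoung, hbound, hC₀⟩ := ((hG.eventually_mul_add_legendreConst_le hε3).and
    ((eventually_forall_ge_atTop.2 ((hasDecayRate_iff hκ0).1 hdecay (ε / 3) hε3)).and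
      (eventually_forall_ge_atTop.2 hsmall))).exists
  filter_upwards [(hG.add_const (legendreConst a - ε)).eventually_exp_mul_le_on_Icc hκ hC t₀,
    eventually_ge_atTop t₀] with y hnear hy t ht0
  rcases le_total t t₀ with ht | ht
  · simpa only [add_sub_assoc] using hnear t ⟨ht0, ht⟩
  calc exp (t * (G y + legendreConst a - ε)) * κ t
      ≤ exp (t * (G y + legendreConst a - ε)) * exp (-(t * (G t - ε / 3))) := by
        gcongr
        exact (hbound t ht).2
    _ ≤ exp (-(t * (ε / 3)) + y) := by
        rw [← exp_add, exp_le_exp]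
        linarith [hYoung y hy t ht]
    _ ≤ C * exp y := by
        rw [exp_add]
        gcongr
        exact hC₀ t ht

theorem HasDecayRate.exists_eventually_exp_le (hdecay : HasDecayRate G κ) (hκ0 : ∀ t, 0 < κ t)
    (hG : HasLogSlope a G) (hε : 0 < ε) : ∃ x > 0, ∀ᶠ y in atTop,
      ∀ t ∈ Icc (x * y) (x * y + 1), exp y ≤ exp (t * (G y + legendreConst a + ε)) * κ t := by
  obtain ⟨x, hx, hwindow⟩ := hG.exists_eventually_lt_mul_add_legendreConst (half_pos hε)
  have hbound := (tendsto_id.const_mul_atTop hx).eventually (eventually_forall_ge_atTop.2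
    ((hasDecayRate_iff hκ0).1 hdecay (ε / 2) (half_pos hε)))
  refine ⟨x, hx, ?_⟩
  filter_upwards [hwindow, hbound] with y hy hκy t ht
  calc exp y ≤ exp (t * (G y + legendreConst a + ε)) * exp (-(t * (G t + ε / 2))) := by
        rw [← exp_add]
        gcongr
        linarith [hy t ht]
    _ ≤ exp (t * (G y + legendreConst a + ε)) * κ t := by
        gcongr
        exact (hκy t ht.1).1

theorem HasDecayRate.eventually_integral_le (hdecay : HasDecayRate G κ) (hκ : Continuous κ)
    (hκ0 : ∀ t, 0 < κ t) (hG : HasLogSlope a G) (hε : 0 < ε) : ∀ᶠ u in atTop,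
      ∫ t in (0 : ℝ)..u, exp (t * (G (log u) + legendreConst a - ε)) * κ t ≤ u := by
  filter_upwards [tendsto_log_atTop.eventually
    (hdecay.eventually_exp_mul_le hκ hκ0 hG (half_pos hε) (half_pos hε)), eventually_gt_atTop 0]
    with u hbound hu
  calc ∫ t in (0 : ℝ)..u, exp (t * (G (log u) + legendreConst a - ε)) * κ t
      ≤ ∫ t in (0 : ℝ)..u, ε / 2 * u * exp (t * -(ε / 2)) := by
        refine intervalIntegral.integral_mono_on hu.le
          (Continuous.intervalIntegrable (by fun_prop) _ _)
          (Continuous.intervalIntegrable (by fun_prop) _ _) fun t ht => ?_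
        calc exp (t * (G (log u) + legendreConst a - ε)) * κ t
            = exp (t * (G (log u) + legendreConst a - ε / 2)) * κ t * exp (t * -(ε / 2)) := by
              rw [mul_right_comm, ← exp_add]
              ring_nf
          _ ≤ ε / 2 * u * exp (t * -(ε / 2)) := by
              rw [mul_le_mul_iff_left₀ (exp_pos _)]
              exact (hbound t ht.1).trans_eq (by rw [exp_log hu])
    _ = u * (1 - exp (u * -(ε / 2))) := by
        rw [intervalIntegral.integral_const_mul, integral_exp_mul_const (by linarith)]
        field_simp
        ring
    _ ≤ u := mul_le_of_le_one_right hu.le (sub_le_self _ (exp_pos _).le)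

theorem HasDecayRate.eventually_le_integral (hdecay : HasDecayRate G κ) (hκ : Continuous κ)
    (hκ0 : ∀ t, 0 < κ t) (hG : HasLogSlope a G) (hε : 0 < ε) {δ : ℝ} (hδ : 0 < δ) :
    ∀ᶠ u in atTop,
      u ≤ ∫ t in (0 : ℝ)..(δ * u), exp (t * (G (log u) + legendreConst a + ε)) * κ t := by
  obtain ⟨x, hx, hwindow⟩ := hdecay.exists_eventually_exp_le hκ0 hG hε
  filter_upwards [tendsto_log_atTop.eventually hwindow, eventually_ge_atTop 1,
    (hasLogSlope_log.add_const (1 / x)).eventually_le_mul (div_pos hδ hx)] with u hbound hu hxu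
  have hlog : 0 ≤ x * log u := mul_nonneg hx.le (log_nonneg hu)
  have hxδ : x * log u + 1 ≤ δ * u := by
    calc x * log u + 1 = x * (log u + 1 / x) := by field_simp
      _ ≤ x * (δ / x * u) := mul_le_mul_of_nonneg_left hxu hx.le
      _ = δ * u := by field_simp
  have hint (p q : ℝ) : IntervalIntegrable
      (fun t => exp (t * (G (log u) + legendreConst a + ε)) * κ t) volume p q :=
    Continuous.intervalIntegrable (by fun_prop) p q
  calc u = ∫ _ in (x * log u)..(x * log u + 1), exp (log u) := by
        rw [intervalIntegral.integral_const, add_sub_cancel_left, one_smul,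
          exp_log (one_pos.trans_le hu)]
    _ ≤ ∫ t in (x * log u)..(x * log u + 1),
          exp (t * (G (log u) + legendreConst a + ε)) * κ t :=
        intervalIntegral.integral_mono_on (le_add_of_nonneg_right zero_le_one)
          intervalIntegrable_const (hint _ _) hbound
    _ ≤ ∫ t in (0 : ℝ)..(δ * u), exp (t * (G (log u) + legendreConst a + ε)) * κ t :=
        intervalIntegral.integral_mono_interval hlog (le_add_of_nonneg_right zero_le_one) hxδ
          (ae_of_all _ fun t => mul_nonneg (exp_pos _).le (hκ0 t).le) (hint _ _)

theorem HasDecayRate.isMomentInverse (hdecay : HasDecayRate G κ) (hκ : Continuous κ)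
    (hκ0 : ∀ t, 0 < κ t) (hG : HasLogSlope a G) :
    IsMomentInverse κ fun u => G (log u) + legendreConst a where
  integral_le _ hε := hdecay.eventually_integral_le hκ hκ0 hG hε
  le_integral _ hε _ hδ := hdecay.eventually_le_integral hκ hκ0 hG hε hδ

theorem IsConvolutionKernel.of_continuous (hκ : Continuous κ) (hκ0 : ∀ t, 0 < κ t) :
    IsConvolutionKernel κ :=
  ⟨fun t => (hκ0 t).le, fun t _ => hκ0 t, hκ.locallyIntegrable⟩

theorem IsConvolutionSolution.hasDecayRate_comp_log {f : ℝ → ℝ} (h : IsConvolutionSolution κ f)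
    (hκ : Continuous κ) (hκ0 : ∀ t, 0 < κ t) (hκ1 : ∀ t ≤ 1, κ t = 1) (hG : HasLogSlope a G)
    (hdecay : HasDecayRate G κ) : HasDecayRate (fun u => G (log u) + legendreConst a) f := by
  simpa only [sub_zero] using h.hasDecayRate (h.continuous hκ (fun t => (hκ0 t).ne') hκ1)
    (.of_continuous hκ hκ0) (hG.comp_log.add_const _) (hdecay.isMomentInverse hκ hκ0 hG)

end DecayingKernel

/-! ### The Dickman function -/

/-- The indicator of `(-∞, 1]`: the kernel for which the Dickman function solves the convolution
equation. -/
noncomputable def unitKernel : ℝ → ℝ := (Iic 1).indicator 1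

theorem isConvolutionKernel_unitKernel : IsConvolutionKernel unitKernel where
  nonneg := indicator_nonneg fun _ _ => zero_le_one
  pos t ht := by rw [unitKernel, indicator_of_mem (mem_Iic.2 ht.2.le)]; exact one_pos
  locallyIntegrable := (locallyIntegrable_const 1).indicator measurableSet_Iic

theorem integral_mul_unitKernel (φ : ℝ → ℝ) {u : ℝ} (hu : 1 ≤ u) :
    ∫ t in (0 : ℝ)..u, φ t * unitKernel t = ∫ t in (0 : ℝ)..1, φ t := by
  rw [← intervalIntegral.integral_indicator ⟨zero_le_one, hu⟩]
  simp only [unitKernel, indicator_apply, mem_Iic, mem_ofPred_eq, Pi.one_apply, mul_ite, mul_one,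
    mul_zero]

theorem eventually_integral_unitKernel_le {ε : ℝ} (hε : 0 < ε) : ∀ᶠ u in atTop,
    ∫ t in (0 : ℝ)..u, exp (t * (log u + log (log u) - ε)) * unitKernel t ≤ u := by
  filter_upwards [eventually_ge_atTop 1, tendsto_log_atTop.eventually_gt_atTop 0,
    (tendsto_log_atTop.comp tendsto_log_atTop).eventually_ge_atTop ε] with u hu hlog hloglog
  rw [Function.comp_apply] at hloglog
  have hu0 : 0 < u := one_pos.trans_le hu
  set y := log u + log (log u) - ε
  have hlog_le : log u ≤ y := by linarith
  have hy : 0 < y := hlog.trans_le hlog_le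
  rw [integral_mul_unitKernel _ hu, integral_exp_mul_const hy.ne', one_mul, div_le_iff₀ hy]
  calc exp y - 1 ≤ exp (log u + log (log u)) :=
        (sub_le_self _ zero_le_one).trans (exp_le_exp.2 (sub_le_self _ hε.le))
    _ = u * log u := by rw [exp_add, exp_log hu0, exp_log hlog]
    _ ≤ u * y := by gcongr

theorem eventually_le_integral_unitKernel {ε δ : ℝ} (hε : 0 < ε) (hδ : 0 < δ) : ∀ᶠ u in atTop,
    u ≤ ∫ t in (0 : ℝ)..(δ * u), exp (t * (log u + log (log u) + ε)) * unitKernel t := by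
  filter_upwards [eventually_ge_atTop 1, tendsto_log_atTop.eventually_gt_atTop 1,
    (tendsto_id.const_mul_atTop hδ).eventually_ge_atTop 1,
    tendsto_log_atTop.eventually ((hasLogSlope_log.add_const (ε + 1)).eventually_le_mul hε)]
    with u hu hlog hδu hloglog
  have hu0 : 0 < u := one_pos.trans_le hu
  have hlog0 : 0 < log u := one_pos.trans hlog
  set y := log u + log (log u) + ε
  have hy : 0 < y := add_pos (add_pos hlog0 (log_pos hlog)) hε
  rw [integral_mul_unitKernel (u := δ * u) _ hδu, integral_exp_mul_const hy.ne', one_mul,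
    le_div_iff₀ hy, le_sub_iff_add_le]
  calc u * y + 1 ≤ u * (y + 1) := by linarith
    _ ≤ u * (log u * (ε + 1)) := by
        gcongr
        linarith
    _ ≤ u * (log u * exp ε) := by
        gcongr
        exact add_one_le_exp ε
    _ = exp y := by rw [exp_add, exp_add, exp_log hu0, exp_log hlog0, mul_assoc]

theorem hasLogSlope_log_add_log_log : HasLogSlope 1 fun u => log u + log (log u) := by
  simpa only [add_zero] using hasLogSlope_log.add hasLogSlope_log.comp_log

theorem isMomentInverse_unitKernel : IsMomentInverse unitKernel fun u => log u + log (log u) where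
  integral_le _ hε := eventually_integral_unitKernel_le hε
  le_integral _ hε _ hδ := eventually_le_integral_unitKernel hε hδ

/-- The defining properties of the Dickman function, extended by `1` to the negative reals. -/
structure IsDickman (f : ℝ → ℝ) : Prop where
  continuous : Continuous f
  eq_one : ∀ u ≤ 1, f u = 1
  hasDerivAt : ∀ u, 1 < u → HasDerivAt f (-f (u - 1) / u) u

theorem hasDerivAt_integral_sub_one {f : ℝ → ℝ} (hf : Continuous f) (u : ℝ) :
    HasDerivAt (fun x => ∫ t in (x - 1)..x, f t) (f u - f (u - 1)) u := by
  have hprim (x : ℝ) : HasDerivAt (fun x => ∫ t in (0 : ℝ)..x, f t) (f x) x :=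
    intervalIntegral.integral_hasDerivAt_right (hf.intervalIntegrable _ _)
      (hf.stronglyMeasurableAtFilter _ _) hf.continuousAt
  refine ((hprim u).fun_sub ((hprim (u - 1)).comp_sub_const u 1)).congr_of_eventuallyEq
    (.of_forall fun x => ?_)
  exact (intervalIntegral.integral_interval_sub_left (hf.intervalIntegrable _ _)
    (hf.intervalIntegrable _ _)).symm

namespace IsDickman

variable {f : ℝ → ℝ} {u : ℝ}

theorem hasDerivAt_mul_sub_integral (h : IsDickman f) (hu : 1 < u) :
    HasDerivAt (fun x => x * f x - ∫ t in (x - 1)..x, f t) 0 u := by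
  have hu0 : u ≠ 0 := by linarith
  refine (((hasDerivAt_id u).fun_mul (h.hasDerivAt u hu)).fun_sub
    (hasDerivAt_integral_sub_one h.continuous u)).congr_deriv ?_
  simp only [id]
  field_simp
  ring

theorem mul_eq_integral (h : IsDickman f) (hu : 1 < u) : u * f u = ∫ t in (u - 1)..u, f t := by
  have hcont : Continuous fun x => x * f x - ∫ t in (x - 1)..x, f t :=
    (continuous_id.mul h.continuous).sub <| continuous_iff_continuousAt.2 fun x =>
      (hasDerivAt_integral_sub_one h.continuous x).continuousAt
  obtain ⟨c, -, hc⟩ := exists_hasDerivAt_eq_slope _ (fun _ => 0) hu hcont.continuousOn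
    fun x hx => h.hasDerivAt_mul_sub_integral hx.1
  have hone : ∫ t in (0 : ℝ)..1, f t = 1 := by
    rw [intervalIntegral.integral_congr (g := fun _ => (1 : ℝ)), integral_one, sub_zero]
    intro t ht
    rw [uIcc_of_le zero_le_one] at ht
    exact h.eq_one t ht.2
  rw [eq_div_iff (sub_pos.2 hu).ne', zero_mul, sub_self, hone, h.eq_one 1 le_rfl] at hc
  linarith

theorem isConvolutionSolution (h : IsDickman f) : IsConvolutionSolution unitKernel f where
  eq_one := h.eq_one
  mul_eq_integral u hu := by
    rw [h.mul_eq_integral hu, integral_mul_unitKernel _ hu.le,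
      intervalIntegral.integral_comp_sub_left, sub_zero]

theorem hasDecayRate (h : IsDickman f) :
    HasDecayRate (fun u => log u + log (log u) - 1) f :=
  h.isConvolutionSolution.hasDecayRate h.continuous isConvolutionKernel_unitKernel
    hasLogSlope_log_add_log_log isMomentInverse_unitKernel

end IsDickman

/-! ### Iterated convolution equations -/

/-- The sequence `σ_j`, extended by `1` to the negative reals. -/
structure IsDickmanTower (τ : ℕ → ℝ → ℝ) : Prop where
  zero : IsDickman (τ 0)
  succ : ∀ j, IsConvolutionSolution (τ j) (τ (j + 1))

theorem hasLogSlope_iterate_log_add (j : ℕ) :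
    HasLogSlope 0 fun u => log^[j + 2] u + log^[j + 3] u := by
  induction j with
  | zero => exact hasLogSlope_log_add_log_log.comp_log
  | succ j ih => exact ih.comp_log

theorem tendsto_iterate_log_atTop (k : ℕ) : Tendsto log^[k] atTop atTop :=
  tendsto_log_atTop.iterate k

theorem HasDecayRate.tendsto_rpow_mul {f : ℝ → ℝ} {k : ℕ} (hf : ∀ u, 0 < f u)
    (h : HasDecayRate (fun u => log^[k + 1] u + log^[k + 2] u) f) :
    Tendsto (fun u => f u ^ (1 / u) * log^[k] u * log^[k + 1] u) atTop (𝓝 1) := by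
  have hexp := (continuous_exp.tendsto 0).comp h
  rw [exp_zero] at hexp
  refine hexp.congr' ?_
  filter_upwards [(tendsto_iterate_log_atTop k).eventually_gt_atTop 0,
    (tendsto_iterate_log_atTop (k + 1)).eventually_gt_atTop 0] with u hk hk1
  rw [Function.comp_apply, exp_add, exp_add, Function.iterate_succ_apply' log (k + 1),
    exp_log hk1, Function.iterate_succ_apply' log k, exp_log hk, rpow_def_of_pos (hf u),
    mul_one_div, mul_assoc]

namespace IsDickmanTower

variable {τ : ℕ → ℝ → ℝ}

theorem eq_one (h : IsDickmanTower τ) : ∀ j, ∀ u ≤ 1, τ j u = 1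
  | 0 => h.zero.eq_one
  | j + 1 => (h.succ j).eq_one

theorem continuous_and_pos (h : IsDickmanTower τ) (j : ℕ) :
    Continuous (τ j) ∧ ∀ u, 0 < τ j u := by
  induction j with
  | zero =>
    exact ⟨h.zero.continuous,
      h.zero.isConvolutionSolution.pos isConvolutionKernel_unitKernel h.zero.continuous⟩
  | succ j ih =>
    obtain ⟨hcont, hpos⟩ := ih
    have hcont' := (h.succ j).continuous hcont (fun t => (hpos t).ne') (h.eq_one j)
    exact ⟨hcont', (h.succ j).pos (.of_continuous hcont hpos) hcont'⟩

theorem hasDecayRate (h : IsDickmanTower τ) (j : ℕ) :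
    HasDecayRate (fun u => log^[j + 2] u + log^[j + 3] u) (τ (j + 1)) := by
  obtain ⟨hcont, hpos⟩ := h.continuous_and_pos j
  induction j with
  | zero =>
    have hdecay := (h.succ 0).hasDecayRate_comp_log hcont hpos (h.eq_one 0)
      (hasLogSlope_log_add_log_log.add_const (-1)) h.zero.hasDecayRate
    simp only [legendreConst_one, neg_add_cancel_right] at hdecay
    exact hdecay
  | succ j ih =>
    obtain ⟨hcont', hpos'⟩ := h.continuous_and_pos j
    have hdecay := (h.succ (j + 1)).hasDecayRate_comp_log hcont hpos (h.eq_one (j + 1))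
      (hasLogSlope_iterate_log_add j) (ih hcont' hpos')
    simp only [legendreConst_zero, add_zero] at hdecay
    exact hdecay

theorem tendsto_rpow_mul (h : IsDickmanTower τ) {k : ℕ} (hk : 1 ≤ k) :
    Tendsto (fun u => τ k u ^ (1 / u) * log^[k] u * log^[k + 1] u) atTop (𝓝 1) := by
  obtain ⟨j, rfl⟩ := Nat.exists_eq_add_of_le' hk
  exact (h.hasDecayRate j).tendsto_rpow_mul (h.continuous_and_pos (j + 1)).2

end IsDickmanTower

section Extension

variable {κ f : ℝ → ℝ}

theorem comp_max_zero_eq_one (h1 : ∀ u, 0 ≤ u → u ≤ 1 → f u = 1) :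
    ∀ u ≤ 1, f (max u 0) = 1 := fun _ hu =>
  h1 _ (le_max_right _ _) (max_le hu zero_le_one)

theorem isDickman_comp_max_zero (hf : ContinuousOn f (Ici 0))
    (h1 : ∀ u, 0 ≤ u → u ≤ 1 → f u = 1)
    (hderiv : ∀ u, 1 < u → HasDerivAt f (-f (u - 1) / u) u) :
    IsDickman fun u => f (max u 0) where
  continuous := hf.comp_continuous (continuous_id.max continuous_const) fun u =>
    mem_Ici.2 (le_max_right u 0)
  eq_one := comp_max_zero_eq_one h1
  hasDerivAt u hu := by
    rw [max_eq_left (sub_nonneg.2 hu.le)]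
    refine (hderiv u hu).congr_of_eventuallyEq ?_
    filter_upwards [Ioi_mem_nhds (one_pos.trans hu)] with v hv
    rw [max_eq_left (le_of_lt hv)]

theorem isConvolutionSolution_comp_max_zero (h1 : ∀ u, 0 ≤ u → u ≤ 1 → f u = 1)
    (heq : ∀ u, 1 < u → u * f u = ∫ t in (0 : ℝ)..u, f (u - t) * κ t) :
    IsConvolutionSolution (fun u => κ (max u 0)) fun u => f (max u 0) where
  eq_one := comp_max_zero_eq_one h1
  mul_eq_integral u hu := by
    have hu0 : 0 ≤ u := zero_le_one.trans hu.le
    rw [max_eq_left hu0, heq u hu]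
    refine intervalIntegral.integral_congr fun t ht => ?_
    rw [uIcc_of_le hu0] at ht
    simp only [max_eq_left ht.1, max_eq_left (sub_nonneg.2 ht.2)]

end Extension

theorem statement3
    -- the Dickman function `ρ`
    (ρ : ℝ → ℝ) (hρ_cont : ContinuousOn ρ (Set.Ici 0))
    (hρ_init : ∀ u : ℝ, 0 ≤ u → u ≤ 1 → ρ u = 1)
    (hρ_deriv : ∀ u : ℝ, 1 < u → HasDerivAt ρ (-ρ (u - 1) / u) u)
    -- the iterated functions `σ_j`
    (σ : ℕ → ℝ → ℝ) (hσ0 : σ 0 = ρ)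
    (hσ_init : ∀ j : ℕ, ∀ u : ℝ, 0 ≤ u → u ≤ 1 → σ (j + 1) u = 1)
    (hσ_eq : ∀ j : ℕ, ∀ u : ℝ, 1 < u →
      u * σ (j + 1) u = ∫ t in (0 : ℝ)..u, σ (j + 1) (u - t) * σ j t)
    (k : ℕ) (hk : 1 ≤ k) :
    Filter.Tendsto
      (fun u : ℝ => (σ k u) ^ (1 / u) * (Real.log^[k] u) * (Real.log^[k + 1] u))
      Filter.atTop (nhds 1) := by
  subst hσ0
  have htower : IsDickmanTower fun j u => σ j (max u 0) :=
    ⟨isDickman_comp_max_zero hρ_cont hρ_init hρ_deriv,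
      fun j => isConvolutionSolution_comp_max_zero (hσ_init j) (hσ_eq j)⟩
  refine (htower.tendsto_rpow_mul hk).congr' ?_
  filter_upwards [eventually_ge_atTop 0] with u hu
  rw [max_eq_left hu]
end

section
/- Fix U > 1. For each real y ≥ 2 set x = y^U and let P(y) be a set of primes ≤ x containing every prime ≤ y. Define χ_y(t) = 1 for 0 ≤ t ≤ 1 and χ_y(t) = (#{p ∈ P(y) : p ≤ y^t})/π(y^t) for 1 < t ≤ U, and let σ_y be the unique solution of u·σ_y(u) = ∫₀^u σ_y(u−t)·χ_y(t) dt for u > 1 with σ_y(u) = 1 for 0 ≤ u ≤ 1. Then sup_{1 ≤ u ≤ U} |Ψ(y^u, P(y))/y^u − σ_y(u)| → 0 as y → ∞. -/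
/-- `primePi x` is the number of primes `p ≤ x`. -/
noncomputable def primePi (x : ℝ) : ℕ := {p : ℕ | p.Prime ∧ (p : ℝ) ≤ x}.ncard

/-- `smoothIn x P` is the number of positive integers `n ≤ x` all of whose prime divisors
lie in `P`. -/
noncomputable def smoothIn (x : ℝ) (P : Set ℕ) : ℕ :=
  {n : ℕ | 0 < n ∧ (n : ℝ) ≤ x ∧ ∀ p : ℕ, p.Prime → p ∣ n → p ∈ P}.ncard

/-!
Put `r(u) = Ψ(y^u, P) / y^u`. Summing `log n = ∑ d ∣ n, Λ d` over the `n ≤ y^u` composed of primes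
of `P` gives, up to `O(1 / log y)`,
`u * r(u) = ∑ Λ(d) / (d log y) * r(u - log d / log y)`, the sum being over the prime powers
`d ≤ y^u` composed of primes of `P`. By the prime number theorem, proved from the nonvanishing of
`ζ` on `Re s = 1` and a Tauberian theorem for Laplace transforms, and by partial summation, the
masses `Λ(d) / (d log y)` placed at the points `log d / log y` approximate the measure `χ(t) dt`,
uniformly in `P`. As `σ` is Lipschitz on `[0, U]`, replacing the masses by that measure in
`∑ Λ(d) / (d log y) * σ(u - log d / log y)` costs little, so `σ` satisfies the same approximate
equation as `r`. A bound `M` for `|r - σ|` on `[1, U]` therefore improves to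
`(1 - 1 / u + o(1)) * M + o(1)` at `u`, because `r` and `σ` nearly agree on `[0, 1]` and the points
with `u - t ≥ 1` carry mass at most `u - 1 + o(1)`. This is a contraction on `[1, U]`.
-/

open Complex MeasureTheory Filter Topology Chebyshev
open scoped ArithmeticFunction

/-! ### A Tauberian theorem for Laplace transforms -/

/-- The Fejér kernel: the Fourier transform of the tent function `1 - |t|` on `[-1, 1]`. -/
noncomputable def fejer (x : ℝ) : ℝ := Real.sinc (x / 2) ^ 2

lemma continuous_fejer : Continuous fejer := by
  unfold fejer; fun_prop

lemma fejer_nonneg (x : ℝ) : 0 ≤ fejer x := sq_nonneg _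

lemma fejer_le (x : ℝ) : fejer x ≤ 5 * (1 + x ^ 2)⁻¹ := by
  rw [fejer, ← div_eq_mul_inv, le_div_iff₀ (by positivity)]
  have hsinc : Real.sinc (x / 2) ^ 2 ≤ 1 :=
    (sq_le_one_iff_abs_le_one _).2 (Real.abs_sinc_le_one _)
  have hsin : Real.sinc (x / 2) * x = 2 * Real.sin (x / 2) := by
    rcases eq_or_ne x 0 with rfl | hx
    · simp
    · rw [Real.sinc_of_ne_zero (by positivity)]; field_simp
  calc Real.sinc (x / 2) ^ 2 * (1 + x ^ 2)
      = Real.sinc (x / 2) ^ 2 + (Real.sinc (x / 2) * x) ^ 2 := by ring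
    _ ≤ 1 + 2 ^ 2 * 1 := by
        rw [hsin, mul_pow]
        gcongr
        exact Real.sin_sq_le_one _
    _ = 5 := by norm_num

lemma integrable_fejer : Integrable fejer :=
  (integrable_inv_one_add_sq.const_mul 5).mono' continuous_fejer.aestronglyMeasurable <|
    Eventually.of_forall fun x ↦ (Real.norm_of_nonneg (fejer_nonneg x)).trans_le (fejer_le x)

lemma integrable_fejer_comp {l : ℝ} (hl : l ≠ 0) (v : ℝ) :
    Integrable fun u ↦ fejer (l * (v - u)) :=
  (integrable_fejer.comp_mul_left' hl).comp_sub_left v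

lemma integral_fejer_pos : 0 < ∫ x, fejer x :=
  integral_pos_of_integrable_nonneg_nonzero (x := 0) continuous_fejer integrable_fejer
    fejer_nonneg (by simp [fejer])

lemma integral_one_sub_mul_cos (x : ℝ) :
    ∫ t in (0 : ℝ)..1, (1 - t) * Real.cos (t * x) = fejer x / 2 := by
  rcases eq_or_ne x 0 with rfl | hx
  · simp [fejer, intervalIntegral.integral_comp_sub_left (fun t : ℝ ↦ t)]
  have hderiv (t : ℝ) : HasDerivAt
      (fun t ↦ (1 - t) * (Real.sin (t * x) / x) - Real.cos (t * x) / x ^ 2)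
      ((1 - t) * Real.cos (t * x)) t := by
    have hlin : HasDerivAt (fun t ↦ t * x) x t := by simpa using (hasDerivAt_id t).mul_const x
    refine ((((hasDerivAt_id t).const_sub 1).mul (hlin.sin.div_const x)).sub
      (hlin.cos.div_const (x ^ 2))).congr_deriv ?_
    simp only [id]
    field_simp
    ring
  have hcos : Real.cos x = 1 - 2 * Real.sin (x / 2) ^ 2 := by
    rw [Real.sin_sq_eq_half_sub]; ring_nf
  rw [intervalIntegral.integral_eq_sub_of_hasDerivAt (fun t _ ↦ hderiv t)
    ((by fun_prop : Continuous _).intervalIntegrable _ _), fejer,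
    Real.sinc_of_ne_zero (by positivity)]
  simp only [sub_self, zero_mul, one_mul, hcos, Real.sin_zero, Real.cos_zero]
  field_simp
  ring

lemma integral_one_sub_abs_mul_exp (x : ℝ) :
    ∫ t in Set.Ioc (-1 : ℝ) 1, ((1 - |t| : ℝ) : ℂ) * cexp (I * t * x) = fejer x := by
  have hcont : Continuous fun t : ℝ ↦ ((1 - |t| : ℝ) : ℂ) * cexp (I * t * x) := by fun_prop
  have hneg := intervalIntegral.integral_comp_neg (a := 0) (b := 1)
    fun t : ℝ ↦ ((1 - |t| : ℝ) : ℂ) * cexp (I * t * x)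
  rw [neg_zero] at hneg
  rw [← intervalIntegral.integral_of_le (by norm_num),
    ← intervalIntegral.integral_add_adjacent_intervals (b := 0)
      (hcont.intervalIntegrable _ _) (hcont.intervalIntegrable _ _), ← hneg,
    ← intervalIntegral.integral_add
      (by exact (hcont.comp continuous_neg).intervalIntegrable _ _) (hcont.intervalIntegrable _ _)]
  calc _ = ∫ t in (0 : ℝ)..1, ((2 * ((1 - t) * Real.cos (t * x)) : ℝ) : ℂ) := by
        refine intervalIntegral.integral_congr fun t ht ↦ ?_
        rw [Set.uIcc_of_le zero_le_one] at ht
        simp only [abs_neg, abs_of_nonneg ht.1]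
        push_cast
        rw [Complex.cos]
        ring_nf
    _ = fejer x := by
        rw [intervalIntegral.integral_ofReal, intervalIntegral.integral_const_mul,
          integral_one_sub_mul_cos]
        ring_nf

section FejerMeans

variable {R : ℝ → ℝ} {B : ℝ} {G : ℂ → ℂ} {l : ℝ}

lemma norm_one_sub_abs_mul_exp_le {t : ℝ} (ht : t ∈ Set.Ioc (-1) 1) (x : ℝ) :
    ‖((1 - |t| : ℝ) : ℂ) * cexp (I * t * x)‖ ≤ 1 := by
  have habs : |t| ≤ 1 := abs_le.2 ⟨ht.1.le, ht.2⟩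
  have hexp : ‖cexp (I * t * x)‖ = 1 := by simp [Complex.norm_exp]
  rw [norm_mul, hexp, mul_one, norm_real, Real.norm_of_nonneg (by linarith)]
  linarith [abs_nonneg t]

lemma fejer_integral_eq_of_laplace (hR : Measurable R) (hB : ∀ u, |R u| ≤ B)
    (hL : ∀ s : ℂ, 0 < s.re → ∫ u in Set.Ioi (0 : ℝ), (R u : ℂ) * cexp (-s * u) = G s)
    (l v : ℝ) {ε : ℝ} (hε : 0 < ε) :
    ∫ t in Set.Ioc (-1 : ℝ) 1,
        ((1 - |t| : ℝ) : ℂ) * cexp (I * t * (l * v : ℝ)) * G (ε + l * t * I) =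
      ∫ u in Set.Ioi (0 : ℝ), (R u : ℂ) * cexp (-ε * u) * fejer (l * (v - u)) := by
  have hexp (t u : ℝ) : cexp (I * t * (l * v : ℝ)) * cexp (-(ε + l * t * I) * u) =
      cexp (-ε * u) * cexp (I * t * (l * (v - u) : ℝ)) := by
    rw [← Complex.exp_add, ← Complex.exp_add]; push_cast; ring_nf
  have hint : Integrable (fun p : ℝ × ℝ ↦ ((1 - |p.1| : ℝ) : ℂ) * cexp (I * p.1 * (l * v : ℝ)) *
      ((R p.2 : ℂ) * cexp (-(ε + l * p.1 * I) * p.2)))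
      ((volume.restrict (Set.Ioc (-1) 1)).prod (volume.restrict (Set.Ioi 0))) := by
    refine (Integrable.mul_prod (f := fun _ : ℝ ↦ (1 : ℝ))
      (g := fun u : ℝ ↦ B * Real.exp (-ε * u)) (integrable_const _)
      ((integrableOn_exp_mul_Ioi (by linarith) 0).const_mul B)).mono' ?_ ?_
    · have : Measurable fun p : ℝ × ℝ ↦ (R p.2 : ℂ) :=
        measurable_ofReal.comp (hR.comp measurable_snd)
      exact Measurable.aestronglyMeasurable (by fun_prop)
    · rw [Measure.prod_restrict]
      refine (ae_restrict_mem (measurableSet_Ioc.prod measurableSet_Ioi)).mono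
        fun ⟨t, u⟩ ⟨ht, _⟩ ↦ ?_
      have hdecay : ‖cexp (-(ε + l * t * I) * u)‖ = Real.exp (-ε * u) := by
        simp [Complex.norm_exp]
      rw [norm_mul, norm_mul (R u : ℂ), hdecay, norm_real]
      gcongr
      exacts [norm_one_sub_abs_mul_exp_le ht _, hB u]
  calc _ = ∫ t in Set.Ioc (-1 : ℝ) 1, ∫ u in Set.Ioi (0 : ℝ), ((1 - |t| : ℝ) : ℂ) *
        cexp (I * t * (l * v : ℝ)) * ((R u : ℂ) * cexp (-(ε + l * t * I) * u)) := by
        congr 1 with t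
        rw [← hL _ (by simpa using hε), integral_const_mul]
    _ = ∫ u in Set.Ioi (0 : ℝ), ∫ t in Set.Ioc (-1 : ℝ) 1, (R u : ℂ) * cexp (-ε * u) *
        (((1 - |t| : ℝ) : ℂ) * cexp (I * t * (l * (v - u) : ℝ))) := by
        rw [integral_integral_swap hint]
        congr 1 with u
        congr 1 with t
        linear_combination ((1 - |t| : ℝ) : ℂ) * (R u : ℂ) * hexp t u
    _ = _ := by simp_rw [integral_const_mul, integral_one_sub_abs_mul_exp]

lemma tendsto_integral_tent_mul_of_continuousOn (hG : ContinuousOn G {s | 0 ≤ s.re}) (l v : ℝ) :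
    Tendsto (fun ε : ℝ ↦ ∫ t in Set.Ioc (-1 : ℝ) 1,
        ((1 - |t| : ℝ) : ℂ) * cexp (I * t * (l * v : ℝ)) * G (ε + l * t * I)) (𝓝[>] 0)
      (𝓝 (∫ t in Set.Ioc (-1 : ℝ) 1,
        ((1 - |t| : ℝ) : ℂ) * cexp (I * t * (l * v : ℝ)) * G (l * t * I))) := by
  have hcont : Continuous fun p : ℝ × ℝ ↦ G (((max p.1 0 : ℝ) : ℂ) + l * p.2 * I) :=
    hG.comp_continuous (by fun_prop) (by simp)
  obtain ⟨C, hC⟩ := ((isCompact_Icc (a := (0 : ℝ)) (b := 1)).prod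
    (isCompact_Icc (a := (-1 : ℝ)) (b := 1))).exists_bound_of_continuousOn hcont.continuousOn
  have hlim : Tendsto (fun ε : ℝ ↦ ∫ t in Set.Ioc (-1 : ℝ) 1, ((1 - |t| : ℝ) : ℂ) *
      cexp (I * t * (l * v : ℝ)) * G (((max ε 0 : ℝ) : ℂ) + l * t * I)) (𝓝[>] 0)
      (𝓝 (∫ t in Set.Ioc (-1 : ℝ) 1,
        ((1 - |t| : ℝ) : ℂ) * cexp (I * t * (l * v : ℝ)) * G (l * t * I))) := by
    refine tendsto_integral_filter_of_dominated_convergence (fun _ ↦ C) ?_ ?_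
      (integrable_const C) ?_
    · refine Eventually.of_forall fun ε ↦ Continuous.aestronglyMeasurable ?_
      have := hcont.comp (Continuous.prodMk_right (Y := ℝ) ε)
      exact (by fun_prop : Continuous fun t : ℝ ↦ ((1 - |t| : ℝ) : ℂ) *
        cexp (I * t * (l * v : ℝ))).mul this
    · filter_upwards [Ioc_mem_nhdsGT zero_lt_one] with ε hε
      refine (ae_restrict_mem measurableSet_Ioc).mono fun t ht ↦ ?_
      rw [norm_mul, ← one_mul C]
      gcongr
      exacts [norm_one_sub_abs_mul_exp_le ht _, hC (ε, t) ⟨⟨hε.1.le, hε.2⟩, ht.1.le, ht.2⟩]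
    · refine Eventually.of_forall fun t ↦ Tendsto.const_mul _ (Tendsto.mono_left ?_
        nhdsWithin_le_nhds)
      simpa [Function.comp_def] using
        (hcont.comp (Continuous.prodMk_left (X := ℝ) t)).tendsto 0
  refine hlim.congr' ?_
  filter_upwards [self_mem_nhdsWithin] with ε hε
  rw [max_eq_left (Set.mem_Ioi.1 hε).le]

lemma tendsto_integral_mul_exp_mul_fejer (hR : Measurable R) (hB : ∀ u, |R u| ≤ B) (hl : l ≠ 0)
    (v : ℝ) :
    Tendsto (fun ε : ℝ ↦ ∫ u in Set.Ioi (0 : ℝ), (R u : ℂ) * cexp (-ε * u) * fejer (l * (v - u)))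
      (𝓝[>] 0) (𝓝 ((∫ u in Set.Ioi (0 : ℝ), R u * fejer (l * (v - u)) : ℝ) : ℂ)) := by
  rw [← integral_complex_ofReal]
  refine tendsto_integral_filter_of_dominated_convergence (fun u ↦ B * fejer (l * (v - u))) ?_ ?_
    ((integrable_fejer_comp hl v).const_mul B).integrableOn ?_
  · have hfejer : Measurable fun u : ℝ ↦ (fejer (l * (v - u)) : ℂ) :=
      measurable_ofReal.comp (continuous_fejer.measurable.comp (by fun_prop))
    have : Measurable fun u ↦ (R u : ℂ) := measurable_ofReal.comp hR
    exact Eventually.of_forall fun ε ↦ Measurable.aestronglyMeasurable (by fun_prop)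
  · filter_upwards [self_mem_nhdsWithin] with ε (hε : 0 < ε)
    refine (ae_restrict_mem measurableSet_Ioi).mono fun u (hu : 0 < u) ↦ ?_
    have hexp : ‖cexp (-ε * u)‖ ≤ 1 := by simpa [Complex.norm_exp] using by positivity
    rw [norm_mul, norm_mul, norm_real, norm_real, Real.norm_of_nonneg (fejer_nonneg _)]
    refine mul_le_mul_of_nonneg_right ?_ (fejer_nonneg _)
    exact (mul_le_of_le_one_right (norm_nonneg _) hexp).trans (hB u)
  · refine Eventually.of_forall fun u ↦ Tendsto.mono_left ?_ nhdsWithin_le_nhds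
    have hcont : Continuous fun ε : ℝ ↦ (R u : ℂ) * cexp (-ε * u) * fejer (l * (v - u)) := by
      fun_prop
    simpa using hcont.tendsto 0

/-- The Laplace transform is known only in `Re s > 0`; letting `Re s → 0` is possible because the
tent function has compact support and the Fejér kernel is integrable. -/
lemma fejer_integral_eq_of_laplace_boundary (hR : Measurable R) (hB : ∀ u, |R u| ≤ B)
    (hG : ContinuousOn G {s | 0 ≤ s.re})
    (hL : ∀ s : ℂ, 0 < s.re → ∫ u in Set.Ioi (0 : ℝ), (R u : ℂ) * cexp (-s * u) = G s)
    (hl : l ≠ 0) (v : ℝ) :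
    ∫ t in Set.Ioc (-1 : ℝ) 1,
        ((1 - |t| : ℝ) : ℂ) * cexp (I * t * (l * v : ℝ)) * G (l * t * I) =
      ((∫ u in Set.Ioi (0 : ℝ), R u * fejer (l * (v - u)) : ℝ) : ℂ) := by
  refine tendsto_nhds_unique
    ((tendsto_integral_tent_mul_of_continuousOn hG l v).congr' ?_)
    (tendsto_integral_mul_exp_mul_fejer hR hB hl v)
  filter_upwards [self_mem_nhdsWithin] with ε hε
  exact fejer_integral_eq_of_laplace hR hB hL l v hε

lemma tendsto_fejer_integral_of_laplace (hR : Measurable R) (hB : ∀ u, |R u| ≤ B)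
    (hG : ContinuousOn G {s | 0 ≤ s.re})
    (hL : ∀ s : ℂ, 0 < s.re → ∫ u in Set.Ioi (0 : ℝ), (R u : ℂ) * cexp (-s * u) = G s)
    (hl : 0 < l) :
    Tendsto (fun v ↦ ∫ u in Set.Ioi (0 : ℝ), R u * fejer (l * (v - u))) atTop (𝓝 0) := by
  have hfreq : Tendsto (fun v : ℝ ↦ -(l * v / (2 * Real.pi))) atTop (cocompact ℝ) :=
    (tendsto_neg_atTop_atBot.comp
      ((tendsto_id.const_mul_atTop hl).atTop_div_const (by positivity))).mono_right
      atBot_le_cocompact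
  have riemann_lebesgue := (Real.tendsto_integral_exp_smul_cocompact
    ((Set.Ioc (-1 : ℝ) 1).indicator fun t ↦ ((1 - |t| : ℝ) : ℂ) * G (l * t * I))).comp hfreq
  rw [← tendsto_ofReal_iff, ofReal_zero]
  refine riemann_lebesgue.congr fun v ↦ ?_
  rw [← fejer_integral_eq_of_laplace_boundary hR hB hG hL hl.ne' v, Function.comp_apply,
    ← integral_indicator measurableSet_Ioc]
  congr 1 with t
  by_cases ht : t ∈ Set.Ioc (-1 : ℝ) 1
  · have hphase : ((2 * Real.pi * -(t * -(l * v / (2 * Real.pi))) : ℝ) : ℂ) * I =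
        I * t * (l * v : ℝ) := by
      rw [show 2 * Real.pi * -(t * -(l * v / (2 * Real.pi))) = t * (l * v) by field_simp]
      push_cast
      ring
    simp only [Set.indicator_of_mem ht, Circle.smul_def, Real.fourierChar_apply, smul_eq_mul,
      hphase]
    ring
  · simp [Set.indicator_of_notMem ht]

lemma exists_integral_fejer_Icc_gt {η B : ℝ} (hη : 0 < η) :
    ∃ X : ℝ, 0 < X ∧ 0 < (η + B) * (∫ x in Set.Icc (-X) X, fejer x) - B * ∫ x, fejer x := by
  have hlim := (((aecover_Icc tendsto_neg_atTop_atBot tendsto_id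
    ).integral_tendsto_of_countably_generated integrable_fejer).const_mul (η + B)).sub_const
    (B * ∫ x, fejer x)
  have hpos : 0 < (η + B) * (∫ x, fejer x) - B * ∫ x, fejer x := by
    rw [← sub_mul, add_sub_cancel_right]
    exact mul_pos hη integral_fejer_pos
  exact ((eventually_gt_atTop 0).and (hlim.eventually (lt_mem_nhds hpos))).exists

lemma fejer_minorant_le_indicator {η h v : ℝ} (hB : ∀ u, |R u| ≤ B) (hl : 0 < l) (hhv : h < v)
    (hge : ∀ u ∈ Set.Icc (v - h) (v + h), η ≤ R u) (u : ℝ) :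
    (η + B) * (Set.Icc (-(l * h)) (l * h)).indicator fejer (l * (v - u)) -
      B * fejer (l * (v - u)) ≤ (Set.Ioi 0).indicator (fun u ↦ R u * fejer (l * (v - u))) u := by
  have hf := fejer_nonneg (l * (v - u))
  have hlow := mul_le_mul_of_nonneg_right (neg_le_of_abs_le (hB u)) hf
  have hu : l * (v - u) ∈ Set.Icc (-(l * h)) (l * h) ↔ u ∈ Set.Icc (v - h) (v + h) := by
    rw [← mul_neg, Set.mem_Icc, mul_le_mul_iff_right₀ hl, mul_le_mul_iff_right₀ hl]
    constructor <;> rintro ⟨h₁, h₂⟩ <;> constructor <;> linarith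
  by_cases hmem : u ∈ Set.Icc (v - h) (v + h)
  · have hu0 : u ∈ Set.Ioi 0 := Set.mem_Ioi.2 (by linarith [hmem.1])
    rw [Set.indicator_of_mem hu0, Set.indicator_of_mem (hu.2 hmem)]
    linarith [mul_le_mul_of_nonneg_right (hge u hmem) hf]
  · rw [Set.indicator_of_notMem (mt hu.1 hmem)]
    by_cases hu0 : u ∈ Set.Ioi 0
    · rw [Set.indicator_of_mem hu0]
      linarith
    · rw [Set.indicator_of_notMem hu0]
      linarith [mul_nonneg ((abs_nonneg _).trans (hB u)) hf]

lemma eventually_exists_lt_of_fejer (hR : Measurable R) (hB : ∀ u, |R u| ≤ B)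
    (hlim : ∀ l : ℝ, 0 < l →
      Tendsto (fun v ↦ ∫ u in Set.Ioi (0 : ℝ), R u * fejer (l * (v - u))) atTop (𝓝 0))
    {η h : ℝ} (hη : 0 < η) (hh : 0 < h) :
    ∀ᶠ v in atTop, ∃ u ∈ Set.Icc (v - h) (v + h), R u < η := by
  obtain ⟨X, hX, hmass⟩ := exists_integral_fejer_Icc_gt (B := B) hη
  set l := X / h with hl
  have hlpos : 0 < l := by positivity
  have hXl : X = l * h := by rw [hl]; field_simp
  filter_upwards [(hlim l hlpos).eventually (gt_mem_nhds (mul_pos (inv_pos.2 hlpos) hmass)),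
    eventually_gt_atTop h] with v hv hhv
  by_contra! hge
  let minorant (x : ℝ) : ℝ := (η + B) * (Set.Icc (-X) X).indicator fejer x - B * fejer x
  have hindicator : Integrable ((Set.Icc (-X) X).indicator fejer) :=
    integrable_fejer.indicator measurableSet_Icc
  have hminorant : Integrable minorant :=
    (hindicator.const_mul _).sub (integrable_fejer.const_mul _)
  have hmono := integral_mono ((hminorant.comp_mul_left' hlpos.ne').comp_sub_left v)
    (((integrable_fejer_comp hlpos.ne' v).bdd_mul hR.aestronglyMeasurable
      (Eventually.of_forall hB)).indicator measurableSet_Ioi)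
    fun u ↦ hXl ▸ fejer_minorant_le_indicator hB hlpos hhv hge u
  rw [integral_sub_left_eq_self (fun u ↦ minorant (l * u)) volume v,
    Measure.integral_comp_mul_left, abs_of_pos (by positivity), smul_eq_mul,
    integral_indicator measurableSet_Ioi] at hmono
  simp only [minorant] at hmono
  rw [integral_sub (hindicator.const_mul _) (integrable_fejer.const_mul _), integral_const_mul,
    integral_const_mul, integral_indicator measurableSet_Icc] at hmono
  exact hv.not_ge hmono

end FejerMeans

/-- Slowly decreasing functions in the sense of Schmidt (for translations): asymptotically, the
function drops by little over short intervals. This is the Tauberian side condition below. -/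
def SlowlyDecreasing (R : ℝ → ℝ) : Prop :=
  ∀ ε > 0, ∃ δ > 0, ∀ᶠ a in atTop, ∀ b ∈ Set.Icc a (a + δ), R a - ε ≤ R b

/-- Values of `R` of the wrong sign persist, by slow decrease, on an interval of fixed length (to
the right of a large positive value, to the left of a large negative one), which contradicts the
vanishing of the Fejér means. -/
theorem SlowlyDecreasing.tendsto_zero_of_laplace {R : ℝ → ℝ} {B : ℝ} {G : ℂ → ℂ}
    (hslow : SlowlyDecreasing R) (hR : Measurable R) (hB : ∀ u, |R u| ≤ B)
    (hG : ContinuousOn G {s | 0 ≤ s.re})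
    (hL : ∀ s : ℂ, 0 < s.re → ∫ u in Set.Ioi (0 : ℝ), (R u : ℂ) * cexp (-s * u) = G s) :
    Tendsto R atTop (𝓝 0) := by
  have hmeans (l : ℝ) (hl : 0 < l) := tendsto_fejer_integral_of_laplace hR hB hG hL hl
  have hmeans_neg (l : ℝ) (hl : 0 < l) :
      Tendsto (fun v ↦ ∫ u in Set.Ioi (0 : ℝ), -R u * fejer (l * (v - u))) atTop (𝓝 0) := by
    simpa [integral_neg] using (hmeans l hl).neg
  rw [Metric.tendsto_nhds]
  intro ε hε
  obtain ⟨δ, hδ, hdrop⟩ := hslow (ε / 2) (half_pos hε)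
  have hright := (tendsto_atTop_add_const_right atTop (δ / 2) tendsto_id).eventually
    (eventually_exists_lt_of_fejer hR hB hmeans (half_pos hε) (half_pos hδ))
  have hleft := (tendsto_atTop_add_const_right atTop (-(δ / 2)) tendsto_id).eventually
    (eventually_exists_lt_of_fejer hR.neg (by simpa using hB) hmeans_neg (half_pos hε)
      (half_pos hδ))
  filter_upwards [hright, hleft, hdrop,
    (tendsto_atTop_add_const_right atTop (-δ) tendsto_id).eventually
      (eventually_forall_ge_atTop.2 hdrop)]
    with v ⟨a, ha, hRa⟩ ⟨b, hb, hRb⟩ hdrop_v hdrop_b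
  simp only [id, Set.mem_Icc] at ha hb hdrop_b
  have hva := hdrop_v a ⟨by linarith, by linarith⟩
  have hbv := hdrop_b b (by linarith) v ⟨by linarith, by linarith⟩
  rw [Pi.neg_apply] at hRb
  rw [Real.dist_0_eq_abs, abs_lt]
  constructor <;> linarith

/-! ### The prime number theorem -/

/-- The relative error `ψ(e^u) / e^u - 1` in the prime number theorem, on a logarithmic scale. -/
noncomputable def psiError (u : ℝ) : ℝ := ψ (Real.exp u) * Real.exp (-u) - 1

lemma measurable_psiError : Measurable psiError :=
  ((psi_mono.measurable.comp Real.measurable_exp).mul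
    (Real.measurable_exp.comp measurable_neg)).sub_const 1

lemma psiError_add_one_mem_Icc (u : ℝ) : psiError u + 1 ∈ Set.Icc 0 (Real.log 4 + 4) := by
  rw [psiError, sub_add_cancel, Real.exp_neg, ← div_eq_mul_inv]
  exact ⟨div_nonneg (psi_nonneg _) (Real.exp_pos u).le,
    (div_le_iff₀ (Real.exp_pos u)).2 (psi_le_const_mul_self (Real.exp_pos u).le)⟩

lemma abs_psiError_le (u : ℝ) : |psiError u| ≤ Real.log 4 + 5 := by
  obtain ⟨hlow, hup⟩ := psiError_add_one_mem_Icc u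
  rw [abs_le]
  constructor <;> linarith

lemma psiError_add_one_mul_exp_le {a b : ℝ} (hab : a ≤ b) :
    (psiError a + 1) * Real.exp (-(b - a)) ≤ psiError b + 1 := by
  simp only [psiError, sub_add_cancel]
  rw [mul_assoc, ← Real.exp_add, show -a + -(b - a) = -b by ring]
  gcongr

lemma slowlyDecreasing_psiError : SlowlyDecreasing psiError := by
  intro ε hε
  have : 0 ≤ Real.log 4 := Real.log_nonneg (by norm_num)
  refine ⟨ε / (Real.log 4 + 4), by positivity, Eventually.of_forall fun a b hb ↦ ?_⟩
  obtain ⟨hlow, hup⟩ := psiError_add_one_mem_Icc a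
  have hexp : 1 - (b - a) ≤ Real.exp (-(b - a)) := by linarith [Real.add_one_le_exp (-(b - a))]
  have hdrop : (psiError a + 1) * (b - a) ≤ ε := calc
    _ ≤ (Real.log 4 + 4) * (ε / (Real.log 4 + 4)) := by
        gcongr
        exacts [sub_nonneg.2 hb.1, by linarith [hb.2]]
    _ = ε := by field_simp
  linarith [psiError_add_one_mul_exp_le hb.1, mul_le_mul_of_nonneg_left hexp hlow]

/-- The function `-ζ'/ζ(s) - 1/(s-1)`, extended continuously to the line `Re s = 1`. -/
noncomputable def zetaAux : ℂ → ℂ :=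
  ArithmeticFunction.vonMangoldt.LFunctionResidueClassAux (1 : ZMod 1)

/-- The nonvanishing of `ζ` on the line `Re s = 1` enters the proof here. -/
lemma continuousOn_zetaAux : ContinuousOn zetaAux {s | 1 ≤ s.re} :=
  ArithmeticFunction.vonMangoldt.continuousOn_LFunctionResidueClassAux (q := 1) 1

lemma LSeries_vonMangoldt_eq_zetaAux {s : ℂ} (hs : 1 < s.re) :
    LSeries (fun n ↦ (Λ n : ℂ)) s = zetaAux s + 1 / (s - 1) := by
  have hclass : (fun n : ℕ ↦ (ArithmeticFunction.vonMangoldt.residueClass (1 : ZMod 1) n : ℂ)) =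
      fun n ↦ (Λ n : ℂ) := by
    ext n
    simp [ArithmeticFunction.vonMangoldt.residueClass, Subsingleton.elim (n : ZMod 1) 1]
  rw [zetaAux, ArithmeticFunction.vonMangoldt.eqOn_LFunctionResidueClassAux
    (q := 1) (a := 1) isUnit_one hs]
  simp [hclass]

lemma isBigO_sum_vonMangoldt :
    (fun n : ℕ ↦ ∑ k ∈ Finset.Icc 1 n, Λ k) =O[atTop] fun n ↦ (n : ℝ) ^ (1 : ℝ) := by
  refine Asymptotics.IsBigO.of_bound (Real.log 4 + 4) (Eventually.of_forall fun n ↦ ?_)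
  have hpsi : ∑ k ∈ Finset.Icc 1 n, Λ k = ψ n := by
    rw [psi, Nat.floor_natCast]; rfl
  rw [hpsi, Real.rpow_one, Real.norm_of_nonneg (psi_nonneg _),
    Real.norm_of_nonneg n.cast_nonneg]
  exact psi_le_const_mul_self n.cast_nonneg

lemma integrableOn_psiError_mul_exp {s : ℂ} (hs : 0 < s.re) :
    IntegrableOn (fun u : ℝ ↦ (psiError u : ℂ) * cexp (-s * u)) (Set.Ioi 0) :=
  (integrableOn_exp_mul_complex_Ioi (a := -s) (by simpa using hs) 0).bdd_mul
    (measurable_ofReal.comp measurable_psiError).aestronglyMeasurable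
    (Eventually.of_forall fun u ↦ by simpa using abs_psiError_le u)

lemma LSeries_vonMangoldt_eq_mul_integral {s : ℂ} (hs : 0 < s.re) :
    LSeries (fun n ↦ (Λ n : ℂ)) (1 + s) = (1 + s) *
      ∫ u in Set.Ioi (0 : ℝ), ((psiError u : ℂ) * cexp (-s * u) + cexp (-s * u)) := by
  rw [LSeries_eq_mul_integral_of_nonneg (fun n ↦ Λ n) zero_le_one
    (by simpa using hs : (1 : ℝ) < (1 + s).re) isBigO_sum_vonMangoldt
    (fun n ↦ ArithmeticFunction.vonMangoldt_nonneg), ← Real.exp_zero, ← integral_comp_exp_Ioi]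
  congr 2 with u
  have hne : (Real.exp u : ℂ) ≠ 0 := by exact_mod_cast (Real.exp_pos u).ne'
  have hpsi : ∑ k ∈ Finset.Icc 1 ⌊Real.exp u⌋₊, (Λ k : ℂ) = (ψ (Real.exp u) : ℂ) := by
    rw [psi]; push_cast; rfl
  have hpow : (Real.exp u : ℂ) ^ (-(1 + s + 1)) =
      cexp (-(u : ℂ)) * cexp (-(u : ℂ)) * cexp (-s * u) := by
    rw [cpow_def_of_ne_zero hne, ← ofReal_log (Real.exp_pos u).le, Real.log_exp,
      ← Complex.exp_add, ← Complex.exp_add]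
    ring_nf
  have hcancel : cexp (u : ℂ) * cexp (-(u : ℂ)) = 1 := by rw [← Complex.exp_add]; simp
  rw [hpsi, hpow, psiError, real_smul]
  push_cast
  linear_combination (ψ (Real.exp u) : ℂ) * cexp (-(u : ℂ)) * cexp (-s * u) * hcancel

lemma integral_psiError_mul_exp {s : ℂ} (hs : 0 < s.re) :
    ∫ u in Set.Ioi (0 : ℝ), (psiError u : ℂ) * cexp (-s * u) =
      (zetaAux (1 + s) - 1) / (1 + s) := by
  have hs0 : s ≠ 0 := by rintro rfl; simp at hs
  have hs1 : 1 + s ≠ 0 := fun h ↦ by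
    have := congrArg re h
    simp only [add_re, one_re, zero_re] at this
    linarith
  have hneg : (-s).re < 0 := by simpa using hs
  have h := LSeries_vonMangoldt_eq_mul_integral hs
  rw [LSeries_vonMangoldt_eq_zetaAux (by simpa using hs),
    integral_add (integrableOn_psiError_mul_exp hs) (integrableOn_exp_mul_complex_Ioi hneg 0),
    integral_exp_mul_complex_Ioi hneg 0] at h
  simp only [ofReal_zero, mul_zero, Complex.exp_zero, add_sub_cancel_left] at h
  rw [eq_div_iff hs1]
  field_simp at h ⊢
  refine mul_left_cancel₀ hs0 ?_
  linear_combination -h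

lemma tendsto_psiError : Tendsto psiError atTop (𝓝 0) := by
  refine slowlyDecreasing_psiError.tendsto_zero_of_laplace measurable_psiError abs_psiError_le
    (G := fun s ↦ (zetaAux (1 + s) - 1) / (1 + s)) ?_ fun s hs ↦ integral_psiError_mul_exp hs
  refine ((continuousOn_zetaAux.comp (by fun_prop) fun s hs ↦ by simpa using hs).sub
    continuousOn_const).div (by fun_prop) fun s hs h ↦ ?_
  have := congrArg re h
  simp only [add_re, one_re, zero_re, Set.mem_ofPred_eq] at this hs
  linarith

/-- The **prime number theorem** for Chebyshev's function `ψ`. -/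
theorem tendsto_psi_div_self : Tendsto (fun x ↦ ψ x / x) atTop (𝓝 1) := by
  have h := (tendsto_psiError.comp Real.tendsto_log_atTop).add_const 1
  rw [zero_add] at h
  refine h.congr' ?_
  filter_upwards [eventually_gt_atTop 0] with x hx
  simp [psiError, Real.exp_log hx, Real.exp_neg, div_eq_mul_inv]

/-! ### Integers and prime powers composed of the primes of a set -/

open scoped Classical in
/-- The indicator function of the positive integers all of whose prime divisors lie in `P`. -/
noncomputable def smoothIndicator (P : Set ℕ) : ArithmeticFunction ℝ :=
  ⟨fun n ↦ if 0 < n ∧ ∀ p : ℕ, p.Prime → p ∣ n → p ∈ P then 1 else 0, by simp⟩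

section SmoothIndicator

variable {P : Set ℕ}

open scoped Classical in
lemma smoothIndicator_apply (P : Set ℕ) (n : ℕ) :
    smoothIndicator P n = if 0 < n ∧ ∀ p : ℕ, p.Prime → p ∣ n → p ∈ P then 1 else 0 := rfl

lemma smoothIndicator_nonneg (P : Set ℕ) (n : ℕ) : 0 ≤ smoothIndicator P n := by
  rw [smoothIndicator_apply]; split_ifs <;> norm_num

lemma smoothIndicator_le_one (P : Set ℕ) (n : ℕ) : smoothIndicator P n ≤ 1 := by
  rw [smoothIndicator_apply]; split_ifs <;> norm_num

lemma smoothIndicator_mul (P : Set ℕ) (m n : ℕ) :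
    smoothIndicator P (m * n) = smoothIndicator P m * smoothIndicator P n := by
  simp only [smoothIndicator_apply, ← ite_and, mul_ite, mul_one, mul_zero]
  congr 1
  refine propext ⟨fun ⟨hpos, h⟩ ↦ ?_, fun ⟨⟨hn, h_n⟩, hm, h_m⟩ ↦ ?_⟩
  · exact ⟨⟨Nat.pos_of_mul_pos_left hpos, fun p hp hd ↦ h p hp (hd.mul_left m)⟩,
      Nat.pos_of_mul_pos_right hpos, fun p hp hd ↦ h p hp (hd.mul_right n)⟩
  · exact ⟨Nat.mul_pos hm hn, fun p hp hd ↦ (hp.dvd_mul.1 hd).elim (h_m p hp) (h_n p hp)⟩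

open scoped Classical in
lemma smoothIndicator_prime (P : Set ℕ) {p : ℕ} (hp : p.Prime) :
    smoothIndicator P p = if p ∈ P then 1 else 0 := by
  rw [smoothIndicator_apply]
  congr 1
  exact propext ⟨fun h ↦ h.2 p hp dvd_rfl,
    fun h ↦ ⟨hp.pos, fun q hq hd ↦ ((Nat.prime_dvd_prime_iff_eq hq hp).1 hd) ▸ h⟩⟩

lemma smoothIndicator_eq_one {y : ℝ} (hPy : ∀ p : ℕ, p.Prime → (p : ℝ) ≤ y → p ∈ P)
    {n : ℕ} (hn : 0 < n) (hny : (n : ℝ) ≤ y) : smoothIndicator P n = 1 := by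
  rw [smoothIndicator_apply, if_pos]
  exact ⟨hn, fun p hp hd ↦ hPy p hp (le_trans (by exact_mod_cast Nat.le_of_dvd hn hd) hny)⟩

lemma sum_smoothIndicator_mul_mem_Icc (P : Set ℕ) {s : Finset ℕ} {b : ℕ → ℝ}
    (hb : ∀ n ∈ s, 0 ≤ b n) :
    ∑ n ∈ s, smoothIndicator P n * b n ∈ Set.Icc 0 (∑ n ∈ s, b n) :=
  ⟨Finset.sum_nonneg fun n hn ↦ mul_nonneg (smoothIndicator_nonneg P n) (hb n hn),
    Finset.sum_le_sum fun n hn ↦ mul_le_of_le_one_left (hb n hn) (smoothIndicator_le_one P n)⟩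

end SmoothIndicator

section SmoothIn

variable {P : Set ℕ} {x : ℝ}

lemma smoothIn_eq_sum (hx : 0 ≤ x) (P : Set ℕ) :
    (smoothIn x P : ℝ) = ∑ n ∈ Finset.Ioc 0 ⌊x⌋₊, smoothIndicator P n := by
  classical
  have h : {n : ℕ | 0 < n ∧ (n : ℝ) ≤ x ∧ ∀ p : ℕ, p.Prime → p ∣ n → p ∈ P} =
      ↑((Finset.Ioc 0 ⌊x⌋₊).filter fun n ↦ 0 < n ∧ ∀ p : ℕ, p.Prime → p ∣ n → p ∈ P) := by
    ext n
    simp only [Set.mem_ofPred_eq, Finset.coe_filter, Finset.mem_Ioc, Nat.le_floor_iff hx]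
    tauto
  rw [smoothIn, h, Set.ncard_coe_finset, Finset.card_filter]
  push_cast
  rfl

lemma smoothIn_le (hx : 0 ≤ x) (P : Set ℕ) : (smoothIn x P : ℝ) ≤ x := by
  rw [smoothIn_eq_sum hx]
  calc _ ≤ ∑ _ ∈ Finset.Ioc 0 ⌊x⌋₊, (1 : ℝ) :=
        Finset.sum_le_sum fun n _ ↦ smoothIndicator_le_one P n
    _ = ⌊x⌋₊ := by simp
    _ ≤ x := Nat.floor_le hx

lemma abs_smoothIn_sub_le {y : ℝ} (hPy : ∀ p : ℕ, p.Prime → (p : ℝ) ≤ y → p ∈ P) (hx : 0 ≤ x)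
    (hxy : x ≤ y) : |(smoothIn x P : ℝ) - x| ≤ 1 := by
  have hfloor : (smoothIn x P : ℝ) = ⌊x⌋₊ := by
    rw [smoothIn_eq_sum hx, Finset.sum_congr rfl (g := fun _ ↦ (1 : ℝ))]
    · simp
    · intro n hn
      rw [Finset.mem_Ioc, Nat.le_floor_iff hx] at hn
      exact smoothIndicator_eq_one hPy hn.1 (hn.2.trans hxy)
  rw [hfloor, abs_le]
  constructor <;> linarith [Nat.floor_le hx, Nat.lt_floor_add_one x]

lemma smoothIndicator_mul_log_eq (P : Set ℕ) (n : ℕ) :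
    smoothIndicator P n * Real.log n =
      (ArithmeticFunction.pmul (smoothIndicator P) Λ * smoothIndicator P) n := by
  rw [ArithmeticFunction.mul_apply, ← ArithmeticFunction.vonMangoldt_sum, Finset.mul_sum,
    Nat.sum_divisorsAntidiagonal
      (f := fun a b ↦ ArithmeticFunction.pmul (smoothIndicator P) Λ a * smoothIndicator P b)]
  refine Finset.sum_congr rfl fun d hd ↦ ?_
  have hsplit : smoothIndicator P n = smoothIndicator P d * smoothIndicator P (n / d) := by
    rw [← smoothIndicator_mul, Nat.mul_div_cancel' (Nat.dvd_of_mem_divisors hd)]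
  rw [hsplit, ArithmeticFunction.pmul_apply]
  ring

lemma sum_smoothIndicator_mul_log (P : Set ℕ) (hx : 0 ≤ x) :
    ∑ n ∈ Finset.Ioc 0 ⌊x⌋₊, smoothIndicator P n * Real.log n =
      ∑ d ∈ Finset.Ioc 0 ⌊x⌋₊, smoothIndicator P d * Λ d * smoothIn (x / d) P := by
  simp_rw [smoothIndicator_mul_log_eq, ArithmeticFunction.sum_Ioc_mul_eq_sum_sum,
    ArithmeticFunction.pmul_apply]
  refine Finset.sum_congr rfl fun d _ ↦ ?_
  rw [smoothIn_eq_sum (by positivity), Nat.floor_div_natCast]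

lemma log_sub_log_nonneg_of_mem_Ioc (hx : 0 ≤ x) {n : ℕ} (hn : n ∈ Finset.Ioc 0 ⌊x⌋₊) :
    0 ≤ Real.log x - Real.log n := by
  rw [Finset.mem_Ioc, Nat.le_floor_iff hx] at hn
  exact sub_nonneg.2 (Real.log_le_log (by exact_mod_cast hn.1) hn.2)

lemma sum_log_eq_log_factorial (N : ℕ) :
    ∑ n ∈ Finset.Ioc 0 N, Real.log n = Real.log N.factorial := by
  induction N with
  | zero => simp
  | succ n ih =>
    rw [Finset.sum_Ioc_succ_top n.zero_le, ih, Nat.factorial_succ, Nat.cast_mul,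
      Real.log_mul (by positivity) (by positivity), add_comm]

lemma sum_log_sub_log_le (hx : 1 ≤ x) :
    ∑ n ∈ Finset.Ioc 0 ⌊x⌋₊, (Real.log x - Real.log n) ≤ x := by
  set N := ⌊x⌋₊
  have hN1 : 1 ≤ N := (Nat.one_le_floor_iff x).2 hx
  have hN0 : (0 : ℝ) < N := by exact_mod_cast hN1
  have hstirling : N * Real.log N - N ≤ Real.log N.factorial := by
    have hlogN : 0 ≤ Real.log N := Real.log_natCast_nonneg N
    have hlogpi : 0 ≤ Real.log (2 * Real.pi) :=
      Real.log_nonneg (by linarith [Real.pi_gt_three])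
    linarith [Stirling.le_log_factorial_stirling (n := N) (by omega)]
  have hlog : N * (Real.log x - Real.log N) ≤ x - N := by
    rw [← Real.log_div (by positivity) hN0.ne']
    calc N * Real.log (x / N) ≤ N * (x / N - 1) := by
          gcongr
          exact Real.log_le_sub_one_of_pos (by positivity)
      _ = x - N := by field_simp
  rw [Finset.sum_sub_distrib, sum_log_eq_log_factorial, Finset.sum_const, Nat.card_Ioc,
    nsmul_eq_mul, tsub_zero]
  linarith

/-- Chebyshev's approximate functional equation: evaluate `∑ log n` over the integers `n ≤ x`
composed of primes of `P` in two ways, once with `log n ≈ log x` and once with `log = Λ * 1`. -/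
lemma abs_smoothIn_mul_log_sub_le (P : Set ℕ) (hx : 1 ≤ x) :
    |smoothIn x P * Real.log x -
      ∑ d ∈ Finset.Ioc 0 ⌊x⌋₊, smoothIndicator P d * Λ d * smoothIn (x / d) P| ≤ x := by
  have hx0 : 0 ≤ x := by linarith
  rw [← sum_smoothIndicator_mul_log P hx0, smoothIn_eq_sum hx0, Finset.sum_mul,
    ← Finset.sum_sub_distrib]
  simp_rw [← mul_sub]
  obtain ⟨hnonneg, hle⟩ := sum_smoothIndicator_mul_mem_Icc P
    fun n hn ↦ log_sub_log_nonneg_of_mem_Ioc hx0 hn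
  rw [abs_of_nonneg hnonneg]
  exact hle.trans (sum_log_sub_log_le hx)

end SmoothIn

section PsiIn

variable {P : Set ℕ} {x : ℝ}

/-- Chebyshev's function `ψ` restricted to prime powers composed of primes of `P`. -/
noncomputable def psiIn (P : Set ℕ) (x : ℝ) : ℝ :=
  ∑ n ∈ Finset.Ioc 0 ⌊x⌋₊, smoothIndicator P n * Λ n

/-- Chebyshev's function `θ` restricted to the primes of `P`. -/
noncomputable def thetaIn (P : Set ℕ) (x : ℝ) : ℝ :=
  ∑ p ∈ Finset.Ioc 0 ⌊x⌋₊ with p.Prime, smoothIndicator P p * Real.log p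

/-- The proportion of the primes up to `x` that lie in `P`. -/
noncomputable def primeRatio (P : Set ℕ) (x : ℝ) : ℝ :=
  {p : ℕ | p ∈ P ∧ (p : ℝ) ≤ x}.ncard / primePi x

lemma psiIn_nonneg (P : Set ℕ) (x : ℝ) : 0 ≤ psiIn P x :=
  (sum_smoothIndicator_mul_mem_Icc P fun _ _ ↦ ArithmeticFunction.vonMangoldt_nonneg).1

lemma psiIn_le (P : Set ℕ) (hx : 0 ≤ x) : psiIn P x ≤ (Real.log 4 + 4) * x :=
  (sum_smoothIndicator_mul_mem_Icc P fun _ _ ↦ ArithmeticFunction.vonMangoldt_nonneg).2.trans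
    (psi_le_const_mul_self hx)

lemma monotone_psiIn (P : Set ℕ) : Monotone (psiIn P) := fun _ _ hab ↦
  Finset.sum_le_sum_of_subset_of_nonneg
    (Finset.Ioc_subset_Ioc_right (Nat.floor_le_floor hab)) fun n _ _ ↦
    mul_nonneg (smoothIndicator_nonneg P n) ArithmeticFunction.vonMangoldt_nonneg

lemma ncard_eq_sum_smoothIndicator (hP : ∀ p ∈ P, p.Prime) (hx : 0 ≤ x) :
    ({p : ℕ | p ∈ P ∧ (p : ℝ) ≤ x}.ncard : ℝ) =
      ∑ p ∈ Finset.Ioc 0 ⌊x⌋₊ with p.Prime, smoothIndicator P p := by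
  classical
  have h : {p : ℕ | p ∈ P ∧ (p : ℝ) ≤ x} =
      ↑(((Finset.Ioc 0 ⌊x⌋₊).filter Nat.Prime).filter fun p ↦ p ∈ P) := by
    ext p
    simp only [Set.mem_ofPred_eq, Finset.coe_filter, Finset.mem_filter, Finset.mem_Ioc,
      Nat.le_floor_iff hx]
    exact ⟨fun h ↦ ⟨⟨⟨(hP p h.1).pos, h.2⟩, hP p h.1⟩, h.1⟩, fun h ↦ ⟨h.2, h.1.1.2⟩⟩
  rw [h, Set.ncard_coe_finset, Finset.card_filter]
  push_cast
  exact Finset.sum_congr rfl fun p hp ↦ (smoothIndicator_prime P (Finset.mem_filter.1 hp).2).symm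

lemma primePi_eq_card (hx : 0 ≤ x) : primePi x = ((Finset.Ioc 0 ⌊x⌋₊).filter Nat.Prime).card := by
  rw [← Set.ncard_coe_finset, primePi]
  congr 1
  ext p
  simp only [Set.mem_ofPred_eq, Finset.coe_filter, Finset.mem_Ioc, Nat.le_floor_iff hx]
  exact ⟨fun h ↦ ⟨⟨h.1.pos, h.2⟩, h.1⟩, fun h ↦ ⟨h.2, h.1.2⟩⟩

lemma primePi_eq_primeCounting (hx : 0 ≤ x) : primePi x = Nat.primeCounting ⌊x⌋₊ := by
  rw [primePi_eq_card hx, Nat.primeCounting, Nat.primeCounting', Nat.count_eq_card_filter_range]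
  congr 1
  ext p
  simp only [Finset.mem_filter, Finset.mem_Ioc, Finset.mem_range, Nat.lt_succ_iff]
  exact ⟨fun h ↦ ⟨h.1.2, h.2⟩, fun h ↦ ⟨⟨h.2.pos, h.1⟩, h.2⟩⟩

lemma primePi_pos (hx : 2 ≤ x) : 0 < primePi x := by
  rw [primePi_eq_primeCounting (by linarith), Nat.pos_iff_ne_zero, Ne,
    Nat.primeCounting_eq_zero_iff, not_le]
  exact Nat.le_floor hx

lemma monotone_ncard_natCast_le (P : Set ℕ) :
    Monotone fun x : ℝ ↦ {p : ℕ | p ∈ P ∧ (p : ℝ) ≤ x}.ncard := fun _ b hab ↦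
  Set.ncard_le_ncard (fun _ hp ↦ ⟨hp.1, hp.2.trans hab⟩)
    ((Set.finite_Iic ⌊b⌋₊).subset fun _ hp ↦ Nat.le_floor hp.2)

lemma monotone_primePi : Monotone primePi := monotone_ncard_natCast_le {p | p.Prime}

lemma ncard_le_primePi (hP : ∀ p ∈ P, p.Prime) (x : ℝ) :
    {p : ℕ | p ∈ P ∧ (p : ℝ) ≤ x}.ncard ≤ primePi x :=
  Set.ncard_le_ncard (fun p hp ↦ ⟨hP p hp.1, hp.2⟩)
    ((Set.finite_Iic ⌊x⌋₊).subset fun _ hp ↦ Nat.le_floor hp.2)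

lemma primeRatio_nonneg (P : Set ℕ) (x : ℝ) : 0 ≤ primeRatio P x := by
  unfold primeRatio; positivity

lemma primeRatio_le_one (hP : ∀ p ∈ P, p.Prime) (x : ℝ) : primeRatio P x ≤ 1 :=
  div_le_one_of_le₀ (by exact_mod_cast ncard_le_primePi hP x) (by positivity)

lemma measurable_primeRatio (P : Set ℕ) : Measurable (primeRatio P) :=
  (measurable_from_top.comp (monotone_ncard_natCast_le P).measurable).div
    (measurable_from_top.comp monotone_primePi.measurable)

lemma ncard_eq_primePi {y : ℝ} (hP : ∀ p ∈ P, p.Prime)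
    (hPy : ∀ p : ℕ, p.Prime → (p : ℝ) ≤ y → p ∈ P) (hxy : x ≤ y) :
    {p : ℕ | p ∈ P ∧ (p : ℝ) ≤ x}.ncard = primePi x := by
  rw [primePi]
  congr 1
  ext p
  exact ⟨fun h ↦ ⟨hP p h.1, h.2⟩, fun h ↦ ⟨hPy p h.1 (h.2.trans hxy), h.2⟩⟩

lemma primeRatio_eq_one {y : ℝ} (hP : ∀ p ∈ P, p.Prime)
    (hPy : ∀ p : ℕ, p.Prime → (p : ℝ) ≤ y → p ∈ P) (hx : 2 ≤ x) (hxy : x ≤ y) :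
    primeRatio P x = 1 := by
  rw [primeRatio, ncard_eq_primePi hP hPy hxy]
  exact div_self (by exact_mod_cast (primePi_pos hx).ne')

lemma primeRatio_mul_primePi (hP : ∀ p ∈ P, p.Prime) (hx : 0 ≤ x) :
    primeRatio P x * primePi x = ∑ p ∈ Finset.Ioc 0 ⌊x⌋₊ with p.Prime, smoothIndicator P p := by
  rw [← ncard_eq_sum_smoothIndicator hP hx, primeRatio]
  refine div_mul_cancel_of_imp fun h ↦ ?_
  have hle := ncard_le_primePi hP x
  rw [Nat.cast_eq_zero.1 h] at hle
  exact_mod_cast Nat.le_zero.1 hle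

lemma abs_psiIn_sub_thetaIn_le (P : Set ℕ) (x : ℝ) : |psiIn P x - thetaIn P x| ≤ ψ x - θ x := by
  have hsplit : psiIn P x - thetaIn P x =
      ∑ n ∈ Finset.Ioc 0 ⌊x⌋₊ with ¬ n.Prime, smoothIndicator P n * Λ n := by
    rw [psiIn, ← Finset.sum_filter_add_sum_filter_not _ Nat.Prime, thetaIn, sub_eq_iff_eq_add']
    congr 1
    exact Finset.sum_congr rfl fun p hp ↦ by
      rw [ArithmeticFunction.vonMangoldt_apply_prime (Finset.mem_filter.1 hp).2]
  obtain ⟨hnonneg, hle⟩ := sum_smoothIndicator_mul_mem_Icc P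
    (s := (Finset.Ioc 0 ⌊x⌋₊).filter fun n ↦ ¬ n.Prime)
    fun n _ ↦ ArithmeticFunction.vonMangoldt_nonneg
  rwa [hsplit, abs_of_nonneg hnonneg, psi_sub_theta_eq_sum_not_prime]

lemma abs_thetaIn_sub_primeRatio_mul_le (hP : ∀ p ∈ P, p.Prime) (hx : 0 ≤ x) :
    |thetaIn P x - primeRatio P x * (primePi x * Real.log x)| ≤
      primePi x * Real.log x - θ x := by
  have hthetaIn : primeRatio P x * (primePi x * Real.log x) - thetaIn P x =
      ∑ p ∈ Finset.Ioc 0 ⌊x⌋₊ with p.Prime, smoothIndicator P p * (Real.log x - Real.log p) := by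
    rw [← mul_assoc, primeRatio_mul_primePi hP hx, thetaIn, Finset.sum_mul,
      ← Finset.sum_sub_distrib]
    exact Finset.sum_congr rfl fun p _ ↦ by ring
  have htheta : primePi x * Real.log x - θ x =
      ∑ p ∈ Finset.Ioc 0 ⌊x⌋₊ with p.Prime, (Real.log x - Real.log p) := by
    rw [Finset.sum_sub_distrib, Finset.sum_const, ← primePi_eq_card hx, nsmul_eq_mul, theta]
  obtain ⟨hnonneg, hle⟩ := sum_smoothIndicator_mul_mem_Icc P
    (s := (Finset.Ioc 0 ⌊x⌋₊).filter Nat.Prime)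
    fun p hp ↦ log_sub_log_nonneg_of_mem_Ioc hx (Finset.mem_of_mem_filter p hp)
  rwa [abs_sub_comm, hthetaIn, abs_of_nonneg hnonneg, htheta]

lemma abs_psiIn_sub_primeRatio_mul_le (hP : ∀ p ∈ P, p.Prime) (hx : 0 ≤ x) :
    |psiIn P x - primeRatio P x * x| ≤
      (ψ x - θ x) + (primePi x * Real.log x - θ x) + |primePi x * Real.log x - x| := by
  have hratio : |primeRatio P x * (primePi x * Real.log x) - primeRatio P x * x| ≤
      |primePi x * Real.log x - x| := by
    rw [← mul_sub, abs_mul, abs_of_nonneg (primeRatio_nonneg P x)]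
    exact mul_le_of_le_one_left (abs_nonneg _) (primeRatio_le_one hP x)
  calc |psiIn P x - primeRatio P x * x|
      ≤ |psiIn P x - thetaIn P x| + |thetaIn P x - primeRatio P x * (primePi x * Real.log x)| +
        |primeRatio P x * (primePi x * Real.log x) - primeRatio P x * x| :=
        (abs_sub_le _ (primeRatio P x * (primePi x * Real.log x)) _).trans
          (add_le_add_left (abs_sub_le _ _ _) _)
    _ ≤ _ := add_le_add (add_le_add (abs_psiIn_sub_thetaIn_le P x)
        (abs_thetaIn_sub_primeRatio_mul_le hP hx)) hratio

end PsiIn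

lemma tendsto_psi_sub_theta_div : Tendsto (fun x ↦ (ψ x - θ x) / x) atTop (𝓝 0) := by
  have hsqrt : Real.sqrt =o[atTop] fun x : ℝ ↦ x := by
    refine (Asymptotics.isLittleO_iff_tendsto' ?_).2 ?_
    · filter_upwards [eventually_gt_atTop 0] with x hx h using absurd h hx.ne'
    · simp_rw [Real.sqrt_div_self]
      exact Real.tendsto_sqrt_atTop.inv_tendsto_atTop
  exact (isBigO_psi_sub_theta_sqrt.trans_isLittleO hsqrt).tendsto_div_nhds_zero

lemma tendsto_primePi_mul_log_sub_theta_div :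
    Tendsto (fun x ↦ (primePi x * Real.log x - θ x) / x) atTop (𝓝 0) := by
  have herror : (fun x : ℝ ↦ x / Real.log x ^ 2 * Real.log x) =o[atTop] fun x : ℝ ↦ x := by
    have hinv : Tendsto (fun x : ℝ ↦ (Real.log x)⁻¹) atTop (𝓝 0) :=
      Real.tendsto_log_atTop.inv_tendsto_atTop
    refine ((Asymptotics.isBigO_refl (fun x : ℝ ↦ x) atTop).mul_isLittleO
      ((Asymptotics.isLittleO_one_iff ℝ).2 hinv)).congr' ?_
      (Eventually.of_forall fun x ↦ mul_one x)
    filter_upwards [eventually_gt_atTop 1] with x hx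
    have := Real.log_pos hx
    field_simp
  refine ((primeCounting_sub_theta_div_log_isBigO.mul (Asymptotics.isBigO_refl Real.log atTop)
    ).trans_isLittleO herror).tendsto_div_nhds_zero.congr' ?_
  filter_upwards [eventually_gt_atTop 1] with x hx
  have := Real.log_pos hx
  rw [primePi_eq_primeCounting (by linarith)]
  field_simp

lemma tendsto_primePi_mul_log_sub_self_div :
    Tendsto (fun x ↦ (primePi x * Real.log x - x) / x) atTop (𝓝 0) := by
  have h := (tendsto_primePi_mul_log_sub_theta_div.sub tendsto_psi_sub_theta_div).add
    (tendsto_psi_div_self.sub_const 1)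
  rw [sub_zero, sub_self, add_zero] at h
  refine h.congr' ?_
  filter_upwards [eventually_gt_atTop 0] with x hx
  field_simp
  ring

lemma eventually_abs_psiIn_sub_primeRatio_mul_le {η : ℝ} (hη : 0 < η) :
    ∀ᶠ x in atTop, ∀ P : Set ℕ, (∀ p ∈ P, p.Prime) →
      |psiIn P x - primeRatio P x * x| ≤ η * x := by
  have herror : Tendsto (fun x ↦ (ψ x - θ x) / x + (primePi x * Real.log x - θ x) / x +
      |(primePi x * Real.log x - x) / x|) atTop (𝓝 0) := by
    simpa using (tendsto_psi_sub_theta_div.add tendsto_primePi_mul_log_sub_theta_div).add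
      tendsto_primePi_mul_log_sub_self_div.abs
  filter_upwards [herror.eventually_le_const hη, eventually_gt_atTop 0] with x hx hx0 P hP
  rw [abs_div, abs_of_pos hx0, ← add_div, ← add_div, div_le_iff₀ hx0] at hx
  exact (abs_psiIn_sub_primeRatio_mul_le hP hx0.le).trans hx

/-! ### Abel summation -/

section AbelSummation

variable {ι : Type*} {s : Finset ι} {α τ : ι → ℝ} {f g χ : ℝ → ℝ} {a b e : ℝ} {K : NNReal}

lemma sum_filter_le_mul_eq_sum_indicator (s : Finset ι) (α τ : ι → ℝ) (f : ℝ → ℝ) (t : ℝ) :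
    (∑ i ∈ s with τ i ≤ t, α i) * f t = ∑ i ∈ s, α i * (Set.Ici (τ i)).indicator f t := by
  rw [Finset.sum_filter, Finset.sum_mul]
  refine Finset.sum_congr rfl fun i _ ↦ ?_
  by_cases h : τ i ≤ t <;> simp [h]

lemma intervalIntegrable_indicator_Ici (hf : IntervalIntegrable f volume a b) (c : ℝ) :
    IntervalIntegrable ((Set.Ici c).indicator f) volume a b := by
  rw [intervalIntegrable_iff] at hf ⊢
  exact hf.indicator measurableSet_Ici

lemma integral_indicator_Ici {c : ℝ} (hc : c ∈ Set.Icc a b) (f : ℝ → ℝ) :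
    ∫ t in a..b, (Set.Ici c).indicator f t = ∫ t in c..b, f t := by
  have hinter : Set.Icc a b ∩ Set.Ici c = Set.Icc c b := by
    rw [← Set.Ici_inter_Iic, Set.inter_right_comm, Set.Ici_inter_Ici, max_eq_right hc.1,
      Set.Ici_inter_Iic]
  rw [intervalIntegral.integral_of_le (hc.1.trans hc.2), intervalIntegral.integral_of_le hc.2,
    ← integral_Icc_eq_integral_Ioc, ← integral_Icc_eq_integral_Ioc,
    setIntegral_indicator measurableSet_Ici, hinter]

lemma intervalIntegrable_sum_filter_le_mul (s : Finset ι) (α τ : ι → ℝ)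
    (hf : IntervalIntegrable f volume a b) :
    IntervalIntegrable (fun t ↦ (∑ i ∈ s with τ i ≤ t, α i) * f t) volume a b := by
  simp_rw [sum_filter_le_mul_eq_sum_indicator, ← Finset.sum_fn]
  exact .sum s fun i _ ↦ (intervalIntegrable_indicator_Ici hf (τ i)).const_mul (α i)

lemma sum_mul_integral_eq_integral_sum_filter_le_mul (hf : IntervalIntegrable f volume a b)
    (hτ : ∀ i ∈ s, τ i ∈ Set.Icc a b) :
    ∑ i ∈ s, α i * ∫ t in τ i..b, f t = ∫ t in a..b, (∑ i ∈ s with τ i ≤ t, α i) * f t := by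
  simp_rw [sum_filter_le_mul_eq_sum_indicator]
  rw [intervalIntegral.integral_finsetSum fun i _ ↦
    (intervalIntegrable_indicator_Ici hf (τ i)).const_mul (α i)]
  refine Finset.sum_congr rfl fun i hi ↦ ?_
  rw [intervalIntegral.integral_const_mul, integral_indicator_Ici (hτ i hi)]

lemma sum_mul_eq_sub_integral_sum_filter_le_mul_deriv
    (hg : AbsolutelyContinuousOnInterval g a b) (hτ : ∀ i ∈ s, τ i ∈ Set.Icc a b) :
    ∑ i ∈ s, α i * g (τ i) =
      (∑ i ∈ s, α i) * g b - ∫ t in a..b, (∑ i ∈ s with τ i ≤ t, α i) * deriv g t := by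
  rw [← sum_mul_integral_eq_integral_sum_filter_le_mul hg.intervalIntegrable_deriv hτ,
    Finset.sum_mul, ← Finset.sum_sub_distrib]
  refine Finset.sum_congr rfl fun i hi ↦ ?_
  have hsub : Set.uIcc (τ i) b ⊆ Set.uIcc a b :=
    Set.uIcc_subset_uIcc_right (Set.Icc_subset_uIcc (hτ i hi))
  rw [(hg.mono hsub).integral_deriv_eq_sub]
  ring

lemma integral_mul_eq_sub_integral_integral_mul_deriv
    (hg : AbsolutelyContinuousOnInterval g a b) (hχ : IntervalIntegrable χ volume a b) :
    ∫ t in a..b, g t * χ t =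
      (∫ t in a..b, χ t) * g b - ∫ t in a..b, (∫ r in a..t, χ r) * deriv g t := by
  have hX := hχ.absolutelyContinuousOnInterval_intervalIntegral Set.left_mem_uIcc
  have hderiv : ∫ t in a..b, g t * χ t = ∫ t in a..b, g t * deriv (fun t ↦ ∫ r in a..t, χ r) t := by
    refine intervalIntegral.integral_congr_ae ?_
    filter_upwards [hχ.ae_hasDerivAt_integral] with t ht htab
    rw [(ht (Set.uIoc_subset_uIcc htab) a Set.left_mem_uIcc).deriv]
  rw [hderiv, hg.integral_mul_deriv_eq_deriv_mul hX, intervalIntegral.integral_same, mul_zero,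
    sub_zero, mul_comm (g b)]
  simp_rw [mul_comm (deriv g _)]

lemma ae_abs_deriv_le (hg : LipschitzOnWith K g (Set.Icc a b)) :
    ∀ᵐ t, t ∈ Set.Ioc a b → |deriv g t| ≤ K := by
  filter_upwards [Measure.ae_ne volume b] with t htb ht
  exact norm_deriv_le_of_lipschitzOn (Icc_mem_nhds ht.1 (ht.2.lt_of_ne htb)) hg

lemma sum_mul_sub_integral_mul_eq (hg : AbsolutelyContinuousOnInterval g a b)
    (hχ : IntervalIntegrable χ volume a b) (hτ : ∀ i ∈ s, τ i ∈ Set.Icc a b) :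
    ∑ i ∈ s, α i * g (τ i) - ∫ t in a..b, g t * χ t =
      (∑ i ∈ s, α i - ∫ t in a..b, χ t) * g b -
        ∫ t in a..b, (∑ i ∈ s with τ i ≤ t, α i - ∫ r in a..t, χ r) * deriv g t := by
  have hcont : ContinuousOn (fun t ↦ ∫ r in a..t, χ r) (Set.uIcc a b) :=
    (hχ.absolutelyContinuousOnInterval_intervalIntegral Set.left_mem_uIcc).continuousOn
  simp_rw [sub_mul]
  rw [sum_mul_eq_sub_integral_sum_filter_le_mul_deriv hg hτ,
    integral_mul_eq_sub_integral_integral_mul_deriv hg hχ,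
    intervalIntegral.integral_sub
      (intervalIntegrable_sum_filter_le_mul s α τ hg.intervalIntegrable_deriv)
      (hg.intervalIntegrable_deriv.continuousOn_mul hcont)]
  ring

lemma abs_sum_mul_sub_integral_mul_le (hab : a ≤ b)
    (hg : LipschitzOnWith K g (Set.Icc a b)) (hχ : IntervalIntegrable χ volume a b)
    (hτ : ∀ i ∈ s, τ i ∈ Set.Icc a b)
    (he : ∀ t ∈ Set.Icc a b, |∑ i ∈ s with τ i ≤ t, α i - ∫ r in a..t, χ r| ≤ e) :
    |∑ i ∈ s, α i * g (τ i) - ∫ t in a..b, g t * χ t| ≤ e * (|g b| + K * (b - a)) := by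
  have hac : AbsolutelyContinuousOnInterval g a b :=
    LipschitzOnWith.absolutelyContinuousOnInterval (by rwa [Set.uIcc_of_le hab])
  have he0 : 0 ≤ e := (abs_nonneg _).trans (he b (Set.right_mem_Icc.2 hab))
  have hb : |∑ i ∈ s, α i - ∫ t in a..b, χ t| ≤ e := by
    simpa only [Finset.filter_true_of_mem fun i hi ↦ (hτ i hi).2] using
      he b (Set.right_mem_Icc.2 hab)
  have hintegral : |∫ t in a..b, (∑ i ∈ s with τ i ≤ t, α i - ∫ r in a..t, χ r) * deriv g t| ≤
      e * K * (b - a) := by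
    rw [← abs_of_nonneg (sub_nonneg.2 hab), ← Real.norm_eq_abs]
    refine intervalIntegral.norm_integral_le_of_norm_le_const_ae ?_
    filter_upwards [ae_abs_deriv_le hg] with t ht htab
    rw [Set.uIoc_of_le hab] at htab
    rw [Real.norm_eq_abs, abs_mul]
    exact mul_le_mul (he t (Set.Ioc_subset_Icc_self htab)) (ht htab) (abs_nonneg _) he0
  calc _ ≤ |∑ i ∈ s, α i - ∫ t in a..b, χ t| * |g b| + e * K * (b - a) := by
        rw [sum_mul_sub_integral_mul_eq hac hχ hτ, ← abs_mul]
        exact (abs_sub _ _).trans (add_le_add_right hintegral _)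
    _ ≤ e * |g b| + e * K * (b - a) := by gcongr
    _ = e * (|g b| + K * (b - a)) := by ring

end AbelSummation

/-! ### The Mertens sum of a set of primes -/

section LogDensity

variable {P : Set ℕ} {y t u : ℝ}

/-- The density of `P` among the primes on the logarithmic scale to base `y`, which is `χ_y` in
the theorem. The value `1` for negative `t` makes it a function on the whole line. -/
noncomputable def logDensity (P : Set ℕ) (y t : ℝ) : ℝ :=
  if t ≤ 1 then 1 else primeRatio P (y ^ t)

/-- The mass that the prime power `d` carries at the point `logb y d` of the logarithmic scale:
`Λ(d) / (d log y)` if `d` is composed of primes of `P`, and `0` otherwise. -/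
noncomputable def logWeight (P : Set ℕ) (y : ℝ) (d : ℕ) : ℝ :=
  smoothIndicator P d * Λ d / (d * Real.log y)

lemma measurable_logDensity (P : Set ℕ) (y : ℝ) : Measurable (logDensity P y) :=
  Measurable.ite measurableSet_Iic measurable_const
    ((measurable_primeRatio P).comp (measurable_const.pow measurable_id))

lemma logDensity_nonneg (P : Set ℕ) (y t : ℝ) : 0 ≤ logDensity P y t := by
  unfold logDensity
  split_ifs
  exacts [zero_le_one, primeRatio_nonneg P _]

lemma logDensity_le_one (hP : ∀ p ∈ P, p.Prime) (y t : ℝ) : logDensity P y t ≤ 1 := by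
  unfold logDensity
  split_ifs
  exacts [le_rfl, primeRatio_le_one hP _]

lemma logDensity_eq_primeRatio (hP : ∀ p ∈ P, p.Prime)
    (hPy : ∀ p : ℕ, p.Prime → (p : ℝ) ≤ y → p ∈ P) (hy : 1 ≤ y) (ht : 2 ≤ y ^ t) :
    logDensity P y t = primeRatio P (y ^ t) := by
  unfold logDensity
  split_ifs with h
  · refine (primeRatio_eq_one hP hPy ht ?_).symm
    simpa only [Real.rpow_one] using Real.rpow_le_rpow_of_exponent_le hy h
  · rfl

lemma div_le_logDensity (hPy : ∀ p : ℕ, p.Prime → (p : ℝ) ≤ y → p ∈ P) (hy : 2 ≤ y)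
    (hu : 1 ≤ u) (htu : t ≤ u) : (primePi y / primePi (y ^ u) : ℝ) ≤ logDensity P y t := by
  have hy1 : 1 ≤ y := by linarith
  have hle {a b : ℝ} (hab : a ≤ b) : primePi (y ^ a) ≤ primePi (y ^ b) :=
    monotone_primePi (Real.rpow_le_rpow_of_exponent_le hy1 hab)
  unfold logDensity
  split_ifs with h
  · exact div_le_one_of_le₀ (by exact_mod_cast Real.rpow_one y ▸ hle hu) (by positivity)
  · have hyt : y ≤ y ^ t := Real.self_le_rpow_of_one_le hy1 (not_le.1 h).le
    have hpos : 0 < primePi (y ^ t) := primePi_pos (hy.trans hyt)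
    have hcard : primePi y ≤ {p : ℕ | p ∈ P ∧ (p : ℝ) ≤ y ^ t}.ncard :=
      Set.ncard_le_ncard (fun p hp ↦ ⟨hPy p hp.1 hp.2, hp.2.trans hyt⟩)
        ((Set.finite_Iic ⌊y ^ t⌋₊).subset fun _ hp ↦ Nat.le_floor hp.2)
    unfold primeRatio
    gcongr
    exact hle htu

lemma intervalIntegrable_logDensity (hP : ∀ p ∈ P, p.Prime) (y a b : ℝ) :
    IntervalIntegrable (logDensity P y) volume a b :=
  (intervalIntegrable_const (c := (1 : ℝ))).mono_fun'
    (measurable_logDensity P y).aestronglyMeasurable <| ae_of_all _ fun t ↦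
      (Real.norm_of_nonneg (logDensity_nonneg P y t)).trans_le (logDensity_le_one hP y t)

lemma logWeight_nonneg (P : Set ℕ) (hy : 1 ≤ y) (d : ℕ) : 0 ≤ logWeight P y d :=
  div_nonneg (mul_nonneg (smoothIndicator_nonneg P d) ArithmeticFunction.vonMangoldt_nonneg)
    (mul_nonneg d.cast_nonneg (Real.log_nonneg hy))

lemma logb_le_iff_le_floor_rpow (hy : 1 < y) {d : ℕ} (hd : 0 < d) :
    Real.logb y d ≤ t ↔ d ≤ ⌊y ^ t⌋₊ := by
  rw [Nat.le_floor_iff (by positivity), Real.logb_le_iff_le_rpow hy (by exact_mod_cast hd)]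

lemma logb_mem_Icc (hy : 1 < y) {d : ℕ} (hd : d ∈ Finset.Ioc 0 ⌊y ^ u⌋₊) :
    Real.logb y d ∈ Set.Icc 0 u := by
  obtain ⟨hd0, hdu⟩ := Finset.mem_Ioc.1 hd
  exact ⟨Real.logb_nonneg hy (by exact_mod_cast hd0), (logb_le_iff_le_floor_rpow hy hd0).2 hdu⟩

lemma filter_logb_le_eq_Ioc (hy : 1 < y) (htu : t ≤ u) :
    (Finset.Ioc 0 ⌊y ^ u⌋₊).filter (fun d : ℕ ↦ Real.logb y d ≤ t) =
      Finset.Ioc 0 ⌊y ^ t⌋₊ := by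
  have hfloor : ⌊y ^ t⌋₊ ≤ ⌊y ^ u⌋₊ :=
    Nat.floor_le_floor (Real.rpow_le_rpow_of_exponent_le hy.le htu)
  ext d
  rw [Finset.mem_filter, Finset.mem_Ioc, Finset.mem_Ioc]
  exact ⟨fun h ↦ ⟨h.1.1, (logb_le_iff_le_floor_rpow hy h.1.1).1 h.2⟩,
    fun h ↦ ⟨⟨h.1, h.2.trans hfloor⟩, (logb_le_iff_le_floor_rpow hy h.1).2 h.2⟩⟩

lemma psiIn_div_rpow_le (P : Set ℕ) (hy : 0 < y) (t : ℝ) :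
    psiIn P (y ^ t) / y ^ t ≤ Real.log 4 + 4 := by
  rw [div_le_iff₀ (by positivity)]
  exact psiIn_le P (by positivity)

lemma sum_logWeight_eq_add_integral (P : Set ℕ) (hy : 1 < y) (ht : 0 ≤ t) :
    ∑ d ∈ Finset.Ioc 0 ⌊y ^ t⌋₊, logWeight P y d =
      psiIn P (y ^ t) / y ^ t / Real.log y + ∫ r in 0..t, psiIn P (y ^ r) / y ^ r := by
  have hy0 : 0 < y := by linarith
  have hlog := Real.log_pos hy
  have hderiv (r : ℝ) : deriv (fun r ↦ y ^ (-r)) r = -Real.log y * y ^ (-r) := by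
    rw [((hasDerivAt_neg r).const_rpow hy0).deriv]
    ring
  have hac : AbsolutelyContinuousOnInterval (fun r ↦ y ^ (-r)) 0 t :=
    ContDiffOn.absolutelyContinuousOnInterval <| ContDiff.contDiffOn <| by
      simp_rw [Real.rpow_def_of_pos hy0]
      fun_prop
  have habel := sum_mul_eq_sub_integral_sum_filter_le_mul_deriv
    (α := fun d ↦ smoothIndicator P d * Λ d) hac fun d hd ↦ logb_mem_Icc (u := t) hy hd
  have hintegrand : ∫ r in 0..t,
      (∑ d ∈ (Finset.Ioc 0 ⌊y ^ t⌋₊).filter (fun d : ℕ ↦ Real.logb y d ≤ r),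
        smoothIndicator P d * Λ d) * deriv (fun r ↦ y ^ (-r)) r =
        -Real.log y * ∫ r in 0..t, psiIn P (y ^ r) / y ^ r := by
    rw [← intervalIntegral.integral_const_mul]
    refine intervalIntegral.integral_congr fun r hr ↦ ?_
    rw [Set.uIcc_of_le ht] at hr
    rw [filter_logb_le_eq_Ioc hy hr.2, hderiv, Real.rpow_neg hy0.le, psiIn]
    ring
  have hsum : ∑ d ∈ Finset.Ioc 0 ⌊y ^ t⌋₊, smoothIndicator P d * Λ d * y ^ (-Real.logb y d) =
      Real.log y * ∑ d ∈ Finset.Ioc 0 ⌊y ^ t⌋₊, logWeight P y d := by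
    rw [Finset.mul_sum]
    refine Finset.sum_congr rfl fun d hd ↦ ?_
    have hd0 : (0 : ℝ) < d := by exact_mod_cast (Finset.mem_Ioc.1 hd).1
    rw [Real.rpow_neg hy0.le, Real.rpow_logb hy0 hy.ne' hd0, logWeight]
    field_simp
  rw [hsum, hintegrand, Real.rpow_neg hy0.le, ← psiIn] at habel
  field_simp at habel ⊢
  linarith

lemma abs_integral_le_of_forall_abs_le {f : ℝ → ℝ} {C η m : ℝ} (hm : 0 ≤ m) (ht : 0 ≤ t)
    (hf : IntervalIntegrable f volume 0 t) (hC : ∀ r, |f r| ≤ C) (hη : ∀ r, m ≤ r → |f r| ≤ η) :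
    |∫ r in 0..t, f r| ≤ C * m + η * t := by
  have hC0 : 0 ≤ C := (abs_nonneg _).trans (hC 0)
  have hη0 : 0 ≤ η := (abs_nonneg _).trans (hη m le_rfl)
  have hmt : min m t ∈ Set.Icc 0 t := ⟨le_min hm ht, min_le_right _ _⟩
  have hinit : ‖∫ r in 0..min m t, f r‖ ≤ C * |min m t - 0| :=
    intervalIntegral.norm_integral_le_of_norm_le_const fun r _ ↦ hC r
  have htail : ‖∫ r in min m t..t, f r‖ ≤ η * |t - min m t| := by
    refine intervalIntegral.norm_integral_le_of_norm_le_const fun r hr ↦ hη r ?_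
    rw [Set.uIoc_of_le hmt.2] at hr
    exact (min_lt_iff.1 hr.1).elim le_of_lt fun h ↦ absurd hr.2 h.not_ge
  rw [sub_zero, abs_of_nonneg hmt.1] at hinit
  rw [abs_of_nonneg (sub_nonneg.2 hmt.2)] at htail
  rw [← intervalIntegral.integral_add_adjacent_intervals (b := min m t)
    (hf.mono_set (Set.uIcc_subset_uIcc_left (Set.Icc_subset_uIcc hmt)))
    (hf.mono_set (Set.uIcc_subset_uIcc_right (Set.Icc_subset_uIcc hmt)))]
  calc _ ≤ C * min m t + η * (t - min m t) := (abs_add_le _ _).trans (add_le_add hinit htail)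
    _ ≤ C * m + η * t := by
      gcongr
      exacts [min_le_left _ _, sub_le_self _ hmt.1]

lemma intervalIntegrable_psiIn_div_rpow (P : Set ℕ) (hy : 1 ≤ y) (a b : ℝ) :
    IntervalIntegrable (fun r ↦ psiIn P (y ^ r) / y ^ r) volume a b := by
  have hy0 : 0 < y := by linarith
  have hmono : Monotone fun r : ℝ ↦ psiIn P (y ^ r) := fun _ _ h ↦
    monotone_psiIn P (Real.rpow_le_rpow_of_exponent_le hy h)
  exact hmono.intervalIntegrable.mul_continuousOn
    ((Real.continuous_const_rpow hy0.ne').inv₀ fun r ↦ by positivity).continuousOn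

lemma abs_psiIn_div_sub_logDensity_le_const (hP : ∀ p ∈ P, p.Prime) (hy : 0 < y) (r : ℝ) :
    |psiIn P (y ^ r) / y ^ r - logDensity P y r| ≤ Real.log 4 + 5 := by
  have := div_nonneg (psiIn_nonneg P (y ^ r)) (Real.rpow_nonneg hy.le r)
  have := psiIn_div_rpow_le P hy r
  have := logDensity_nonneg P y r
  have := logDensity_le_one hP y r
  rw [abs_le]
  constructor <;> linarith

lemma abs_psiIn_div_sub_logDensity_le {η z : ℝ} (hP : ∀ p ∈ P, p.Prime)
    (hPy : ∀ p : ℕ, p.Prime → (p : ℝ) ≤ y → p ∈ P) (hy : 1 < y) (hz2 : 2 ≤ z)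
    (hz : ∀ x, z ≤ x → |psiIn P x - primeRatio P x * x| ≤ η * x) {r : ℝ}
    (hr : Real.logb y z ≤ r) : |psiIn P (y ^ r) / y ^ r - logDensity P y r| ≤ η := by
  have hzr : z ≤ y ^ r := (Real.logb_le_iff_le_rpow hy (by linarith)).1 hr
  have hyr : 0 < y ^ r := by positivity
  rw [logDensity_eq_primeRatio hP hPy hy.le (hz2.trans hzr), div_sub' hyr.ne', abs_div,
    abs_of_pos hyr, div_le_iff₀ hyr, mul_comm (y ^ r)]
  exact hz _ hzr

lemma abs_sum_logWeight_sub_integral_le {η z : ℝ} (hP : ∀ p ∈ P, p.Prime)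
    (hPy : ∀ p : ℕ, p.Prime → (p : ℝ) ≤ y → p ∈ P) (hy : 1 < y) (hz2 : 2 ≤ z)
    (hz : ∀ x, z ≤ x → |psiIn P x - primeRatio P x * x| ≤ η * x) (ht : 0 ≤ t) :
    |∑ d ∈ Finset.Ioc 0 ⌊y ^ t⌋₊, logWeight P y d - ∫ r in 0..t, logDensity P y r| ≤
      (Real.log 4 + 4) / Real.log y + (Real.log 4 + 5) * Real.logb y z + η * t := by
  have hy0 : 0 < y := by linarith
  have hψ := intervalIntegrable_psiIn_div_rpow P hy.le 0 t
  have hχ := intervalIntegrable_logDensity hP y 0 t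
  have hboundary : |psiIn P (y ^ t) / y ^ t / Real.log y| ≤ (Real.log 4 + 4) / Real.log y := by
    have := Real.log_pos hy
    rw [abs_of_nonneg (div_nonneg (div_nonneg (psiIn_nonneg P _) (by positivity)) this.le)]
    gcongr
    exact psiIn_div_rpow_le P hy0 t
  have hintegral := abs_integral_le_of_forall_abs_le (Real.logb_nonneg hy (by linarith)) ht
    (hψ.sub hχ) (abs_psiIn_div_sub_logDensity_le_const hP hy0)
    fun r ↦ abs_psiIn_div_sub_logDensity_le hP hPy hy hz2 hz
  rw [sum_logWeight_eq_add_integral P hy ht, add_sub_assoc,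
    ← intervalIntegral.integral_sub hψ hχ, add_assoc]
  exact (abs_add_le _ _).trans (add_le_add hboundary hintegral)

/-- Mertens' theorem on `∑ Λ(d) / d` is the case where `P` is the set of all primes. -/
lemma eventually_abs_sum_logWeight_sub_integral_le {U e : ℝ} (hU : 0 < U) (he : 0 < e) :
    ∀ᶠ y in atTop, ∀ P : Set ℕ, (∀ p ∈ P, p.Prime) →
      (∀ p : ℕ, p.Prime → (p : ℝ) ≤ y → p ∈ P) → ∀ t ∈ Set.Icc 0 U,
      |∑ d ∈ Finset.Ioc 0 ⌊y ^ t⌋₊, logWeight P y d - ∫ r in 0..t, logDensity P y r| ≤ e := by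
  obtain ⟨z, hz⟩ := eventually_atTop.1
    ((eventually_abs_psiIn_sub_primeRatio_mul_le (η := e / (2 * U)) (by positivity)).and
      (eventually_ge_atTop 2))
  have hlim : Tendsto (fun y ↦ (Real.log 4 + 4) / Real.log y + (Real.log 4 + 5) * Real.logb y z)
      atTop (𝓝 0) := by
    simpa only [Real.logb, mul_zero, add_zero] using (Real.tendsto_log_atTop.const_div_atTop _).add
      ((Real.tendsto_log_atTop.const_div_atTop (Real.log z)).const_mul (Real.log 4 + 5))
  filter_upwards [hlim.eventually_le_const (half_pos he), eventually_gt_atTop 1]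
    with y hsmall hy P hP hPy t ht
  calc _ ≤ (Real.log 4 + 4) / Real.log y + (Real.log 4 + 5) * Real.logb y z +
        e / (2 * U) * t :=
        abs_sum_logWeight_sub_integral_le hP hPy hy (hz z le_rfl).2
          (fun x hx ↦ (hz x hx).1 P hP) ht.1
    _ ≤ e / 2 + e / (2 * U) * U := by gcongr; exact ht.2
    _ = e := by field_simp; norm_num

end LogDensity

/-! ### The delay equation -/

section DelayEquation

lemma le_div_one_sub_of_mem_upperBounds {s : Set ℝ} {q e x : ℝ} (hs : BddAbove s) (hq0 : 0 ≤ q)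
    (hq1 : q < 1) (he : 0 ≤ e) (h : ∀ M, 0 ≤ M → M ∈ upperBounds s → q * M + e ∈ upperBounds s)
    (hx : x ∈ s) : x ≤ e / (1 - q) := by
  have hM : max (sSup s) 0 ≤ q * max (sSup s) 0 + e :=
    max_le (csSup_le ⟨x, hx⟩ <| h _ (le_max_right _ _)
      fun _ hv ↦ (le_csSup hs hv).trans (le_max_left _ _)) (by positivity)
  refine (le_csSup hs hx).trans ((le_max_left _ 0).trans ?_)
  rw [le_div_iff₀ (by linarith)]
  linarith

lemma bddAbove_image_of_mul_le_integral_add {d : ℝ → ℝ} {b δ E : ℝ} (hδ : 0 < δ) (hE : 0 ≤ E)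
    (hd : IntervalIntegrable d volume 0 b) (hnonpos : ∀ v ∈ Set.Icc 0 δ, d v ≤ 0)
    (hmul : ∀ v ∈ Set.Icc δ b, v * d v ≤ (∫ t in 0..v, d t) + E) :
    BddAbove (d '' Set.Icc 0 b) := by
  refine ⟨((∫ t in 0..b, |d t|) + E) / δ, Set.forall_mem_image.2 fun v hv ↦ ?_⟩
  have habs : 0 ≤ ∫ t in 0..b, |d t| :=
    intervalIntegral.integral_nonneg (hv.1.trans hv.2) fun t _ ↦ abs_nonneg _
  rcases le_total v δ with hvδ | hδv
  · exact (hnonpos v ⟨hv.1, hvδ⟩).trans (by positivity)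
  · have hle : ∫ t in 0..v, d t ≤ ∫ t in 0..b, |d t| :=
      ((le_abs_self _).trans (intervalIntegral.abs_integral_le_integral_abs hv.1)).trans
        (intervalIntegral.integral_mono_interval le_rfl hv.1 hv.2
          (ae_of_all _ fun t ↦ abs_nonneg _) hd.abs)
    rw [le_div_iff₀ hδ]
    rcases le_total (d v) 0 with hdv | hdv
    · nlinarith
    · nlinarith [hmul v ⟨hδv, hv.2⟩]

lemma integral_le_mul_sub_of_nonpos_of_le {d : ℝ → ℝ} {δ v M : ℝ} (hδ : 0 ≤ δ) (hδv : δ ≤ v)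
    (hd : IntervalIntegrable d volume 0 v) (hnonpos : ∀ t ∈ Set.Icc 0 δ, d t ≤ 0)
    (hdM : ∀ t ∈ Set.Icc δ v, d t ≤ M) : ∫ t in 0..v, d t ≤ M * (v - δ) := by
  have hδ0v : δ ∈ Set.uIcc 0 v := Set.Icc_subset_uIcc ⟨hδ, hδv⟩
  have hinit := hd.mono_set (Set.uIcc_subset_uIcc_left hδ0v)
  have htail := hd.mono_set (Set.uIcc_subset_uIcc_right hδ0v)
  calc ∫ t in 0..v, d t = (∫ t in 0..δ, d t) + ∫ t in δ..v, d t :=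
        (intervalIntegral.integral_add_adjacent_intervals hinit htail).symm
    _ ≤ (∫ _ in 0..δ, (0 : ℝ)) + ∫ _ in δ..v, M := add_le_add
        (intervalIntegral.integral_mono_on hδ hinit intervalIntegrable_const hnonpos)
        (intervalIntegral.integral_mono_on hδv htail intervalIntegrable_const hdM)
    _ = M * (v - δ) := by
        simp only [intervalIntegral.integral_const, smul_eq_mul]
        ring

/-- If `M` bounds `d` on `[0, b]` then the hypothesis gives `v * d v ≤ M * (v - δ) + E`, a
contraction with ratio `1 - δ / b`. -/
lemma le_of_mul_le_integral_add {d : ℝ → ℝ} {b δ E u : ℝ} (hδ : 0 < δ) (hδb : δ ≤ b) (hE : 0 ≤ E)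
    (hd : IntervalIntegrable d volume 0 b) (hnonpos : ∀ v ∈ Set.Icc 0 δ, d v ≤ 0)
    (hmul : ∀ v ∈ Set.Icc δ b, v * d v ≤ (∫ t in 0..v, d t) + E) (hu : u ∈ Set.Icc 0 b) :
    d u ≤ E * b / δ ^ 2 := by
  have hb : 0 < b := hδ.trans_le hδb
  have hq : 0 ≤ 1 - δ / b := sub_nonneg.2 ((div_le_one hb).2 hδb)
  have hcontract (M : ℝ) (hM : 0 ≤ M) (hdM : M ∈ upperBounds (d '' Set.Icc 0 b)) :
      (1 - δ / b) * M + E / δ ∈ upperBounds (d '' Set.Icc 0 b) := by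
    refine Set.forall_mem_image.2 fun v hv ↦ ?_
    rcases le_total v δ with hvδ | hδv
    · exact (hnonpos v ⟨hv.1, hvδ⟩).trans (by positivity)
    have hv0 : 0 < v := hδ.trans_le hδv
    have hint := integral_le_mul_sub_of_nonpos_of_le hδ.le hδv
      (hd.mono_set (Set.uIcc_subset_uIcc_left (Set.Icc_subset_uIcc hv))) hnonpos
      fun t ht ↦ hdM (Set.mem_image_of_mem d ⟨hδ.le.trans ht.1, ht.2.trans hv.2⟩)
    calc d v ≤ (M * (v - δ) + E) / v := by
          rw [le_div_iff₀ hv0]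
          linarith [hmul v ⟨hδv, hv.2⟩]
      _ = (1 - δ / v) * M + E / v := by field_simp
      _ ≤ (1 - δ / b) * M + E / δ := by gcongr; exact hv.2
  have hfix := le_div_one_sub_of_mem_upperBounds
    (bddAbove_image_of_mul_le_integral_add hδ hE hd hnonpos hmul) hq
    (sub_lt_self 1 (by positivity)) (by positivity) hcontract (Set.mem_image_of_mem d hu)
  exact hfix.trans_eq (by rw [sub_sub_cancel]; field_simp)

lemma abs_integral_comp_sub_mul_le {f χ : ℝ → ℝ} {v : ℝ} (hv : 0 ≤ v)
    (hf : IntervalIntegrable f volume 0 v) (hχ : ∀ t, ‖χ t‖ ≤ 1) :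
    |∫ t in 0..v, f (v - t) * χ t| ≤ ∫ t in 0..v, |f t| := by
  have hcomp : IntervalIntegrable (fun t ↦ |f (v - t)|) volume 0 v := by
    simpa using (hf.abs.comp_sub_left v).symm
  calc |∫ t in 0..v, f (v - t) * χ t| ≤ ∫ t in 0..v, |f (v - t)| :=
        intervalIntegral.norm_integral_le_of_norm_le hv (ae_of_all _ fun t _ ↦
          (norm_mul _ _).trans_le (mul_le_of_le_one_right (norm_nonneg _) (hχ t))) hcomp
    _ = ∫ t in 0..v, |f t| := by
        rw [intervalIntegral.integral_comp_sub_left (fun t ↦ |f t|), sub_self, sub_zero]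

lemma intervalIntegrable_mul_of_norm_le {f χ : ℝ → ℝ} {a b C : ℝ}
    (hf : IntervalIntegrable f volume a b) (hχ : Measurable χ)
    (hle : ∀ t ∈ Set.uIoc a b, ‖χ t‖ ≤ C) : IntervalIntegrable (fun t ↦ f t * χ t) volume a b := by
  rw [intervalIntegrable_iff] at hf ⊢
  exact hf.mul_bdd hχ.aestronglyMeasurable (ae_restrict_of_forall_mem measurableSet_uIoc hle)

lemma intervalIntegrable_of_intervalIntegrable_mul {f χ : ℝ → ℝ} {a b c : ℝ}
    (hc : 0 < c) (hχ : Measurable χ) (hle : ∀ t ∈ Set.uIoc a b, c ≤ χ t)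
    (hi : IntervalIntegrable (fun t ↦ f t * χ t) volume a b) : IntervalIntegrable f volume a b := by
  have hpos (t : ℝ) (ht : t ∈ Set.uIoc a b) : 0 < χ t := hc.trans_le (hle t ht)
  refine (intervalIntegrable_mul_of_norm_le (C := c⁻¹) hi hχ.inv fun t ht ↦ ?_).congr
    fun t ht ↦ mul_inv_cancel_right₀ (hpos t ht).ne' _
  rw [Pi.inv_apply, Real.norm_of_nonneg (inv_nonneg.2 (hpos t ht).le)]
  exact inv_anti₀ hc (hle t ht)

lemma integrableOn_Ioc_of_forall_lt {f : ℝ → ℝ} {a c C : ℝ}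
    (hint : ∀ b, b < c → IntegrableOn f (Set.Ioc a b)) (hbdd : ∀ t ∈ Set.Ioo a c, ‖f t‖ ≤ C) :
    IntegrableOn f (Set.Ioc a c) := by
  obtain ⟨b, -, hbc, hb⟩ := exists_seq_strictMono_tendsto c
  rw [integrableOn_Ioc_iff_integrableOn_Ioo]
  refine IntegrableOn.of_bound measure_Ioo_lt_top ?_ C
    (ae_restrict_of_forall_mem measurableSet_Ioo hbdd)
  exact (aecover_Ioo_of_Ioc tendsto_const_nhds hb).aestronglyMeasurable fun n ↦
    (hint _ (hbc n)).aestronglyMeasurable.mono_measure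
      (Measure.restrict_mono_measure Measure.restrict_le_self _)

end DelayEquation

/-- `σ` solves the delay equation with density `χ` on `[0, U]`, where `χ` is a measurable density
that equals `1` up to time `1` and is bounded away from `0` up to time `U`. -/
structure IsDelaySolution (U : ℝ) (χ σ : ℝ → ℝ) : Prop where
  one_lt : 1 < U
  measurable : Measurable χ
  norm_le_one : ∀ t, ‖χ t‖ ≤ 1
  eq_one : ∀ t ≤ 1, χ t = 1
  exists_le : ∃ c > 0, ∀ t ≤ U, c ≤ χ t
  sol_eq_one : ∀ u ∈ Set.Icc 0 1, σ u = 1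
  mul_sol : ∀ u ∈ Set.Ioc 1 U, u * σ u = ∫ t in 0..u, σ (u - t) * χ t

namespace IsDelaySolution

variable {U : ℝ} {χ σ : ℝ → ℝ}

lemma mul_sol_eq (h : IsDelaySolution U χ σ) {u : ℝ} (hu : u ∈ Set.Icc 0 U) :
    u * σ u = ∫ t in 0..u, σ (u - t) * χ t := by
  rcases le_or_gt u 1 with hu1 | hu1
  · have hcongr : ∫ t in 0..u, σ (u - t) * χ t = ∫ _ in 0..u, (1 : ℝ) :=
      intervalIntegral.integral_congr fun t ht ↦ by
        rw [Set.uIcc_of_le hu.1] at ht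
        rw [h.sol_eq_one (u - t) ⟨by linarith [ht.2], by linarith [ht.1]⟩,
          h.eq_one t (ht.2.trans hu1), one_mul]
    rw [hcongr, h.sol_eq_one u ⟨hu.1, hu1⟩, intervalIntegral.integral_const, smul_eq_mul, sub_zero]
  · exact h.mul_sol u ⟨hu1, hu.2⟩

lemma abs_sol_le_one_of_intervalIntegrable (h : IsDelaySolution U χ σ) {b u : ℝ}
    (hb : b ∈ Set.Icc 1 U) (hσ : IntervalIntegrable σ volume 0 b) (hu : u ∈ Set.Icc 0 b) :
    |σ u| ≤ 1 := by
  have key := le_of_mul_le_integral_add (d := fun u ↦ |σ u| - 1) zero_lt_one hb.1 le_rfl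
    (hσ.abs.sub intervalIntegrable_const)
    (fun v hv ↦ by simp only [h.sol_eq_one v hv, abs_one, sub_self, le_refl]) (fun v hv ↦ ?_) hu
  · linarith
  · have hv0 : 0 ≤ v := zero_le_one.trans hv.1
    have hσv : IntervalIntegrable σ volume 0 v :=
      hσ.mono_set (Set.uIcc_subset_uIcc_left (Set.Icc_subset_uIcc ⟨hv0, hv.2⟩))
    have hle := abs_integral_comp_sub_mul_le hv0 hσv h.norm_le_one
    rw [← h.mul_sol_eq ⟨hv0, hv.2.trans hb.2⟩, abs_mul, abs_of_nonneg hv0] at hle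
    rw [intervalIntegral.integral_sub hσv.abs intervalIntegrable_const,
      intervalIntegral.integral_const, smul_eq_mul]
    linarith

/-- The equation then reads `u * σ u = 0`, because the integral of a function that is not
integrable is `0`. -/
lemma sol_eq_zero_of_not_intervalIntegrable (h : IsDelaySolution U χ σ) {u : ℝ}
    (hu : u ∈ Set.Ioc 1 U) (hσ : ¬ IntervalIntegrable σ volume 0 u) : σ u = 0 := by
  have hu0 : 0 < u := zero_lt_one.trans hu.1
  obtain ⟨c, hc0, hc⟩ := h.exists_le
  have hmul : ¬ IntervalIntegrable (fun t ↦ σ (u - t) * χ t) volume 0 u := fun hi ↦ hσ <| by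
    have hcomp : IntervalIntegrable (fun t ↦ σ (u - t)) volume 0 u :=
      intervalIntegrable_of_intervalIntegrable_mul hc0 h.measurable (fun t ht ↦ hc t <| by
        rw [Set.uIoc_of_le hu0.le] at ht
        exact ht.2.trans hu.2) hi
    simpa using (hcomp.comp_sub_left u).symm
  have hzero := h.mul_sol u hu
  rw [intervalIntegral.integral_undef hmul] at hzero
  exact (mul_eq_zero.1 hzero).resolve_left hu0.ne'

lemma intervalIntegrable_sol (h : IsDelaySolution U χ σ) : IntervalIntegrable σ volume 0 U := by
  set S := {b : ℝ | b ∈ Set.Icc 1 U ∧ IntervalIntegrable σ volume 0 b}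
  have h1S : (1 : ℝ) ∈ S := by
    refine ⟨⟨le_rfl, h.one_lt.le⟩, (intervalIntegrable_const (c := (1 : ℝ))).congr fun t ht ↦ ?_⟩
    rw [Set.uIoc_of_le zero_le_one] at ht
    exact (h.sol_eq_one t (Set.Ioc_subset_Icc_self ht)).symm
  have hbdd : BddAbove S := ⟨U, fun b hb ↦ hb.1.2⟩
  have h1c : 1 ≤ sSup S := le_csSup hbdd h1S
  have hcU : sSup S ≤ U := csSup_le ⟨1, h1S⟩ fun b hb ↦ hb.1.2
  have hmemS {b : ℝ} (hb : b < sSup S) : ∃ a ∈ S, b < a := exists_lt_of_lt_csSup ⟨1, h1S⟩ hb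
  have hleft : IntegrableOn σ (Set.Ioc 0 (sSup S)) := by
    refine integrableOn_Ioc_of_forall_lt (C := 1) (fun b hb ↦ ?_) fun t ht ↦ ?_
    · obtain ⟨a, ⟨_, hσ⟩, hba⟩ := hmemS hb
      exact hσ.1.mono_set (Set.Ioc_subset_Ioc_right hba.le)
    · obtain ⟨a, ⟨ha, hσ⟩, hta⟩ := hmemS ht.2
      exact h.abs_sol_le_one_of_intervalIntegrable ha hσ ⟨ht.1.le, hta.le⟩
  have hright : IntegrableOn σ (Set.Ioc (sSup S) U) := by
    refine (integrableOn_zero (ε' := ℝ)).congr_fun (fun u hu ↦ ?_) measurableSet_Ioc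
    have hu1 : 1 < u := h1c.trans_lt hu.1
    exact (h.sol_eq_zero_of_not_intervalIntegrable ⟨hu1, hu.2⟩ fun hσ ↦
      hu.1.not_ge (le_csSup hbdd ⟨⟨hu1.le, hu.2⟩, hσ⟩)).symm
  rw [intervalIntegrable_iff_integrableOn_Ioc_of_le (by linarith),
    ← Set.Ioc_union_Ioc_eq_Ioc (by linarith) hcU]
  exact hleft.union hright

lemma abs_sol_le_one (h : IsDelaySolution U χ σ) {u : ℝ} (hu : u ∈ Set.Icc 0 U) : |σ u| ≤ 1 :=
  h.abs_sol_le_one_of_intervalIntegrable ⟨h.one_lt.le, le_rfl⟩ h.intervalIntegrable_sol hu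

lemma intervalIntegrable_sol_of_mem (h : IsDelaySolution U χ σ) {a b : ℝ}
    (ha : a ∈ Set.Icc 0 U) (hb : b ∈ Set.Icc 0 U) : IntervalIntegrable σ volume a b :=
  h.intervalIntegrable_sol.mono_set <|
    Set.uIcc_subset_uIcc (Set.Icc_subset_uIcc ha) (Set.Icc_subset_uIcc hb)

lemma intervalIntegrable_sol_comp_sub_mul (h : IsDelaySolution U χ σ) {u a b : ℝ}
    (ha : u - a ∈ Set.Icc 0 U) (hb : u - b ∈ Set.Icc 0 U) :
    IntervalIntegrable (fun t ↦ σ (u - t) * χ t) volume a b :=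
  intervalIntegrable_mul_of_norm_le
    (by simpa using (h.intervalIntegrable_sol_of_mem ha hb).comp_sub_left u) h.measurable
    fun t _ ↦ h.norm_le_one t

lemma intervalIntegrable_sol_add_sub_sol (h : IsDelaySolution U χ σ) {k v : ℝ} (hk : 0 ≤ k)
    (hv : v ∈ Set.Icc 0 (U - k)) : IntervalIntegrable (fun t ↦ σ (t + k) - σ t) volume 0 v := by
  obtain ⟨hv0, hvU⟩ := hv
  refine .sub ?_ (h.intervalIntegrable_sol_of_mem ⟨le_rfl, by linarith⟩ ⟨hv0, by linarith⟩)
  simpa using (h.intervalIntegrable_sol_of_mem (a := k) (b := v + k)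
    ⟨hk, by linarith⟩ ⟨by linarith, by linarith⟩).comp_add_right k

lemma mul_sol_add_sub_sol_eq (h : IsDelaySolution U χ σ) {k v : ℝ} (hk : 0 ≤ k)
    (hv : v ∈ Set.Icc 0 (U - k)) :
    v * (σ (v + k) - σ v) = (∫ t in 0..v, (σ (v - t + k) - σ (v - t)) * χ t) +
      (∫ t in v..(v + k), σ (v + k - t) * χ t) - k * σ (v + k) := by
  obtain ⟨hv0, hvU⟩ := hv
  have hU := h.one_lt
  have h0 := h.intervalIntegrable_sol_comp_sub_mul (u := v) (a := 0) (b := v)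
    ⟨by linarith, by linarith⟩ ⟨by linarith, by linarith⟩
  have h1 := h.intervalIntegrable_sol_comp_sub_mul (u := v + k) (a := 0) (b := v)
    ⟨by linarith, by linarith⟩ ⟨by linarith, by linarith⟩
  have h2 := h.intervalIntegrable_sol_comp_sub_mul (u := v + k) (a := v) (b := v + k)
    ⟨by linarith, by linarith⟩ ⟨by linarith, by linarith⟩
  have hv := h.mul_sol_eq (u := v) ⟨hv0, by linarith⟩
  have hvk := h.mul_sol_eq (u := v + k) ⟨by linarith, by linarith⟩
  rw [← intervalIntegral.integral_add_adjacent_intervals h1 h2] at hvk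
  simp_rw [sub_mul, sub_add_eq_add_sub]
  rw [intervalIntegral.integral_sub h1 h0]
  linarith

lemma mul_abs_sol_add_sub_sol_le (h : IsDelaySolution U χ σ) {k v : ℝ} (hk : 0 ≤ k)
    (hv : v ∈ Set.Icc 0 (U - k)) :
    v * |σ (v + k) - σ v| ≤ (∫ t in 0..v, |σ (t + k) - σ t|) + 2 * k := by
  obtain ⟨hv0, hvU⟩ := hv
  have hshift := h.intervalIntegrable_sol_add_sub_sol hk ⟨hv0, hvU⟩
  have hmain := abs_integral_comp_sub_mul_le hv0 hshift h.norm_le_one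
  have htail : ‖∫ t in v..(v + k), σ (v + k - t) * χ t‖ ≤ 1 * |v + k - v| := by
    refine intervalIntegral.norm_integral_le_of_norm_le_const fun t ht ↦ ?_
    rw [Set.uIoc_of_le (by linarith)] at ht
    rw [norm_mul]
    exact mul_le_one₀ (h.abs_sol_le_one ⟨by linarith [ht.2], by linarith [ht.1]⟩) (norm_nonneg _)
      (h.norm_le_one t)
  have hlast : |k * σ (v + k)| ≤ k := by
    rw [abs_mul, abs_of_nonneg hk]
    exact mul_le_of_le_one_right hk (h.abs_sol_le_one ⟨by linarith, by linarith⟩)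
  rw [Real.norm_eq_abs, add_sub_cancel_left, abs_of_nonneg hk, one_mul] at htail
  rw [← abs_of_nonneg hv0, ← abs_mul, abs_of_nonneg hv0, h.mul_sol_add_sub_sol_eq hk ⟨hv0, hvU⟩]
  rw [abs_le] at hmain htail hlast ⊢
  constructor <;> linarith

lemma abs_sol_add_sub_sol_le (h : IsDelaySolution U χ σ) {k v : ℝ} (hk : 0 ≤ k)
    (hk2 : k ≤ 1 / 2) (hv : v ∈ Set.Icc 0 (U - k)) : |σ (v + k) - σ v| ≤ 8 * U * k := by
  have hU := h.one_lt
  have hshift := h.intervalIntegrable_sol_add_sub_sol hk ⟨hv.1.trans hv.2, le_rfl⟩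
  have key := le_of_mul_le_integral_add (d := fun t ↦ |σ (t + k) - σ t|) one_half_pos
    (by linarith) (by linarith) hshift.abs (fun t ht ↦ ?_)
    (fun t ht ↦ h.mul_abs_sol_add_sub_sol_le hk ⟨by linarith [ht.1], ht.2⟩) hv
  · calc |σ (v + k) - σ v| ≤ 2 * k * (U - k) / (1 / 2) ^ 2 := key
      _ = 8 * (U - k) * k := by ring
      _ ≤ 8 * U * k := by gcongr; linarith
  · rw [h.sol_eq_one t ⟨ht.1, by linarith [ht.2]⟩,
      h.sol_eq_one (t + k) ⟨by linarith [ht.1], by linarith [ht.2]⟩, sub_self, abs_zero]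

lemma lipschitzOnWith_sol (h : IsDelaySolution U χ σ) :
    LipschitzOnWith (8 * U).toNNReal σ (Set.Icc 0 U) := by
  refine LipschitzOnWith.of_le_add_mul' _ fun a ha b hb ↦ ?_
  suffices habs : |σ a - σ b| ≤ 8 * U * dist a b by linarith [le_abs_self (σ a - σ b)]
  wlog hab : b ≤ a generalizing a b
  · rw [abs_sub_comm, dist_comm]
    exact this b hb a ha (le_of_not_ge hab)
  rw [Real.dist_eq, abs_of_nonneg (sub_nonneg.2 hab)]
  rcases le_total (a - b) (1 / 2) with hk | hk
  · simpa only [add_sub_cancel] using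
      h.abs_sol_add_sub_sol_le (sub_nonneg.2 hab) hk ⟨hb.1, by linarith [ha.2]⟩
  · calc |σ a - σ b| ≤ 1 + 1 :=
          (abs_sub _ _).trans (add_le_add (h.abs_sol_le_one ha) (h.abs_sol_le_one hb))
      _ ≤ 8 * U * (a - b) := by nlinarith [h.one_lt]

end IsDelaySolution

/-! ### Comparison with the delay equation -/

section SmoothRatio

variable {P : Set ℕ} {σ : ℝ → ℝ} {y u U e M : ℝ}

/-- The proportion of the integers up to `y ^ u` that are composed of primes of `P`, as a function
on the logarithmic scale to base `y`. -/
noncomputable def smoothRatio (P : Set ℕ) (y u : ℝ) : ℝ := smoothIn (y ^ u) P / y ^ u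

lemma abs_smoothRatio_le_one (P : Set ℕ) (hy : 0 ≤ y) (u : ℝ) : |smoothRatio P y u| ≤ 1 := by
  unfold smoothRatio
  rw [abs_of_nonneg (by positivity)]
  exact div_le_one_of_le₀ (smoothIn_le (by positivity) P) (by positivity)

lemma abs_smoothRatio_sub_one_le (hPy : ∀ p : ℕ, p.Prime → (p : ℝ) ≤ y → p ∈ P) (hy : 1 ≤ y)
    (hu : u ≤ 1) : |smoothRatio P y u - 1| ≤ 1 / y ^ u := by
  have hyu : 0 < y ^ u := by positivity
  have hle := abs_smoothIn_sub_le hPy hyu.le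
    (by simpa only [Real.rpow_one] using Real.rpow_le_rpow_of_exponent_le hy hu)
  rw [smoothRatio, div_sub_one hyu.ne', abs_div, abs_of_pos hyu]
  gcongr

lemma rpow_sub_logb (hy : 1 < y) (u : ℝ) {d : ℕ} (hd : 0 < d) :
    y ^ (u - Real.logb y d) = y ^ u / d := by
  have hy0 : 0 < y := by linarith
  rw [Real.rpow_sub hy0, Real.rpow_logb hy0 hy.ne' (by exact_mod_cast hd)]

lemma abs_mul_smoothRatio_sub_sum_le (P : Set ℕ) (hy : 1 < y) (hu : 0 ≤ u) :
    |u * smoothRatio P y u - ∑ d ∈ Finset.Ioc 0 ⌊y ^ u⌋₊,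
      logWeight P y d * smoothRatio P y (u - Real.logb y d)| ≤ 1 / Real.log y := by
  have hlog := Real.log_pos hy
  have hy0 : 0 < y := by linarith
  have hle := abs_smoothIn_mul_log_sub_le P (Real.one_le_rpow hy.le hu)
  rw [Real.log_rpow hy0] at hle
  have hsum : ∑ d ∈ Finset.Ioc 0 ⌊y ^ u⌋₊,
      logWeight P y d * smoothRatio P y (u - Real.logb y d) =
      (∑ d ∈ Finset.Ioc 0 ⌊y ^ u⌋₊, smoothIndicator P d * Λ d * smoothIn (y ^ u / d) P) /
        (y ^ u * Real.log y) := by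
    rw [Finset.sum_div]
    refine Finset.sum_congr rfl fun d hd ↦ ?_
    have hd0 : (0 : ℝ) < d := by exact_mod_cast (Finset.mem_Ioc.1 hd).1
    rw [logWeight, smoothRatio, rpow_sub_logb hy u (Finset.mem_Ioc.1 hd).1]
    field_simp
  have hratio : u * smoothRatio P y u =
      smoothIn (y ^ u) P * (u * Real.log y) / (y ^ u * Real.log y) := by
    rw [smoothRatio]
    field_simp
  rw [hsum, hratio, ← sub_div, abs_div, abs_of_pos (by positivity : 0 < y ^ u * Real.log y),
    div_le_div_iff₀ (by positivity) hlog]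
  nlinarith

lemma sum_logWeight_mul_div_le (P : Set ℕ) (hy : 1 < y) (u : ℝ) :
    ∑ d ∈ Finset.Ioc 0 ⌊y ^ u⌋₊, logWeight P y d * (d / y ^ u) ≤
      (Real.log 4 + 4) / Real.log y := by
  have hlog := Real.log_pos hy
  have hy0 : 0 < y := by linarith
  have hsum : ∑ d ∈ Finset.Ioc 0 ⌊y ^ u⌋₊, logWeight P y d * (d / y ^ u) =
      psiIn P (y ^ u) / y ^ u / Real.log y := by
    rw [psiIn, Finset.sum_div, Finset.sum_div]
    refine Finset.sum_congr rfl fun d hd ↦ ?_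
    have hd0 : (0 : ℝ) < d := by exact_mod_cast (Finset.mem_Ioc.1 hd).1
    rw [logWeight]
    field_simp
  rw [hsum]
  gcongr
  exact psiIn_div_rpow_le P hy0 u

/-- A bound `M` beyond `1` is used where `u - logb y d ≥ 1`; where `u - logb y d ≤ 1` the two
functions differ by at most `d / y ^ u`. -/
lemma abs_sum_logWeight_mul_smoothRatio_sub_le
    (hPy : ∀ p : ℕ, p.Prime → (p : ℝ) ≤ y → p ∈ P) (hy : 1 < y)
    (hσ : ∀ t ∈ Set.Icc 0 1, σ t = 1) (hM : ∀ t ∈ Set.Icc 1 u, |smoothRatio P y t - σ t| ≤ M) :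
    |∑ d ∈ Finset.Ioc 0 ⌊y ^ u⌋₊, logWeight P y d *
      (smoothRatio P y (u - Real.logb y d) - σ (u - Real.logb y d))| ≤
      (∑ d ∈ Finset.Ioc 0 ⌊y ^ (u - 1)⌋₊, logWeight P y d) * M +
        (Real.log 4 + 4) / Real.log y := by
  have hweight := logWeight_nonneg P hy.le
  have hterm (d : ℕ) (hd : d ∈ Finset.Ioc 0 ⌊y ^ u⌋₊) : |logWeight P y d *
      (smoothRatio P y (u - Real.logb y d) - σ (u - Real.logb y d))| ≤
      (if Real.logb y d ≤ u - 1 then logWeight P y d * M else 0) +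
        logWeight P y d * (d / y ^ u) := by
    obtain ⟨hτ0, hτu⟩ := logb_mem_Icc hy hd
    have hrest : 0 ≤ logWeight P y d * (d / y ^ u) := mul_nonneg (hweight d) (by positivity)
    rw [abs_mul, abs_of_nonneg (hweight d)]
    split_ifs with hcase
    · exact (mul_le_mul_of_nonneg_left (hM _ ⟨by linarith, by linarith⟩) (hweight d)).trans
        (le_add_of_nonneg_right hrest)
    · rw [zero_add, hσ _ ⟨by linarith, by linarith⟩]
      refine mul_le_mul_of_nonneg_left ?_ (hweight d)
      refine (abs_smoothRatio_sub_one_le hPy hy.le (by linarith)).trans_eq ?_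
      rw [rpow_sub_logb hy u (Finset.mem_Ioc.1 hd).1, one_div_div]
  calc _ ≤ ∑ d ∈ Finset.Ioc 0 ⌊y ^ u⌋₊,
        ((if Real.logb y d ≤ u - 1 then logWeight P y d * M else 0) +
          logWeight P y d * (d / y ^ u)) :=
        (Finset.abs_sum_le_sum_abs _ _).trans (Finset.sum_le_sum hterm)
    _ = (∑ d ∈ Finset.Ioc 0 ⌊y ^ (u - 1)⌋₊, logWeight P y d) * M +
        ∑ d ∈ Finset.Ioc 0 ⌊y ^ u⌋₊, logWeight P y d * (d / y ^ u) := by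
        rw [Finset.sum_add_distrib, ← Finset.sum_filter,
          filter_logb_le_eq_Ioc hy (sub_le_self u zero_le_one), Finset.sum_mul]
    _ ≤ _ := by gcongr; exact sum_logWeight_mul_div_le P hy u

lemma IsDelaySolution.abs_sum_logWeight_mul_sub_le (hP : ∀ p ∈ P, p.Prime) (hy : 1 < y)
    (hσ : IsDelaySolution U (logDensity P y) σ)
    (he : ∀ t ∈ Set.Icc 0 U,
      |∑ d ∈ Finset.Ioc 0 ⌊y ^ t⌋₊, logWeight P y d - ∫ r in 0..t, logDensity P y r| ≤ e)
    (hu : u ∈ Set.Icc 0 U) :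
    |∑ d ∈ Finset.Ioc 0 ⌊y ^ u⌋₊, logWeight P y d * σ (u - Real.logb y d) - u * σ u| ≤
      e * (1 + 8 * U * u) := by
  have hU := hσ.one_lt
  have hmem {t : ℝ} (ht : t ∈ Set.Icc 0 u) : u - t ∈ Set.Icc 0 U :=
    ⟨by linarith [ht.2], by linarith [ht.1, hu.2]⟩
  have hlip : LipschitzOnWith (8 * U).toNNReal (fun t ↦ σ (u - t)) (Set.Icc 0 u) :=
    .of_dist_le_mul fun a ha b hb ↦
      (hσ.lipschitzOnWith_sol.dist_le_mul _ (hmem ha) _ (hmem hb)).trans_eq (by rw [dist_sub_left])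
  have hle := abs_sum_mul_sub_integral_mul_le hu.1 hlip
    (intervalIntegrable_logDensity hP y 0 u) (α := logWeight P y) (e := e)
    (fun d hd ↦ logb_mem_Icc hy hd) fun t ht ↦ by
      rw [filter_logb_le_eq_Ioc hy ht.2]
      exact he t ⟨ht.1, ht.2.trans hu.2⟩
  rwa [sub_self, hσ.sol_eq_one 0 ⟨le_rfl, zero_le_one⟩, abs_one, sub_zero,
    Real.coe_toNNReal _ (by linarith), ← hσ.mul_sol_eq hu] at hle

lemma sum_logWeight_le {t : ℝ} (hP : ∀ p ∈ P, p.Prime) (ht : 0 ≤ t)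
    (he : |∑ d ∈ Finset.Ioc 0 ⌊y ^ t⌋₊, logWeight P y d - ∫ r in 0..t, logDensity P y r| ≤ e) :
    ∑ d ∈ Finset.Ioc 0 ⌊y ^ t⌋₊, logWeight P y d ≤ t + e := by
  have hint : ∫ r in 0..t, logDensity P y r ≤ ∫ _ in 0..t, (1 : ℝ) :=
    intervalIntegral.integral_mono_on ht (intervalIntegrable_logDensity hP y 0 t)
      intervalIntegrable_const fun r _ ↦ logDensity_le_one hP y r
  rw [intervalIntegral.integral_const, smul_eq_mul, sub_zero, mul_one] at hint
  linarith [(abs_le.1 he).2]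

lemma IsDelaySolution.mul_abs_smoothRatio_sub_le (hP : ∀ p ∈ P, p.Prime)
    (hPy : ∀ p : ℕ, p.Prime → (p : ℝ) ≤ y → p ∈ P) (hy : 1 < y)
    (hσ : IsDelaySolution U (logDensity P y) σ)
    (he : ∀ t ∈ Set.Icc 0 U,
      |∑ d ∈ Finset.Ioc 0 ⌊y ^ t⌋₊, logWeight P y d - ∫ r in 0..t, logDensity P y r| ≤ e)
    (hM0 : 0 ≤ M) (hM : ∀ t ∈ Set.Icc 1 U, |smoothRatio P y t - σ t| ≤ M)
    (hu : u ∈ Set.Icc 1 U) :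
    u * |smoothRatio P y u - σ u| ≤
      (u - 1 + e) * M + ((Real.log 4 + 5) / Real.log y + e * (1 + 8 * U * U)) := by
  obtain ⟨hu1, huU⟩ := hu
  have hu0 : 0 ≤ u := by linarith
  have heq := abs_mul_smoothRatio_sub_sum_le P hy hu0
  have hdiff := abs_sum_logWeight_mul_smoothRatio_sub_le (u := u) hPy hy hσ.sol_eq_one
    fun t ht ↦ hM t ⟨ht.1, ht.2.trans huU⟩
  have hsol := hσ.abs_sum_logWeight_mul_sub_le hP hy he ⟨hu0, huU⟩
  have hmass := mul_le_mul_of_nonneg_right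
    (sum_logWeight_le hP (sub_nonneg.2 hu1) (he (u - 1) ⟨by linarith, by linarith⟩)) hM0
  simp only [mul_sub, Finset.sum_sub_distrib] at hdiff
  have hconst : (Real.log 4 + 5) / Real.log y =
      1 / Real.log y + (Real.log 4 + 4) / Real.log y := by ring
  have hU := hσ.one_lt
  have he0 : 0 ≤ e := (abs_nonneg _).trans (he 0 ⟨le_rfl, by linarith⟩)
  have hsolU : e * (1 + 8 * U * u) ≤ e * (1 + 8 * U * U) := by gcongr
  rw [← abs_of_nonneg hu0, ← abs_mul, abs_of_nonneg hu0, mul_sub, hconst]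
  rw [abs_le] at heq hdiff hsol ⊢
  constructor <;> linarith

lemma IsDelaySolution.abs_smoothRatio_sub_le (hP : ∀ p ∈ P, p.Prime)
    (hPy : ∀ p : ℕ, p.Prime → (p : ℝ) ≤ y → p ∈ P) (hy : 1 < y)
    (hσ : IsDelaySolution U (logDensity P y) σ)
    (he : ∀ t ∈ Set.Icc 0 U,
      |∑ d ∈ Finset.Ioc 0 ⌊y ^ t⌋₊, logWeight P y d - ∫ r in 0..t, logDensity P y r| ≤ e)
    (heU : e ≤ 1 / (2 * U)) (hu : u ∈ Set.Icc 1 U) :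
    |smoothRatio P y u - σ u| ≤
      2 * U * ((Real.log 4 + 5) / Real.log y + e * (1 + 8 * U * U)) := by
  have hU := hσ.one_lt
  have hlog := Real.log_pos hy
  have he0 : 0 ≤ e := (abs_nonneg _).trans (he 0 ⟨le_rfl, by linarith⟩)
  have hinv : 1 / (2 * U) < 1 / 2 := one_div_lt_one_div_of_lt two_pos (by linarith)
  set E := (Real.log 4 + 5) / Real.log y + e * (1 + 8 * U * U)
  have hE0 : 0 ≤ E := by positivity
  have hbdd : BddAbove ((fun t ↦ |smoothRatio P y t - σ t|) '' Set.Icc 1 U) :=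
    ⟨1 + 1, Set.forall_mem_image.2 fun t ht ↦ (abs_sub _ _).trans
      (add_le_add (abs_smoothRatio_le_one P (by linarith) t)
        (hσ.abs_sol_le_one ⟨by linarith [ht.1], ht.2⟩))⟩
  have key := le_div_one_sub_of_mem_upperBounds (q := 1 - 1 / (2 * U)) (e := E) hbdd
    (by linarith) (sub_lt_self 1 (by positivity)) hE0
    (fun M hM0 hM ↦ Set.forall_mem_image.2 fun t ht ↦ ?_) (Set.mem_image_of_mem _ hu)
  · exact key.trans_eq (by rw [sub_sub_cancel]; field_simp)
  · have hle := hσ.mul_abs_smoothRatio_sub_le hP hPy hy he hM0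
      (fun r hr ↦ hM (Set.mem_image_of_mem _ hr)) ht
    have hratio : t - 1 + e ≤ t * (1 - 1 / (2 * U)) := by
      have : t * (1 / (2 * U)) ≤ U * (1 / (2 * U)) := by gcongr; exact ht.2
      have : U * (1 / (2 * U)) = 1 / 2 := by field_simp
      linarith
    have ht0 : 0 < t := by linarith [ht.1]
    refine le_of_mul_le_mul_left (hle.trans ?_) ht0
    rw [mul_add t, ← mul_assoc]
    exact add_le_add (mul_le_mul_of_nonneg_right hratio hM0) (le_mul_of_one_le_left hE0 ht.1)

lemma eventually_abs_smoothRatio_sub_le {ε : ℝ} (hU : 1 < U) (hε : 0 < ε) :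
    ∀ᶠ y in atTop, ∀ (P : Set ℕ) (σ : ℝ → ℝ), (∀ p ∈ P, p.Prime) →
      (∀ p : ℕ, p.Prime → (p : ℝ) ≤ y → p ∈ P) → IsDelaySolution U (logDensity P y) σ →
      ∀ u ∈ Set.Icc 1 U, |smoothRatio P y u - σ u| ≤ ε := by
  have hU0 : 0 < U := by linarith
  set e := min (1 / (2 * U)) (ε / (4 * U * (1 + 8 * U * U)))
  have he0 : 0 < e := by positivity
  have hlim : Tendsto (fun y ↦ (Real.log 4 + 5) / Real.log y) atTop (𝓝 0) :=
    Real.tendsto_log_atTop.const_div_atTop _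
  filter_upwards [eventually_abs_sum_logWeight_sub_integral_le hU0 he0,
    hlim.eventually_le_const (u := ε / (4 * U)) (by positivity), eventually_gt_atTop 1]
    with y hMertens hlog hy P σ hP hPy hσ u hu
  have heε : e * (1 + 8 * U * U) ≤ ε / (4 * U) := by
    calc _ ≤ ε / (4 * U * (1 + 8 * U * U)) * (1 + 8 * U * U) := by
          gcongr
          exact min_le_right _ _
      _ = ε / (4 * U) := by field_simp
  calc _ ≤ 2 * U * ((Real.log 4 + 5) / Real.log y + e * (1 + 8 * U * U)) :=
        hσ.abs_smoothRatio_sub_le hP hPy hy (hMertens P hP hPy) (min_le_left _ _) hu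
    _ ≤ 2 * U * (ε / (4 * U) + ε / (4 * U)) := by gcongr
    _ = ε := by field_simp; norm_num

end SmoothRatio

lemma isDelaySolution_logDensity {P : Set ℕ} {χ σ : ℝ → ℝ} {U y : ℝ} (hU : 1 < U)
    (hP : ∀ p ∈ P, p.Prime) (hPy : ∀ p : ℕ, p.Prime → (p : ℝ) ≤ y → p ∈ P) (hy : 2 ≤ y)
    (hχ : ∀ t ∈ Set.Icc 0 U, χ t = logDensity P y t) (hσ1 : ∀ u ∈ Set.Icc 0 1, σ u = 1)
    (hσ : ∀ u ∈ Set.Ioc 1 U, u * σ u = ∫ t in 0..u, σ (u - t) * χ t) :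
    IsDelaySolution U (logDensity P y) σ where
  one_lt := hU
  measurable := measurable_logDensity P y
  norm_le_one t := (Real.norm_of_nonneg (logDensity_nonneg P y t)).trans_le
    (logDensity_le_one hP y t)
  eq_one _ ht := if_pos ht
  exists_le := by
    have hy1 : y ≤ y ^ U := Real.self_le_rpow_of_one_le (by linarith) hU.le
    have h1 : 0 < primePi y := primePi_pos hy
    have h2 : 0 < primePi (y ^ U) := primePi_pos (hy.trans hy1)
    exact ⟨_, by positivity, fun t ht ↦ div_le_logDensity hPy hy hU.le ht⟩
  sol_eq_one := hσ1
  mul_sol u hu := by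
    rw [hσ u hu]
    refine intervalIntegral.integral_congr fun t ht ↦ ?_
    rw [Set.uIcc_of_le (by linarith [hu.1])] at ht
    rw [hχ t ⟨ht.1, ht.2.trans hu.2⟩]

theorem statement5 (U : ℝ) (hU : 1 < U)
    (P : ℝ → Set ℕ)
    (hP : ∀ y : ℝ, 2 ≤ y → ∀ p ∈ P y, Nat.Prime p ∧ (p : ℝ) ≤ y ^ U)
    (hPy : ∀ y : ℝ, 2 ≤ y → ∀ p : ℕ, Nat.Prime p → (p : ℝ) ≤ y → p ∈ P y)
    (χ : ℝ → ℝ → ℝ)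
    (hχ1 : ∀ y : ℝ, 2 ≤ y → ∀ t : ℝ, 0 ≤ t → t ≤ 1 → χ y t = 1)
    (hχ2 : ∀ y : ℝ, 2 ≤ y → ∀ t : ℝ, 1 < t → t ≤ U →
      χ y t = ({p : ℕ | p ∈ P y ∧ (p : ℝ) ≤ y ^ t}.ncard : ℝ) / (primePi (y ^ t) : ℝ))
    (σ : ℝ → ℝ → ℝ)
    (hσ1 : ∀ y : ℝ, 2 ≤ y → ∀ u : ℝ, 0 ≤ u → u ≤ 1 → σ y u = 1)
    (hσeq : ∀ y : ℝ, 2 ≤ y → ∀ u : ℝ, 1 < u → u ≤ U →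
      u * σ y u = ∫ t in (0 : ℝ)..u, σ y (u - t) * χ y t) :
    ∀ ε : ℝ, 0 < ε → ∃ y₀ : ℝ, ∀ y : ℝ, y₀ ≤ y → ∀ u ∈ Set.Icc (1 : ℝ) U,
      |(smoothIn (y ^ u) (P y) : ℝ) / y ^ u - σ y u| ≤ ε := by
  intro ε hε
  obtain ⟨y₁, hy₁⟩ := eventually_atTop.1 (eventually_abs_smoothRatio_sub_le hU hε)
  refine ⟨max 2 y₁, fun y hy u hu ↦ ?_⟩
  have hy2 : 2 ≤ y := (le_max_left _ _).trans hy
  have hprime (p : ℕ) (hp : p ∈ P y) : p.Prime := (hP y hy2 p hp).1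
  have hχ (t : ℝ) (ht : t ∈ Set.Icc 0 U) : χ y t = logDensity (P y) y t := by
    unfold logDensity primeRatio
    split_ifs with h
    · exact hχ1 y hy2 t ht.1 h
    · exact hχ2 y hy2 t (not_le.1 h) ht.2
  exact hy₁ y ((le_max_right _ _).trans hy) (P y) (σ y) hprime (hPy y hy2)
    (isDelaySolution_logDensity hU hprime (hPy y hy2) hy2 hχ
      (fun u hu ↦ hσ1 y hy2 u hu.1 hu.2) fun u hu ↦ hσeq y hy2 u hu.1 hu.2) u hu
end
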